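/- Fix σ > 0 and constants α, β_w ∈ (0,1) with β_w < α for which there exist α_w ∈ (0, α) and t ≥ 0 satisfying (2/√π)·∫₀ᵗ e^{−s²} ds = (1 − α_w)/(1 − β_w) and (1 − β_w)·√(2/π)·e^{−t²} = α_w·√2·t. For each n let m = ⌈α·n⌉, k = ⌈β_w·n⌉; let A be a random m×n matrix with i.i.d. N(0,1) entries, v ∈ ℝᵐ independent with i.i.d. N(0,σ²) entries; for a k-sparse nonnegative x̃ set y = A·x̃ + v and ζ_obj = inf { ‖y − A·x‖₂ : ‖x‖₁ ≤ ‖x̃‖₁ }. Then for every ε₁ ∈ (0,1) there exist ε₂, ε₃ > 0 and N such that for all n ≥ N: (i) there exists a k-sparse nonnegative x̃ such that, with probability at least 1 − e^{−ε₂·n}, some minimizer x̂ of ζ_obj satisfies (1 − ε₁)·σ·√(α_w/(α − α_w)) ≤ ‖x̂ − x̃‖₂ ≤ (1 + ε₁)·σ·√(α_w/(α − α_w)); and (ii) for every k-sparse nonnegative x̃, with probability at least 1 − e^{−ε₃·n}, every minimizer x̂ of ζ_obj satisfies ‖x̂ − x̃‖₂ ≤ (1 + ε₁)·σ·√(α_w/(α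 − α_w)). -/

import Mathlib

open MeasureTheory ProbabilityTheory

noncomputable def e2norm {d : ℕ} (x : Fin d → ℝ) : ℝ := Real.sqrt (∑ i, x i ^ 2)

noncomputable def l1norm {d : ℕ} (x : Fin d → ℝ) : ℝ := ∑ i, |x i|

def kSparseNonneg (n k : ℕ) (x : Fin n → ℝ) : Prop :=
  (∀ i : Fin n, (i : ℕ) < n - k → x i = 0) ∧ ∀ i, 0 ≤ x i

noncomputable def mDim (α : ℝ) (n : ℕ) : ℕ := ⌈α * (n : ℝ)⌉₊

noncomputable def kDim (β : ℝ) (n : ℕ) : ℕ := ⌈β * (n : ℝ)⌉₊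

noncomputable def muAv (m n : ℕ) (σ : ℝ) :
    Measure ((Fin m → Fin n → ℝ) × (Fin m → ℝ)) :=
  (Measure.pi fun _ : Fin m => Measure.pi fun _ : Fin n => gaussianReal 0 1).prod
    (Measure.pi fun _ : Fin m => gaussianReal 0 (σ ^ 2).toNNReal)

/-- ‖y − A·x‖₂ with y = A·x̃ + v, for the sample ω = (A, v). -/
noncomputable def lassoVal (m n : ℕ) (xt : Fin n → ℝ)
    (ω : (Fin m → Fin n → ℝ) × (Fin m → ℝ)) (x : Fin n → ℝ) : ℝ :=
  e2norm (fun i => ((∑ j, ω.1 i j * xt j) + ω.2 i) - ∑ j, ω.1 i j * x j)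

/-- ζ_obj(A, v): the optimal value of the LASSO (1.9). -/
noncomputable def zetaObj (m n : ℕ) (xt : Fin n → ℝ)
    (ω : (Fin m → Fin n → ℝ) × (Fin m → ℝ)) : ℝ :=
  sInf {r : ℝ | ∃ x : Fin n → ℝ, l1norm x ≤ l1norm xt ∧ r = lassoVal m n xt ω x}


noncomputable def gpi (κ : Type*) [Fintype κ] : Measure (κ → ℝ) :=
  Measure.pi fun _ => gaussianReal 0 1

instance (κ : Type*) [Fintype κ] : IsProbabilityMeasure (gpi κ) := by
  unfold gpi; infer_instance

lemma int_exp_sq {a : ℝ} (ha : 0 < a) : Integrable fun x : ℝ => Real.exp (-(a * x ^ 2)) := by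
  simpa [neg_mul] using integrable_exp_neg_mul_sq ha

lemma pdf01 : gaussianPDFReal 0 1 = fun x => (Real.sqrt (2 * Real.pi))⁻¹ * Real.exp (-(x ^ 2 / 2)) := by
  ext x; simp [gaussianPDFReal, neg_div]

lemma integrable_g01 {f : ℝ → ℝ} :
    Integrable f (gaussianReal 0 1) ↔ Integrable (fun x => f x * Real.exp (-(x ^ 2 / 2))) := by
  rw [gaussianReal_of_var_ne_zero 0 (one_ne_zero)]
  rw [integrable_withDensity_iff_integrable_smul' (measurable_gaussianPDF 0 1)
    (by simp [gaussianPDF])]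
  simp only [toReal_gaussianPDF, smul_eq_mul, pdf01]
  have : (Real.sqrt (2 * Real.pi))⁻¹ ≠ 0 := by positivity
  constructor
  · intro h
    have := h.const_mul (Real.sqrt (2 * Real.pi))
    refine this.congr (ae_of_all _ fun x => ?_)
    have : Real.sqrt (2 * Real.pi) ≠ 0 := by positivity
    field_simp
  · intro h
    refine (h.const_mul (Real.sqrt (2 * Real.pi))⁻¹).congr (ae_of_all _ fun x => ?_)
    ring

lemma integral_g01 (f : ℝ → ℝ) :
    ∫ x, f x ∂(gaussianReal 0 1) =
      (Real.sqrt (2 * Real.pi))⁻¹ * ∫ x, f x * Real.exp (-(x ^ 2 / 2)) := by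
  rw [integral_gaussianReal_eq_integral_smul one_ne_zero, ← integral_const_mul]
  congr 1; ext x; simp [pdf01]; ring

lemma integrable_id_g01 : Integrable (fun x : ℝ => x) (gaussianReal 0 1) := by
  have := memLp_id_gaussianReal (μ := 0) (v := 1) 1
  rw [ENNReal.coe_one] at this
  exact memLp_one_iff_integrable.1 this

lemma stein1 {f f' : ℝ → ℝ} {C : ℝ} (hf : ∀ x, HasDerivAt f (f' x) x)
    (hb : ∀ x, |f x| ≤ C) (hb' : ∀ x, |f' x| ≤ C) :
    ∫ x, x * f x ∂(gaussianReal 0 1) = ∫ x, f' x ∂(gaussianReal 0 1) := by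
  have hfm : Measurable f := (continuous_iff_continuousAt.2 fun x => (hf x).continuousAt).measurable
  have hf'm : Measurable f' := by
    have : f' = deriv f := by ext x; exact (hf x).deriv.symm
    rw [this]; exact measurable_deriv f
  have hv : ∀ x : ℝ, HasDerivAt (fun x : ℝ => Real.exp (-(x ^ 2 / 2)))
      (-x * Real.exp (-(x ^ 2 / 2))) x := by
    intro x
    have h1 : HasDerivAt (fun x : ℝ => -(x ^ 2 / 2)) (-x) x := by
      have := ((hasDerivAt_pow 2 x).div_const 2).neg
      refine this.congr_deriv ?_
      norm_num
    refine h1.exp.congr_deriv ?_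
    ring
  have i1 : Integrable (fun x => f x * Real.exp (-(x ^ 2 / 2))) := by
    rw [← integrable_g01]
    exact Integrable.of_bound hfm.aestronglyMeasurable C (ae_of_all _ hb)
  have i2 : Integrable (fun x => f' x * Real.exp (-(x ^ 2 / 2))) := by
    rw [← integrable_g01]
    exact Integrable.of_bound hf'm.aestronglyMeasurable C (ae_of_all _ hb')
  have i3 : Integrable (fun x => (x * f x) * Real.exp (-(x ^ 2 / 2))) := by
    rw [← integrable_g01]
    exact integrable_id_g01.mul_bdd hfm.aestronglyMeasurable (ae_of_all _ hb)
  have := integral_mul_deriv_eq_deriv_mul_of_integrable (u := f) (v := fun x : ℝ => Real.exp (-(x ^ 2 / 2)))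
    (u' := f') (v' := fun x => -x * Real.exp (-(x ^ 2 / 2)))
    (fun x _ => hf x) (fun x _ => hv x)
    (i3.neg.congr (ae_of_all _ fun x => by simp; ring)) i2 i1
  rw [integral_g01, integral_g01, ]
  congr 1
  have h2 : ∫ x, f x * (-x * Real.exp (-(x ^ 2 / 2))) = - ∫ x, x * f x * Real.exp (-(x ^ 2 / 2)) := by
    rw [← integral_neg]; congr 1; ext x; ring
  rw [h2] at this
  linarith

lemma gpi_update (κ : Type*) [Fintype κ] [DecidableEq κ] (k : κ) :
    MeasurePreserving (fun z : (κ → ℝ) × ℝ => Function.update z.1 k z.2)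
      ((gpi κ).prod (gaussianReal 0 1)) (gpi κ) := by
  have hm : Measurable (fun z : (κ → ℝ) × ℝ => Function.update z.1 k z.2) := by
    rw [measurable_pi_iff]; intro j
    by_cases h : j = k
    · subst h; simpa using measurable_snd
    · simp only [Function.update_of_ne h]; fun_prop
  refine ⟨hm, ?_⟩
  symm
  unfold gpi
  refine Measure.pi_eq fun s hs => ?_
  rw [Measure.map_apply hm (MeasurableSet.univ_pi hs)]
  have : (fun z : (κ → ℝ) × ℝ => Function.update z.1 k z.2) ⁻¹' (Set.univ.pi s)
      = (Set.univ.pi (Function.update s k Set.univ)) ×ˢ (s k) := by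
    ext z
    simp only [Set.mem_preimage, Set.mem_pi, Set.mem_univ, true_imp_iff, Set.mem_prod]
    constructor
    · intro h
      refine ⟨fun j => ?_, by simpa using h k⟩
      by_cases hj : j = k
      · subst hj; simp
      · simpa [Function.update_of_ne hj] using h j
    · rintro ⟨h1, h2⟩ j
      by_cases hj : j = k
      · subst hj; simpa using h2
      · simpa [Function.update_of_ne hj] using h1 j
  rw [this, Measure.prod_prod, Measure.pi_pi, ← Finset.mul_prod_erase _ _ (Finset.mem_univ k),
    ← Finset.mul_prod_erase Finset.univ (fun i => gaussianReal 0 1 (s i)) (Finset.mem_univ k)]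
  simp only [Function.update_self, measure_univ, one_mul]
  rw [mul_comm]
  congr 1
  refine Finset.prod_congr rfl fun j hj => ?_
  rw [Function.update_of_ne (Finset.ne_of_mem_erase hj)]

lemma integrable_coord (κ : Type*) [Fintype κ] (k : κ) : Integrable (fun x : κ → ℝ => x k) (gpi κ) :=
  (measurePreserving_eval (fun _ : κ => gaussianReal 0 1) k).integrable_comp_of_integrable
    integrable_id_g01

lemma stein_pi {κ : Type*} [Fintype κ] [DecidableEq κ] (k : κ) {f f' : (κ → ℝ) → ℝ} {C : ℝ}
    (hfm : Measurable f) (hfm' : Measurable f')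
    (hf : ∀ x : κ → ℝ, HasDerivAt (fun y => f (Function.update x k y)) (f' x) (x k))
    (hb : ∀ x, |f x| ≤ C) (hb' : ∀ x, |f' x| ≤ C) :
    ∫ x, x k * f x ∂(gpi κ) = ∫ x, f' x ∂(gpi κ) := by
  have hp := gpi_update κ k
  have i1 : Integrable (fun x : κ → ℝ => x k * f x) (gpi κ) :=
    (integrable_coord κ k).mul_bdd hfm.aestronglyMeasurable (ae_of_all _ hb)
  have i2 : Integrable f' (gpi κ) := Integrable.of_bound hfm'.aestronglyMeasurable C (ae_of_all _ hb')
  rw [← hp.map_eq] at i1 i2 ⊢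
  rw [integral_map hp.measurable.aemeasurable i1.1, integral_map hp.measurable.aemeasurable i2.1]
  have e1 := integral_prod _ ((integrable_map_measure i1.1 hp.measurable.aemeasurable).1 i1)
  have e2 := integral_prod _ ((integrable_map_measure i2.1 hp.measurable.aemeasurable).1 i2)
  simp only [Function.comp_def] at e1 e2
  rw [e1, e2]
  congr 1; ext x
  simp only [Function.update_self]
  refine stein1 (f := fun y => f (Function.update x k y)) (fun y => ?_) (fun y => hb _) (fun y => hb' _)
  simpa using hf (Function.update x k y)

noncomputable def sgv {ι : Type*} (b : ℝ) (lam : ι → ℝ) (z : ι → ℝ) : ι → ℝ :=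
  fun I => Real.sigmoid (b * (z I - lam I))

noncomputable def DD {ι : Type*} (b : ℝ) (I : ι) (Q : MvPolynomial ι ℝ) : MvPolynomial ι ℝ :=
  MvPolynomial.C b * MvPolynomial.X I * (1 - MvPolynomial.X I) * MvPolynomial.pderiv I Q

noncomputable def lin {ι κ : Type*} [Fintype κ] (c : ι → κ → ℝ) (x : κ → ℝ) : ι → ℝ :=
  fun I => ∑ k, c I k * x k

section
variable {ι : Type*} [Fintype ι] (b : ℝ) (lam : ι → ℝ)

lemma sgv_mem (z : ι → ℝ) (I : ι) : 0 ≤ sgv b lam z I ∧ sgv b lam z I ≤ 1 :=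
  ⟨Real.sigmoid_nonneg _, Real.sigmoid_le_one _⟩

lemma poly_bdd (Q : MvPolynomial ι ℝ) : ∃ C : ℝ, ∀ z, |MvPolynomial.eval (sgv b lam z) Q| ≤ C := by
  induction Q using MvPolynomial.induction_on with
  | C a => exact ⟨|a|, fun z => by simp⟩
  | add p q hp hq =>
    obtain ⟨A, hA⟩ := hp
    obtain ⟨B, hB⟩ := hq
    exact ⟨A + B, fun z => by simpa using (abs_add_le _ _).trans (add_le_add (hA z) (hB z))⟩
  | mul_X p i hp =>
    obtain ⟨A, hA⟩ := hp
    refine ⟨A, fun z => ?_⟩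
    simp only [map_mul, MvPolynomial.eval_X, abs_mul]
    have h := sgv_mem b lam z i
    rw [abs_of_nonneg h.1]
    have := abs_nonneg (MvPolynomial.eval (sgv b lam z) p)
    nlinarith [hA z]

lemma poly_cont (Q : MvPolynomial ι ℝ) : Continuous fun z => MvPolynomial.eval (sgv b lam z) Q := by
  refine (MvPolynomial.continuous_eval Q).comp ?_
  unfold sgv
  refine continuous_pi fun I => ?_
  exact continuous_sigmoid.comp (by fun_prop)

lemma poly_deriv (Q : MvPolynomial ι ℝ) (z : ℝ → ι → ℝ) (z' : ι → ℝ) (τ : ℝ)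
    (hz : ∀ I, HasDerivAt (fun s => z s I) (z' I) τ) :
    HasDerivAt (fun s => MvPolynomial.eval (sgv b lam (z s)) Q)
      (∑ I, z' I * MvPolynomial.eval (sgv b lam (z τ)) (DD b I Q)) τ := by
  classical
  induction Q using MvPolynomial.induction_on with
  | C a => simpa [DD] using hasDerivAt_const τ a
  | add p q hp hq =>
    have := hp.add hq
    simp only [map_add, DD, mul_add] at this ⊢
    rw [Finset.sum_add_distrib]
    exact this
  | mul_X p i hp =>
    have hX : HasDerivAt (fun s => sgv b lam (z s) i)
        (z' i * (b * sgv b lam (z τ) i * (1 - sgv b lam (z τ) i))) τ := by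
      have h1 : HasDerivAt (fun s => b * (z s i - lam i)) (b * z' i) τ :=
        ((hz i).sub_const _).const_mul b
      have := (Real.hasDerivAt_sigmoid (b * (z τ i - lam i))).comp τ h1
      refine this.congr_deriv ?_
      simp only [sgv]; ring
    have := hp.mul hX
    simp only [map_mul, MvPolynomial.eval_X] at this ⊢
    refine this.congr_deriv ?_
    simp only [DD, Derivation.leibniz, map_add, map_mul, smul_eq_mul, MvPolynomial.eval_X, map_sub,
      map_one, MvPolynomial.eval_C, MvPolynomial.pderiv_X, mul_add, Finset.sum_add_distrib]
    rw [add_comm]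
    congr 1
    · rw [Finset.sum_eq_single i]
      · simp; ring
      · intro j _ hj
        simp [Pi.single_apply, hj.symm]
      · simp
    · rw [Finset.sum_mul]
      refine Finset.sum_congr rfl fun j _ => ?_
      ring

variable {κ : Type*} [Fintype κ]

lemma lin_cont (c : ι → κ → ℝ) : Continuous (lin c) := by
  unfold lin; fun_prop

lemma poly_ibp [DecidableEq κ] (Q : MvPolynomial ι ℝ) (c : ι → κ → ℝ) (k : κ) :
    ∫ x, x k * MvPolynomial.eval (sgv b lam (lin c x)) Q ∂(gpi κ) =
      ∑ I, c I k * ∫ x, MvPolynomial.eval (sgv b lam (lin c x)) (DD b I Q) ∂(gpi κ) := by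
  have hbd : ∀ Q, ∃ C : ℝ, ∀ x, |MvPolynomial.eval (sgv b lam (lin c x)) Q| ≤ C := fun Q => by
    obtain ⟨C, hC⟩ := poly_bdd b lam Q; exact ⟨C, fun x => hC _⟩
  have hct : ∀ Q, Continuous fun x => MvPolynomial.eval (sgv b lam (lin c x)) Q := fun Q =>
    (poly_cont b lam Q).comp (lin_cont c)
  choose B hB using hbd
  have hB0 : ∀ Q, 0 ≤ B Q := fun Q => (abs_nonneg _).trans (hB Q 0)
  set C : ℝ := B Q + ∑ I, |c I k| * B (DD b I Q)
  have hs0 : 0 ≤ ∑ I, |c I k| * B (DD b I Q) :=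
    Finset.sum_nonneg fun I _ => mul_nonneg (abs_nonneg _) (hB0 _)
  rw [stein_pi (f' := fun x => ∑ I, c I k * MvPolynomial.eval (sgv b lam (lin c x)) (DD b I Q))
    (C := C) k (hct Q).measurable
    (continuous_finsetSum _ fun I _ => (hct _).const_mul _).measurable ?_ ?_ ?_]
  · rw [integral_finsetSum]
    · simp only [integral_const_mul]
    · intro I _
      exact (Integrable.of_bound (hct _).measurable.aestronglyMeasurable _
        (ae_of_all _ (hB _))).const_mul _
  · intro x
    have := poly_deriv b lam Q (fun y => lin c (Function.update x k y)) (fun I => c I k) (x k) ?_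
    · simpa using this
    · intro I
      simp only [lin]
      have h : ∀ y, ∑ j, c I j * Function.update x k y j =
          c I k * y + ∑ j ∈ Finset.univ.erase k, c I j * x j := by
        intro y
        rw [← Finset.add_sum_erase _ _ (Finset.mem_univ k)]
        simp only [Function.update_self]
        congr 1
        refine Finset.sum_congr rfl fun j hj => ?_
        rw [Function.update_of_ne (Finset.ne_of_mem_erase hj)]
      simp only [h]
      simpa using ((hasDerivAt_id (x k)).const_mul (c I k)).add_const
        (∑ j ∈ Finset.univ.erase k, c I j * x j)
  · intro x; exact (hB Q x).trans (le_add_of_nonneg_right hs0)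
  · intro x
    refine (Finset.abs_sum_le_sum_abs _ _).trans ?_
    refine le_trans ?_ (le_add_of_nonneg_left (hB0 Q))
    refine Finset.sum_le_sum fun I _ => ?_
    rw [abs_mul]
    exact mul_le_mul_of_nonneg_left (hB _ x) (abs_nonneg _)

lemma poly_interp (Q : MvPolynomial ι ℝ) (a a' : ι → κ → ℝ)
    (horth : ∀ I J, ∑ k, a I k * a' J k = 0)
    (hsign : ∀ I J, ∀ z, 0 ≤ (∑ k, a I k * a J k - ∑ k, a' I k * a' J k) *
      MvPolynomial.eval (sgv b lam z) (DD b J (DD b I Q))) :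
    ∫ x, MvPolynomial.eval (sgv b lam (lin a' x)) Q ∂(gpi κ) ≤
    ∫ x, MvPolynomial.eval (sgv b lam (lin a x)) Q ∂(gpi κ) := by
  classical
  set c : ℝ → ι → κ → ℝ := fun θ I k => Real.cos θ * a I k + Real.sin θ * a' I k with hc
  set c' : ℝ → ι → κ → ℝ := fun θ I k => -Real.sin θ * a I k + Real.cos θ * a' I k with hc'
  set φ : ℝ → ℝ := fun θ => ∫ x, MvPolynomial.eval (sgv b lam (lin (c θ) x)) Q ∂(gpi κ) with hφ
  have hbd := poly_bdd b lam
  choose B hB using hbd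
  have hB0 : ∀ Q, 0 ≤ B Q := fun Q => (abs_nonneg _).trans (hB Q 0)
  have hct : ∀ θ Q, Continuous fun x => MvPolynomial.eval (sgv b lam (lin (c θ) x)) Q := fun θ Q =>
    (poly_cont b lam Q).comp (lin_cont _)
  have hint : ∀ θ Q, Integrable (fun x => MvPolynomial.eval (sgv b lam (lin (c θ) x)) Q) (gpi κ) :=
    fun θ Q => Integrable.of_bound (hct θ Q).measurable.aestronglyMeasurable _ (ae_of_all _ fun x => hB Q _)
  have hder : ∀ θ, HasDerivAt φ (∫ x, ∑ I, lin (c' θ) x I *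
      MvPolynomial.eval (sgv b lam (lin (c θ) x)) (DD b I Q) ∂(gpi κ)) θ := by
    intro θ
    refine (hasDerivAt_integral_of_dominated_loc_of_deriv_le (s := Set.univ) (x₀ := θ)
      (F := fun θ x => MvPolynomial.eval (sgv b lam (lin (c θ) x)) Q)
      (F' := fun θ x => ∑ I, lin (c' θ) x I *
      MvPolynomial.eval (sgv b lam (lin (c θ) x)) (DD b I Q))
      (bound := fun x => ∑ I, (∑ k, (|a I k| + |a' I k|) * |x k|) * B (DD b I Q))
      Filter.univ_mem ?_ (hint θ Q) ?_ ?_ ?_ ?_).2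
    · exact Filter.Eventually.of_forall fun θ => (hint θ Q).1
    · refine Continuous.aestronglyMeasurable ?_
      refine continuous_finsetSum _ fun I _ => ?_
      exact ((continuous_apply I).comp (lin_cont _)).mul (hct _ _)
    · refine ae_of_all _ fun x θ _ => ?_
      refine (norm_sum_le _ _).trans (Finset.sum_le_sum fun I _ => ?_)
      rw [norm_mul]
      refine mul_le_mul ?_ (hB _ _) (norm_nonneg _) (by positivity)
      refine (norm_sum_le _ _).trans (Finset.sum_le_sum fun k _ => ?_)
      rw [norm_mul]
      refine mul_le_mul_of_nonneg_right ?_ (norm_nonneg _)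
      refine (norm_add_le _ _).trans (add_le_add ?_ ?_)
      · rw [norm_mul, norm_neg, Real.norm_eq_abs, Real.norm_eq_abs]
        exact mul_le_of_le_one_left (abs_nonneg _) (Real.abs_sin_le_one _)
      · rw [norm_mul, Real.norm_eq_abs, Real.norm_eq_abs]
        exact mul_le_of_le_one_left (abs_nonneg _) (Real.abs_cos_le_one _)
    · refine integrable_finsetSum _ fun I _ => Integrable.mul_const ?_ _
      refine integrable_finsetSum _ fun k _ => Integrable.const_mul ?_ _
      exact (integrable_coord κ k).abs
    · refine ae_of_all _ fun x θ _ => ?_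
      refine poly_deriv b lam Q (fun θ => lin (c θ) x) (lin (c' θ) x) θ ?_
      intro I
      simp only [lin]
      refine HasDerivAt.fun_sum fun k _ => ?_
      refine HasDerivAt.mul_const ?_ _
      exact ((Real.hasDerivAt_cos θ).mul_const _).add ((Real.hasDerivAt_sin θ).mul_const _)
  have hval : ∀ θ, (∫ x, ∑ I, lin (c' θ) x I *
      MvPolynomial.eval (sgv b lam (lin (c θ) x)) (DD b I Q) ∂(gpi κ)) =
      -(Real.sin θ * Real.cos θ * ∑ I, ∑ J, ∫ x, (∑ k, a I k * a J k - ∑ k, a' I k * a' J k) *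
      MvPolynomial.eval (sgv b lam (lin (c θ) x)) (DD b J (DD b I Q)) ∂(gpi κ)) := by
    intro θ
    rw [integral_finsetSum]
    swap
    · intro I _
      refine Integrable.mul_bdd (c := B (DD b I Q)) ?_ (hct _ _).aestronglyMeasurable
        (ae_of_all _ fun x => hB _ _)
      exact integrable_finsetSum _ fun k _ => (integrable_coord κ k).const_mul _
    rw [Finset.mul_sum, ← Finset.sum_neg_distrib]
    refine Finset.sum_congr rfl fun I _ => ?_
    simp only [lin.eq_def (c' θ), Finset.sum_mul, mul_assoc]
    rw [integral_finsetSum]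
    swap
    · intro k _
      refine Integrable.const_mul ?_ _
      exact Integrable.mul_bdd (c := B (DD b I Q)) (integrable_coord κ k) (hct _ _).aestronglyMeasurable
        (ae_of_all _ fun x => hB _ _)
    simp only [integral_const_mul, poly_ibp]
    simp only [Finset.mul_sum]
    rw [Finset.sum_comm, ← Finset.sum_neg_distrib]
    refine Finset.sum_congr rfl fun J _ => ?_
    simp only [← mul_assoc]
    rw [← Finset.sum_mul, ← neg_mul]
    congr 1
    have e : ∀ k, c' θ I k * c θ J k = -(Real.sin θ * Real.cos θ) * (a I k * a J k)
       + (Real.sin θ * Real.cos θ) * (a' I k * a' J k) - Real.sin θ ^ 2 * (a I k * a' J k)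
       + Real.cos θ ^ 2 * (a J k * a' I k) := by
      intro k; simp only [hc, hc']; ring
    simp only [e, Finset.sum_add_distrib, Finset.sum_sub_distrib, ← Finset.mul_sum, horth]
    ring
  have hanti : AntitoneOn φ (Set.Icc 0 (Real.pi / 2)) := by
    refine antitoneOn_of_deriv_nonpos (convex_Icc _ _)
      (fun θ _ => (hder θ).continuousAt.continuousWithinAt)
      (fun θ _ => (hder θ).differentiableAt.differentiableWithinAt) ?_
    intro θ hθ
    rw [interior_Icc] at hθ
    rw [(hder θ).deriv, hval, neg_nonpos]
    refine mul_nonneg (mul_nonneg ?_ ?_) ?_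
    · exact Real.sin_nonneg_of_nonneg_of_le_pi hθ.1.le (by linarith [hθ.2, Real.pi_pos])
    · exact Real.cos_nonneg_of_neg_pi_div_two_le_of_le (by linarith [hθ.1, Real.pi_pos]) hθ.2.le
    · exact Finset.sum_nonneg fun I _ => Finset.sum_nonneg fun J _ =>
        integral_nonneg fun x => hsign I J _
  have hp := Real.pi_pos
  have := hanti (⟨le_rfl, by positivity⟩ : (0:ℝ) ∈ Set.Icc 0 (Real.pi / 2))
    (⟨by positivity, le_rfl⟩ : Real.pi / 2 ∈ Set.Icc 0 (Real.pi / 2)) (by positivity)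
  simpa [hφ, hc] using this

end

section
variable {I J : Type*} [Fintype I] [Fintype J]

noncomputable def HH (J : Type*) [Fintype J] {I : Type*} (i : I) : MvPolynomial (I × J) ℝ :=
  1 - ∏ j : J, (1 - MvPolynomial.X (i, j))

lemma der_prod_zero {ι τ : Type*} (k : ι) (S : Finset τ) (f : τ → MvPolynomial ι ℝ)
    (h : ∀ i ∈ S, MvPolynomial.pderiv k (f i) = 0) : MvPolynomial.pderiv k (∏ i ∈ S, f i) = 0 := by
  classical
  induction S using Finset.induction_on with
  | empty => simp
  | insert a S ha ih =>
    rw [Finset.prod_insert ha, Derivation.leibniz, h a (by simp), ih fun i hi => h i (by simp [hi])]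
    simp

lemma der_prod_one {ι τ : Type*} [DecidableEq τ] (k : ι) (S : Finset τ) (f : τ → MvPolynomial ι ℝ) (i : τ)
    (hi : i ∈ S)
    (h : ∀ j ∈ S, j ≠ i → MvPolynomial.pderiv k (f j) = 0) :
    MvPolynomial.pderiv k (∏ i ∈ S, f i) = (∏ j ∈ S.erase i, f j) * MvPolynomial.pderiv k (f i) := by
  rw [← Finset.mul_prod_erase _ _ hi, Derivation.leibniz,
    der_prod_zero k (S.erase i) f fun j hj => h j (Finset.mem_of_mem_erase hj) (Finset.ne_of_mem_erase hj)]
  simp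

lemma der_H_ne {I J : Type*} [Fintype J] (i i' : I) (j : J) (h : i' ≠ i) :
    MvPolynomial.pderiv (i, j) (HH J i') = 0 := by
  classical
  unfold HH
  rw [map_sub, der_prod_zero]
  · simp
  · intro j' _
    have : (i', j') ≠ (i, j) := fun hh => h (congrArg Prod.fst hh)
    simp [MvPolynomial.pderiv_X_of_ne this]

lemma der_H_eq {I J : Type*} [Fintype J] [DecidableEq J] (i : I) (j : J) :
    MvPolynomial.pderiv (i, j) (HH J i) =
      ∏ j' ∈ Finset.univ.erase j, (1 - MvPolynomial.X (i, j')) := by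
  classical
  unfold HH
  rw [map_sub, der_prod_one (i, j) _ _ j (Finset.mem_univ _)]
  · simp
  · intro j' _ hj
    have : (i, j') ≠ (i, j) := fun hh => hj (congrArg Prod.snd hh)
    simp [MvPolynomial.pderiv_X_of_ne this]

lemma eval_H {I J : Type*} [Fintype J] (i : I) (s : I × J → ℝ) :
    MvPolynomial.eval s (HH J i) = 1 - ∏ j, (1 - s (i, j)) := by
  simp [HH, map_prod]

lemma eval_H_nonneg {I J : Type*} [Fintype J] (i : I) (s : I × J → ℝ) (hs : ∀ k, 0 ≤ s k ∧ s k ≤ 1) :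
    0 ≤ MvPolynomial.eval s (HH J i) := by
  rw [eval_H, sub_nonneg]
  exact Finset.prod_le_one (fun j _ => by linarith [(hs (i, j)).2]) (fun j _ => by linarith [(hs (i, j)).1])

lemma DD_nonneg (b : ℝ) (hb : 0 ≤ b) (i i' : I) (j j' : J) (hii : i' ≠ i) (s : I × J → ℝ)
    (hs : ∀ k, 0 ≤ s k ∧ s k ≤ 1) :
    0 ≤ MvPolynomial.eval s (DD b (i', j') (DD b (i, j) (∏ i0, HH J i0))) := by
  classical
  have hX : MvPolynomial.pderiv (i', j') (MvPolynomial.X (i, j) : MvPolynomial (I × J) ℝ) = 0 := by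
    apply MvPolynomial.pderiv_X_of_ne
    exact fun hh => hii (congrArg Prod.fst hh).symm
  have h1 : MvPolynomial.pderiv (i, j) (∏ i0, HH J i0) =
      (∏ i0 ∈ Finset.univ.erase i, HH J i0) *
        ∏ j' ∈ Finset.univ.erase j, (1 - MvPolynomial.X (i, j')) := by
    rw [der_prod_one (i, j) _ _ i (Finset.mem_univ _) fun k _ hk => der_H_ne _ _ _ hk, der_H_eq]
  have h2 : MvPolynomial.pderiv (i', j') (∏ i0 ∈ Finset.univ.erase i, HH J i0) =
      (∏ i0 ∈ (Finset.univ.erase i).erase i', HH J i0) *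
        ∏ j ∈ Finset.univ.erase j', (1 - MvPolynomial.X (i', j)) := by
    rw [der_prod_one (i', j') _ _ i' (by simp [hii]) fun k _ hk => der_H_ne _ _ _ hk, der_H_eq]
  have h3 : MvPolynomial.pderiv (i', j') (∏ j' ∈ Finset.univ.erase j,
      (1 - MvPolynomial.X (i, j')) : MvPolynomial (I × J) ℝ) = 0 := by
    apply der_prod_zero
    intro k _
    have : (i, k) ≠ (i', j') := fun hh => hii (congrArg Prod.fst hh).symm
    simp [MvPolynomial.pderiv_X_of_ne this]
  simp only [DD, h1, Derivation.leibniz, h2, h3, hX, map_sub, MvPolynomial.pderiv_C, smul_eq_mul,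
    mul_zero, add_zero, zero_add, map_one, map_zero, sub_zero, map_mul, map_prod, MvPolynomial.eval_X, MvPolynomial.eval_C, map_add,
    Derivation.map_one_eq_zero]
  have hp : ∀ k, 0 ≤ 1 - s k := fun k => by linarith [(hs k).2]
  have hp' : ∀ k, 0 ≤ s k := fun k => (hs k).1
  have hH : ∀ i, 0 ≤ MvPolynomial.eval s (HH J i) := fun i => eval_H_nonneg i s hs
  have hP : ∀ (S : Finset I), 0 ≤ ∏ x ∈ S, MvPolynomial.eval s (HH J x) :=
    fun S => Finset.prod_nonneg fun i _ => hH i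
  have hP2 : ∀ i (S : Finset J), 0 ≤ ∏ x ∈ S, (1 - s (i, x)) :=
    fun i S => Finset.prod_nonneg fun j _ => hp _
  have q1 := hp' (i,j); have q2 := hp' (i',j'); have q3 := hp (i,j); have q4 := hp (i',j')
  have q5 := hP ((Finset.univ.erase i).erase i')
  have q6 := hP2 i (Finset.univ.erase j)
  have q7 := hP2 i' (Finset.univ.erase j')
  positivity

lemma gpi_inl (κ κ' : Type*) [Fintype κ] [Fintype κ'] :
    MeasurePreserving (fun (x : κ ⊕ κ' → ℝ) (k : κ) => x (Sum.inl k)) (gpi (κ ⊕ κ')) (gpi κ) := by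
  refine ⟨by fun_prop, ?_⟩
  unfold gpi
  symm
  refine Measure.pi_eq fun s hs => ?_
  rw [Measure.map_apply (by fun_prop) (MeasurableSet.univ_pi hs)]
  have : (fun (x : κ ⊕ κ' → ℝ) (k : κ) => x (Sum.inl k)) ⁻¹' Set.univ.pi s =
      Set.univ.pi (Sum.elim s fun _ => Set.univ) := by
    ext x; simp
  rw [this, Measure.pi_pi, Fintype.prod_sum_type]
  simp

lemma gpi_inr (κ κ' : Type*) [Fintype κ] [Fintype κ'] :
    MeasurePreserving (fun (x : κ ⊕ κ' → ℝ) (k : κ') => x (Sum.inr k)) (gpi (κ ⊕ κ')) (gpi κ') := by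
  refine ⟨by fun_prop, ?_⟩
  unfold gpi
  symm
  refine Measure.pi_eq fun s hs => ?_
  rw [Measure.map_apply (by fun_prop) (MeasurableSet.univ_pi hs)]
  have : (fun (x : κ ⊕ κ' → ℝ) (k : κ') => x (Sum.inr k)) ⁻¹' Set.univ.pi s =
      Set.univ.pi (Sum.elim (fun _ => Set.univ) s) := by
    ext x; simp
  rw [this, Measure.pi_pi, Fintype.prod_sum_type]
  simp

noncomputable def slim (x : ℝ) : ℝ := if 0 < x then 1 else if x = 0 then 1/2 else 0

lemma sig_tendsto (x : ℝ) : Filter.Tendsto (fun n : ℕ => Real.sigmoid ((n:ℝ) * x)) Filter.atTop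
    (nhds (slim x)) := by
  unfold slim
  split_ifs with h h'
  · exact Real.tendsto_sigmoid_atTop.comp (tendsto_natCast_atTop_atTop.atTop_mul_const h)
  · subst h'
    simp [Real.sigmoid_zero]
  · have : x < 0 := lt_of_le_of_ne (not_lt.1 h) h'
    exact Real.tendsto_sigmoid_atBot.comp (tendsto_natCast_atTop_atTop.atTop_mul_const_of_neg this)

noncomputable def Flim (lam z : I × J → ℝ) : ℝ := ∏ i : I, (1 - ∏ j : J, (1 - slim (z (i,j) - lam (i,j))))

lemma slim_mem (x : ℝ) : 0 ≤ slim x ∧ slim x ≤ 1 := by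
  unfold slim; split_ifs <;> norm_num

lemma Flim_tendsto (lam z : I × J → ℝ) : Filter.Tendsto
    (fun n : ℕ => MvPolynomial.eval (sgv (n:ℝ) lam z) (∏ i0, HH J i0)) Filter.atTop (nhds (Flim lam z)) := by
  simp only [map_prod, eval_H]
  unfold Flim sgv
  refine tendsto_finsetProd _ fun i _ => ?_
  refine Filter.Tendsto.const_sub _ ?_
  refine tendsto_finsetProd _ fun j _ => ?_
  exact (sig_tendsto _).const_sub _

lemma eval_QF_mem (s : I × J → ℝ) (hs : ∀ k, 0 ≤ s k ∧ s k ≤ 1) :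
    0 ≤ MvPolynomial.eval s (∏ i0, HH J i0) ∧ MvPolynomial.eval s (∏ i0, HH J i0) ≤ 1 := by
  rw [map_prod]
  refine ⟨Finset.prod_nonneg fun i _ => eval_H_nonneg i s hs,
    Finset.prod_le_one (fun i _ => eval_H_nonneg i s hs) fun i _ => ?_⟩
  rw [eval_H]
  have : 0 ≤ ∏ j, (1 - s (i,j)) := Finset.prod_nonneg fun j _ => by linarith [(hs (i,j)).2]
  linarith

lemma gordon_fin {κ κ' : Type*} [Fintype κ] [Fintype κ'] (lam : I × J → ℝ)
    (a : I × J → κ → ℝ) (a' : I × J → κ' → ℝ)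
    (hin : ∀ i j j', ∑ k, a (i,j) k * a (i,j') k = ∑ k, a' (i,j) k * a' (i,j') k)
    (hout : ∀ i i' j j', ∑ k, a' (i,j) k * a' (i',j') k ≤ ∑ k, a (i,j) k * a (i',j') k) :
    gpi κ {x | ∃ i, ∀ j, lin a x (i,j) < lam (i,j)} ≤
    gpi κ' {x | ∃ i, ∀ j, lin a' x (i,j) ≤ lam (i,j)} := by
  classical
  set A : I × J → κ ⊕ κ' → ℝ := fun k => Sum.elim (a k) 0 with hA
  set A' : I × J → κ ⊕ κ' → ℝ := fun k => Sum.elim 0 (a' k) with hA'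
  have lA : ∀ x : κ ⊕ κ' → ℝ, lin A x = lin a (fun k => x (Sum.inl k)) := by
    intro x; ext k; simp [lin, hA]
  have lA' : ∀ x : κ ⊕ κ' → ℝ, lin A' x = lin a' (fun k => x (Sum.inr k)) := by
    intro x; ext k; simp [lin, hA']
  set E : Set (κ ⊕ κ' → ℝ) := {x | ∃ i, ∀ j, lin A x (i,j) < lam (i,j)} with hE
  set E' : Set (κ ⊕ κ' → ℝ) := {x | ∃ i, ∀ j, lin A' x (i,j) ≤ lam (i,j)} with hE'
  have m1 : MeasurableSet {x | ∃ i, ∀ j, lin a x (i,j) < lam (i,j)} := by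
    simp only [Set.setOf_exists, Set.setOf_forall]
    refine MeasurableSet.iUnion fun i => MeasurableSet.iInter fun j => ?_
    exact measurableSet_lt ((measurable_pi_apply _).comp (lin_cont a).measurable) measurable_const
  have m2 : MeasurableSet {x | ∃ i, ∀ j, lin a' x (i,j) ≤ lam (i,j)} := by
    simp only [Set.setOf_exists, Set.setOf_forall]
    refine MeasurableSet.iUnion fun i => MeasurableSet.iInter fun j => ?_
    exact measurableSet_le ((measurable_pi_apply _).comp (lin_cont a').measurable) measurable_const
  have e1 : gpi κ {x | ∃ i, ∀ j, lin a x (i,j) < lam (i,j)} = gpi (κ ⊕ κ') E := by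
    rw [← (gpi_inl κ κ').measure_preimage m1.nullMeasurableSet]
    simp [hE, lA]
  have e2 : gpi κ' {x | ∃ i, ∀ j, lin a' x (i,j) ≤ lam (i,j)} = gpi (κ ⊕ κ') E' := by
    rw [← (gpi_inr κ κ').measure_preimage m2.nullMeasurableSet]
    simp [hE', lA']
  have mE : MeasurableSet E := by
    have : E = (fun (x : κ ⊕ κ' → ℝ) (k : κ) => x (Sum.inl k)) ⁻¹' {x | ∃ i, ∀ j, lin a x (i,j) < lam (i,j)} := by
      simp [hE, lA]
    rw [this]; exact m1.preimage (by fun_prop)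
  have mE' : MeasurableSet E' := by
    have : E' = (fun (x : κ ⊕ κ' → ℝ) (k : κ') => x (Sum.inr k)) ⁻¹' {x | ∃ i, ∀ j, lin a' x (i,j) ≤ lam (i,j)} := by
      simp [hE', lA']
    rw [this]; exact m2.preimage (by fun_prop)
  rw [e1, e2]
  have key : ∀ n : ℕ, ∫ x, MvPolynomial.eval (sgv (n:ℝ) lam (lin A' x)) (∏ i0, HH J i0) ∂(gpi (κ ⊕ κ')) ≤
      ∫ x, MvPolynomial.eval (sgv (n:ℝ) lam (lin A x)) (∏ i0, HH J i0) ∂(gpi (κ ⊕ κ')) := by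
    intro n
    refine poly_interp (n:ℝ) lam _ A A' ?_ ?_
    · intro I J; simp [hA, hA']
    · rintro ⟨i, j⟩ ⟨i', j'⟩ z
      have c1 : ∑ k, A (i,j) k * A (i',j') k = ∑ k, a (i,j) k * a (i',j') k := by simp [hA]
      have c2 : ∑ k, A' (i,j) k * A' (i',j') k = ∑ k, a' (i,j) k * a' (i',j') k := by simp [hA']
      rw [c1, c2]
      by_cases h : i' = i
      · subst h
        rw [hin, sub_self, zero_mul]
      · exact mul_nonneg (sub_nonneg.2 (hout _ _ _ _))
          (DD_nonneg (n:ℝ) n.cast_nonneg i i' j j' h _ fun k => sgv_mem _ _ _ k)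
  have conv : ∀ B : I × J → κ ⊕ κ' → ℝ, Filter.Tendsto
      (fun n : ℕ => ∫ x, MvPolynomial.eval (sgv (n:ℝ) lam (lin B x)) (∏ i0, HH J i0) ∂(gpi (κ ⊕ κ')))
      Filter.atTop (nhds (∫ x, Flim lam (lin B x) ∂(gpi (κ ⊕ κ')))) := by
    intro B
    refine tendsto_integral_of_dominated_convergence (fun _ => 1) ?_ (integrable_const _) ?_ ?_
    · intro n
      exact ((poly_cont _ _ _).comp (lin_cont B)).aestronglyMeasurable
    · intro n
      refine ae_of_all _ fun x => ?_
      have := eval_QF_mem (sgv (n:ℝ) lam (lin B x)) (sgv_mem _ _ _)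
      rw [Real.norm_eq_abs, abs_of_nonneg this.1]; exact this.2
    · exact ae_of_all _ fun x => Flim_tendsto _ _
  have hlim := le_of_tendsto_of_tendsto' (conv A') (conv A) key
  have Fmem : ∀ z : I × J → ℝ, 0 ≤ Flim lam z ∧ Flim lam z ≤ 1 := by
    intro z
    have := eval_QF_mem (fun k => slim (z k - lam k)) (fun k => slim_mem _)
    simpa [map_prod, eval_H, Flim] using this
  have Fmeas : ∀ B : I × J → κ ⊕ κ' → ℝ, Integrable (fun x => Flim lam (lin B x)) (gpi (κ ⊕ κ')) := by
    intro B
    refine Integrable.of_bound (C := 1) ?_ ?_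
    · refine aestronglyMeasurable_of_tendsto_ae Filter.atTop
        (f := fun (n:ℕ) x => MvPolynomial.eval (sgv (n:ℝ) lam (lin B x)) (∏ i0, HH J i0)) ?_ ?_
      · intro n
        exact ((poly_cont _ _ _).comp (lin_cont B)).aestronglyMeasurable
      · exact ae_of_all _ fun x => Flim_tendsto _ _
    · refine ae_of_all _ fun x => ?_
      rw [Real.norm_eq_abs, abs_of_nonneg (Fmem _).1]; exact (Fmem _).2
  have up : ∫ x, Flim lam (lin A x) ∂(gpi (κ ⊕ κ')) ≤ (gpi (κ ⊕ κ')).real Eᶜ := by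
    rw [← integral_indicator_one mE.compl]
    refine integral_mono (Fmeas A) ((integrable_const 1).indicator mE.compl) fun x => ?_
    by_cases hx : x ∈ E
    · simp only [Set.indicator, Set.mem_compl_iff, hx, not_true, if_false]
      obtain ⟨i, hi⟩ := hx
      refine le_of_eq (Finset.prod_eq_zero (Finset.mem_univ i) ?_)
      rw [Finset.prod_eq_one, sub_self]
      intro j _
      have := hi j
      rw [slim, if_neg (by linarith), if_neg (by linarith), sub_zero]
    · simp only [Set.indicator, Set.mem_compl_iff, hx, not_false_eq_true, if_true]
      exact (Fmem _).2
  have lo : (gpi (κ ⊕ κ')).real E'ᶜ ≤ ∫ x, Flim lam (lin A' x) ∂(gpi (κ ⊕ κ')) := by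
    rw [← integral_indicator_one mE'.compl]
    refine integral_mono ((integrable_const 1).indicator mE'.compl) (Fmeas A') fun x => ?_
    by_cases hx : x ∈ E'
    · simp only [Set.indicator, Set.mem_compl_iff, hx, not_true, if_false]
      exact (Fmem _).1
    · simp only [Set.indicator, Set.mem_compl_iff, hx, not_false_eq_true, if_true]
      simp only [hE', Set.mem_setOf_eq, not_exists, not_forall, not_le] at hx
      refine ge_of_eq (Finset.prod_eq_one fun i _ => ?_)
      obtain ⟨j, hj⟩ := hx i
      rw [Finset.prod_eq_zero (Finset.mem_univ j), sub_zero]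
      rw [slim, if_pos (by linarith), sub_self]
  have fin := (lo.trans hlim).trans up
  rw [probReal_compl_eq_one_sub mE', probReal_compl_eq_one_sub mE] at fin
  have : (gpi (κ ⊕ κ')).real E ≤ (gpi (κ ⊕ κ')).real E' := by linarith
  exact (ENNReal.toReal_le_toReal (measure_ne_top _ _) (measure_ne_top _ _)).1 this

end

lemma gordon_ctbl {I J : Type*} [Countable I] [Countable J] {κ κ' : Type*} [Fintype κ] [Fintype κ']
    (lam : I → J → ℝ)
    (a : I → J → κ → ℝ) (a' : I → J → κ' → ℝ)
    (hin : ∀ i j j', ∑ k, a i j k * a i j' k = ∑ k, a' i j k * a' i j' k)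
    (hout : ∀ i i' j j', ∑ k, a' i j k * a' i' j' k ≤ ∑ k, a i j k * a i' j' k) :
    gpi κ {x | ∃ i, ∀ j, ∑ k, a i j k * x k < lam i j} ≤
    gpi κ' {x | ∃ i, ∀ j, ∑ k, a' i j k * x k ≤ lam i j} := by
  classical
  have step1 : ∀ (S : Finset I) (T : Finset J),
      gpi κ {x | ∃ i ∈ S, ∀ j ∈ T, ∑ k, a i j k * x k < lam i j} ≤
      gpi κ' {x | ∃ i ∈ S, ∀ j ∈ T, ∑ k, a' i j k * x k ≤ lam i j} := by
    intro S T
    have := gordon_fin (I := S) (J := T) (fun k => lam k.1 k.2) (fun k => a k.1 k.2)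
      (fun k => a' k.1 k.2) (fun i j j' => hin i j j') (fun i i' j j' => hout i i' j j')
    simpa [lin] using this
  have meas : ∀ (i : I) (j : J), MeasurableSet {x : κ' → ℝ | ∑ k, a' i j k * x k ≤ lam i j} := by
    intro i j
    exact measurableSet_le (by fun_prop) measurable_const
  have step2 : ∀ (S : Finset I),
      gpi κ {x | ∃ i ∈ S, ∀ j, ∑ k, a i j k * x k < lam i j} ≤
      gpi κ' {x | ∃ i, ∀ j, ∑ k, a' i j k * x k ≤ lam i j} := by
    intro S
    set B : Finset J → Set (κ' → ℝ) := fun T => {x | ∃ i ∈ S, ∀ j ∈ T, ∑ k, a' i j k * x k ≤ lam i j} with hB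
    have hanti : ∀ T T', T ⊆ T' → B T' ⊆ B T := fun T T' h x ⟨i, hi, hx⟩ =>
      ⟨i, hi, fun j hj => hx j (h hj)⟩
    have hBm : ∀ T, MeasurableSet (B T) := by
      intro T
      have : B T = ⋃ i ∈ S, ⋂ j ∈ T, {x | ∑ k, a' i j k * x k ≤ lam i j} := by
        ext x; simp [hB]
      rw [this]
      exact Finset.measurableSet_biUnion _ fun i _ => Finset.measurableSet_biInter _ fun j _ => meas i j
    have hI : (⋂ T, B T) ⊆ {x | ∃ i, ∀ j, ∑ k, a' i j k * x k ≤ lam i j} := by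
      intro x hx
      by_contra hcon
      have hc : ∀ i, ∃ j, lam i j < ∑ k, a' i j k * x k := by
        intro i
        by_contra h
        push Not at h
        exact hcon ⟨i, h⟩
      choose f hf using hc
      obtain ⟨i, hi, h⟩ := Set.mem_iInter.1 hx (S.image f)
      exact absurd (h (f i) (Finset.mem_image_of_mem f hi)) (not_le.2 (hf i))
    refine le_trans ?_ (measure_mono hI)
    rw [Directed.measure_iInter]
    · refine le_iInf fun T => le_trans (measure_mono ?_) (step1 S T)
      rintro x ⟨i, hi, hx⟩
      exact ⟨i, hi, fun j _ => hx j⟩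
    · exact fun T => (hBm T).nullMeasurableSet
    · intro T T'
      exact ⟨T ∪ T', hanti _ _ Finset.subset_union_left, hanti _ _ Finset.subset_union_right⟩
    · exact ⟨∅, measure_ne_top _ _⟩
  set B : Finset I → Set (κ → ℝ) := fun S => {x | ∃ i ∈ S, ∀ j, ∑ k, a i j k * x k < lam i j} with hB
  have hU : {x | ∃ i, ∀ j, ∑ k, a i j k * x k < lam i j} ⊆ ⋃ S, B S := by
    rintro x ⟨i, hi⟩
    exact Set.mem_iUnion.2 ⟨{i}, i, by simp, hi⟩
  refine (measure_mono hU).trans ?_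
  rw [Directed.measure_iUnion]
  · exact iSup_le step2
  · intro T T'
    refine ⟨T ∪ T', ?_, ?_⟩
    · rintro x ⟨i, hi, hx⟩; exact ⟨i, Finset.mem_union_left _ hi, hx⟩
    · rintro x ⟨i, hi, hx⟩; exact ⟨i, Finset.mem_union_right _ hi, hx⟩

noncomputable def nr {ι : Type*} [Fintype ι] (x : ι → ℝ) : ℝ := Real.sqrt (∑ i, x i ^ 2)

lemma nr_nonneg {ι : Type*} [Fintype ι] (x : ι → ℝ) : 0 ≤ nr x := Real.sqrt_nonneg _

lemma nr_sq {ι : Type*} [Fintype ι] (x : ι → ℝ) : nr x ^ 2 = ∑ i, x i ^ 2 :=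
  Real.sq_sqrt (Finset.sum_nonneg fun i _ => sq_nonneg _)

lemma dot_le_nr {ι : Type*} [Fintype ι] (x y : ι → ℝ) : ∑ i, x i * y i ≤ nr x * nr y :=
  Real.sum_mul_le_sqrt_mul_sqrt _ _ _

lemma nr_self {ι : Type*} [Fintype ι] (x : ι → ℝ) : ∑ i, x i * x i = nr x * nr x := by
  rw [← pow_two, nr_sq]; simp [pow_two]

lemma gpi_option (κ : Type*) [Fintype κ] :
    MeasurePreserving (fun (x : (κ → ℝ) × ℝ) (o : Option κ) => Option.elim o x.2 x.1)
      ((gpi κ).prod (gaussianReal 0 1)) (gpi (Option κ)) := by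
  have hm : Measurable (fun (x : (κ → ℝ) × ℝ) (o : Option κ) => Option.elim o x.2 x.1) := by
    refine measurable_pi_lambda _ fun o => ?_
    cases o
    · exact measurable_snd
    · exact (measurable_pi_apply _).comp measurable_fst
  refine ⟨hm, ?_⟩
  unfold gpi
  symm
  refine Measure.pi_eq fun s hs => ?_
  rw [Measure.map_apply hm (MeasurableSet.univ_pi hs)]
  have : (fun (x : (κ → ℝ) × ℝ) (o : Option κ) => Option.elim o x.2 x.1) ⁻¹' Set.univ.pi s =
      (Set.univ.pi fun k => s (some k)) ×ˢ (s none) := by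
    ext x; simp [Option.forall, and_comm]
  rw [this, Measure.prod_prod, Measure.pi_pi, Fintype.prod_option, mul_comm]

lemma gpi_sum (κ κ' : Type*) [Fintype κ] [Fintype κ'] :
    MeasurePreserving (fun (x : (κ → ℝ) × (κ' → ℝ)) => (Sum.elim x.1 x.2 : κ ⊕ κ' → ℝ))
      ((gpi κ).prod (gpi κ')) (gpi (κ ⊕ κ')) := by
  have hm : Measurable (fun (x : (κ → ℝ) × (κ' → ℝ)) => (Sum.elim x.1 x.2 : κ ⊕ κ' → ℝ)) := by
    refine measurable_pi_lambda _ fun o => ?_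
    cases o
    · exact (measurable_pi_apply _).comp measurable_fst
    · exact (measurable_pi_apply _).comp measurable_snd
  refine ⟨hm, ?_⟩
  unfold gpi
  symm
  refine Measure.pi_eq fun s hs => ?_
  rw [Measure.map_apply hm (MeasurableSet.univ_pi hs)]
  have : (fun (x : (κ → ℝ) × (κ' → ℝ)) => (Sum.elim x.1 x.2 : κ ⊕ κ' → ℝ)) ⁻¹' Set.univ.pi s =
      (Set.univ.pi fun k => s (Sum.inl k)) ×ˢ (Set.univ.pi fun k => s (Sum.inr k)) := by
    ext x; simp
  rw [this, Measure.prod_prod, Measure.pi_pi, Measure.pi_pi, Fintype.prod_sum_type]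

lemma gordon_bilin {I J P Q : Type*} [Countable I] [Countable J] [Fintype P] [Fintype Q]
    (lam : I → J → ℝ) (p : I → J → P → ℝ) (q : I → J → Q → ℝ)
    (hpq : ∀ i, (∀ j j', p i j = p i j') ∨ (∀ j j', q i j = q i j')) :
    ((gpi (Q × P)).prod (gaussianReal 0 1))
      {x | ∃ i, ∀ j, ∑ b, ∑ c, q i j b * p i j c * x.1 (b, c) + nr (p i j) * nr (q i j) * x.2 < lam i j} ≤
    ((gpi Q).prod (gpi P))
      {x | ∃ i, ∀ j, nr (p i j) * ∑ b, q i j b * x.1 b + nr (q i j) * ∑ c, p i j c * x.2 c ≤ lam i j} := by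
  set a : I → J → Option (Q × P) → ℝ := fun i j o =>
    Option.elim o (nr (p i j) * nr (q i j)) fun k => q i j k.1 * p i j k.2 with ha
  set a' : I → J → Q ⊕ P → ℝ := fun i j =>
    Sum.elim (fun b => nr (p i j) * q i j b) (fun c => nr (q i j) * p i j c) with ha'
  have ca : ∀ i i' j j', ∑ k, a i j k * a i' j' k = nr (p i j) * nr (q i j) * (nr (p i' j') * nr (q i' j'))
      + (∑ b, q i j b * q i' j' b) * ∑ c, p i j c * p i' j' c := by
    intro i i' j j'
    simp only [ha, Fintype.sum_option, Option.elim]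
    congr 1
    rw [Fintype.sum_prod_type, Finset.sum_mul_sum]
    refine Finset.sum_congr rfl fun b _ => Finset.sum_congr rfl fun c _ => ?_
    ring
  have ca' : ∀ i i' j j', ∑ k, a' i j k * a' i' j' k =
      nr (p i j) * nr (p i' j') * (∑ b, q i j b * q i' j' b)
      + nr (q i j) * nr (q i' j') * ∑ c, p i j c * p i' j' c := by
    intro i i' j j'
    simp only [ha', Fintype.sum_sum_type, Sum.elim_inl, Sum.elim_inr, Finset.mul_sum]
    congr 1 <;> exact Finset.sum_congr rfl fun b _ => by ring
  have G := gordon_ctbl lam a a' ?_ ?_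
  · have mo := gpi_option (Q × P)
    have ms := gpi_sum Q P
    have m1 : MeasurableSet {x : Option (Q × P) → ℝ | ∃ i, ∀ j, ∑ k, a i j k * x k < lam i j} := by
      simp only [Set.ofPred_exists, Set.ofPred_forall]
      exact MeasurableSet.iUnion fun i => MeasurableSet.iInter fun j =>
        measurableSet_lt (by fun_prop) measurable_const
    have m2 : MeasurableSet {x : Q ⊕ P → ℝ | ∃ i, ∀ j, ∑ k, a' i j k * x k ≤ lam i j} := by
      simp only [Set.ofPred_exists, Set.ofPred_forall]
      exact MeasurableSet.iUnion fun i => MeasurableSet.iInter fun j =>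
        measurableSet_le (by fun_prop) measurable_const
    rw [← mo.measure_preimage m1.nullMeasurableSet, ← ms.measure_preimage m2.nullMeasurableSet] at G
    refine le_trans (le_of_eq ?_) (G.trans (le_of_eq ?_))
    · congr 1
      ext x
      simp only [Set.mem_ofPred_eq, Set.mem_preimage, ha, Fintype.sum_option, Option.elim,
        Fintype.sum_prod_type]
      simp only [add_comm]
    · congr 1
      ext x
      simp only [Set.mem_ofPred_eq, Set.mem_preimage, ha', Fintype.sum_sum_type, Sum.elim_inl, Sum.elim_inr,
        Finset.mul_sum, mul_assoc]
  · intro i j j'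
    rw [ca, ca']
    rcases hpq i with h | h
    · rw [h j' j, nr_self]; ring
    · rw [h j' j, nr_self]; ring
  · intro i i' j j'
    rw [ca, ca']
    have h1 := dot_le_nr (p i j) (p i' j')
    have h2 := dot_le_nr (q i j) (q i' j')
    nlinarith [mul_nonneg (sub_nonneg.2 h1) (sub_nonneg.2 h2)]

lemma half_g : (1/2 : ENNReal) ≤ gaussianReal 0 1 (Set.Iic 0) := by
  set μ := gaussianReal 0 1
  have h1 : μ (Set.Ioi 0) = μ (Set.Iio 0) := by
    have h : μ.map (fun x => -x) = μ := by
      have := gaussianReal_map_neg (μ := 0) (v := 1)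
      simpa using this
    conv_lhs => rw [← h]
    rw [Measure.map_apply measurable_neg measurableSet_Ioi]
    congr 1; ext x; simp
  have h2 : μ (Set.Iic 0) + μ (Set.Iic 0)ᶜ = 1 := by
    rw [measure_add_measure_compl measurableSet_Iic, measure_univ]
  rw [Set.compl_Iic, h1] at h2
  have h3 : μ (Set.Iio 0) ≤ μ (Set.Iic 0) := measure_mono Set.Iio_subset_Iic_self
  have h4 : 1 ≤ 2 * μ (Set.Iic 0) := by
    rw [← h2, two_mul]; gcongr
  rw [ENNReal.div_le_iff' (by norm_num) (by norm_num)]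
  exact h4

noncomputable def mv {P Q : Type*} [Fintype P] (A : Q × P → ℝ) (p : P → ℝ) : Q → ℝ :=
  fun b => ∑ c, A (b, c) * p c

lemma nr_cont {ι : Type*} [Fintype ι] : Continuous (nr : (ι → ℝ) → ℝ) := by
  unfold nr; fun_prop

lemma mv_cont {P Q : Type*} [Fintype P] (A : Q × P → ℝ) : Continuous (mv A) := by
  unfold mv; fun_prop

lemma bilin_mv {P Q : Type*} [Fintype P] [Fintype Q] (A : Q × P → ℝ) (p : P → ℝ) (q : Q → ℝ) :
    ∑ b, ∑ c, q b * p c * A (b, c) = ∑ b, q b * mv A p b := by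
  refine Finset.sum_congr rfl fun b _ => ?_
  rw [mv, Finset.mul_sum]
  exact Finset.sum_congr rfl fun c _ => by ring

lemma nr_smul {ι : Type*} [Fintype ι] (t : ℝ) (x : ι → ℝ) : nr (t • x) = |t| * nr x := by
  unfold nr
  rw [← Real.sqrt_sq_eq_abs, ← Real.sqrt_mul (sq_nonneg t), Finset.mul_sum]
  simp [mul_pow]

lemma nr_neg {ι : Type*} [Fintype ι] (x : ι → ℝ) : nr (-x) = nr x := by
  simp [nr]

lemma nr_zero {ι : Type*} [Fintype ι] : nr (0 : ι → ℝ) = 0 := by simp [nr]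

lemma nr_eq_zero {ι : Type*} [Fintype ι] {x : ι → ℝ} (h : nr x = 0) : x = 0 := by
  have := nr_sq x
  rw [h] at this
  have h2 := (Finset.sum_eq_zero_iff_of_nonneg (fun i _ => sq_nonneg (x i))).1
    (by rw [← this]; norm_num : ∑ i, x i ^ 2 = 0)
  ext i
  simpa using h2 i (Finset.mem_univ i)

lemma sphere_nonempty {ι : Type*} [Fintype ι] [Nonempty ι] : Nonempty {u : ι → ℝ // nr u = 1} := by
  classical
  obtain ⟨i⟩ := ‹Nonempty ι›
  exact ⟨⟨Pi.single i 1, by simp [nr, Pi.single_apply]⟩⟩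

/-- sup over the dense sphere sequence -/
lemma sphere_sup {ι : Type*} [Fintype ι] [Nonempty ι] (s : ℕ → {u : ι → ℝ // nr u = 1})
    (hs : DenseRange s) (g : ι → ℝ) (K c : ℝ) (h : ∀ k, K * ∑ b, (s k).1 b * g b ≤ c) :
    K * nr g ≤ c := by
  have hall : ∀ u : {u : ι → ℝ // nr u = 1}, K * ∑ b, u.1 b * g b ≤ c := by
    have hcl : IsClosed {u : {u : ι → ℝ // nr u = 1} | K * ∑ b, u.1 b * g b ≤ c} :=
      isClosed_le (continuous_const.mul (continuous_finsetSum _ fun b _ =>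
        ((continuous_apply b).comp continuous_subtype_val).mul continuous_const)) continuous_const
    intro u
    have : u ∈ closure (Set.range s) := hs u
    exact closure_minimal (by rintro _ ⟨k, rfl⟩; exact h k) hcl this
  by_cases hg : nr g = 0
  · have : g = 0 := nr_eq_zero hg
    obtain ⟨u⟩ := sphere_nonempty (ι := ι)
    have := hall u
    rw [hg]
    simpa [‹g = 0›] using this
  · have hp : 0 < nr g := lt_of_le_of_ne (nr_nonneg g) (Ne.symm hg)
    have := hall ⟨(nr g)⁻¹ • g, by rw [nr_smul, abs_of_pos (inv_pos.2 hp), inv_mul_cancel₀ hg]⟩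
    simp only [Pi.smul_apply, smul_eq_mul, mul_assoc, ← Finset.mul_sum, nr_self] at this
    rwa [inv_mul_cancel_left₀ hg] at this

lemma two_mul_of_half {x y z : ENNReal} (hz : 1/2 ≤ z) (h : x * z ≤ y) : x ≤ 2 * y := by
  have h1 : x * (1/2) ≤ y := le_trans (by gcongr) h
  have h2 : 2 * (x * (1/2)) = x := by
    rw [mul_comm x, ← mul_assoc, one_div, ENNReal.mul_inv_cancel (by norm_num) (by norm_num), one_mul]
  rw [← h2]; gcongr

lemma gordonA {P Q : Type*} [Fintype P] [Fintype Q] [Nonempty Q] (S : Set (P → ℝ)) (c : ℝ) :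
    gpi (Q × P) {A | ∃ p ∈ S, nr (mv A p) < c} ≤
      2 * ((gpi Q).prod (gpi P)) {x | ∃ p ∈ S, nr p * nr x.1 + ∑ i, p i * x.2 i ≤ c} := by
  rcases S.eq_empty_or_nonempty with rfl | hS
  · simp
  have : Nonempty S := hS.to_subtype
  have : Nonempty {u : Q → ℝ // nr u = 1} := sphere_nonempty
  set w := TopologicalSpace.denseSeq S with hw
  set u := TopologicalSpace.denseSeq {u : Q → ℝ // nr u = 1} with hu
  have hwd : DenseRange w := TopologicalSpace.denseRange_denseSeq _
  have hud : DenseRange u := TopologicalSpace.denseRange_denseSeq _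
  have G := gordon_bilin (I := ℕ) (J := ℕ) (P := P) (Q := Q) (fun _ _ => c) (fun i _ => (w i).1)
    (fun _ j => (u j).1) (fun i => Or.inl fun _ _ => rfl)
  refine two_mul_of_half half_g ?_
  rw [← Measure.prod_prod]
  refine le_trans (measure_mono ?_) (G.trans (measure_mono ?_))
  · rintro ⟨A, γ⟩ ⟨⟨p, hp, hlt⟩, hγ⟩
    have hγ : γ ≤ 0 := hγ
    have hop : IsOpen {p : S | nr (mv A p.1) < c} :=
      isOpen_lt (nr_cont.comp ((mv_cont A).comp continuous_subtype_val)) continuous_const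
    obtain ⟨i, hi⟩ := hwd.exists_mem_open hop ⟨⟨p, hp⟩, hlt⟩
    refine ⟨i, fun j => ?_⟩
    have hi : nr (mv A (w i).1) < c := hi
    rw [bilin_mv]
    have h1 := dot_le_nr (u j).1 (mv A (w i).1)
    rw [(u j).2, one_mul] at h1
    rw [(u j).2, mul_one]
    have := mul_nonpos_of_nonneg_of_nonpos (nr_nonneg (w i).1) hγ
    show _ + nr (w i).1 * γ < c
    linarith
  · rintro ⟨g, h⟩ ⟨i, hi⟩
    refine ⟨(w i).1, (w i).2, ?_⟩
    have := sphere_sup u hud g (nr (w i).1) (c - ∑ c, (w i).1 c * h c) fun k => by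
      have := hi k
      simp only [(u k).2, one_mul] at this
      linarith
    simp only
    linarith

lemma quad_min {a b c : ℝ} (hc : 0 ≤ a - 2 * b + c)
    (h : ∀ t ∈ Set.Icc (0:ℝ) 1, a ≤ (1 - t)^2 * a + 2 * t * (1 - t) * b + t ^ 2 * c) : a ≤ b := by
  by_contra hab
  push Not at hab
  set d := a - b with hd
  set e := a - 2 * b + c with he
  have hd0 : 0 < d := by linarith
  have hden : 0 < d + e + 1 := by linarith
  set t := d / (d + e + 1) with ht
  have ht0 : 0 < t := div_pos hd0 hden
  have ht1 : t ≤ 1 := (div_le_one hden).2 (by linarith)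
  have htm : t * (d + e + 1) = d := div_mul_cancel₀ _ hden.ne'
  have := h t ⟨ht0.le, ht1⟩
  have h2 : 0 ≤ t * (-2 * d + t * e) := by
    have : t * (-2 * d + t * e) = (1 - t)^2 * a + 2 * t * (1 - t) * b + t ^ 2 * c - a := by
      rw [hd, he]; ring
    linarith
  have h3 : 0 ≤ -2 * d + t * e := nonneg_of_mul_nonneg_right h2 ht0
  nlinarith

lemma gordonB {P Q : Type*} [Fintype P] [Fintype Q] [Nonempty Q] (D : Set (P → ℝ))
    (hconv : Convex ℝ D) (hcomp : IsCompact D) (hne : D.Nonempty) (c : ℝ) (hc : 0 ≤ c) :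
    gpi (Q × P) {A | ∀ p ∈ D, c < nr (mv A p)} ≤
      2 * ((gpi Q).prod (gpi P)) {x | ∀ p ∈ D, c ≤ nr p * nr x.1 + ∑ i, p i * x.2 i} := by
  have : Nonempty D := hne.to_subtype
  have : Nonempty {u : Q → ℝ // nr u = 1} := sphere_nonempty
  set w := TopologicalSpace.denseSeq D with hw
  set u := TopologicalSpace.denseSeq {u : Q → ℝ // nr u = 1} with hu
  have hwd : DenseRange w := TopologicalSpace.denseRange_denseSeq _
  have hud : DenseRange u := TopologicalSpace.denseRange_denseSeq _
  have G := gordon_bilin (I := ℕ) (J := ℕ) (P := P) (Q := Q) (fun _ _ => -c) (fun _ j => -(w j).1)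
    (fun i _ => (u i).1) (fun i => Or.inr fun _ _ => rfl)
  refine two_mul_of_half half_g ?_
  rw [← Measure.prod_prod]
  refine le_trans (measure_mono ?_) (G.trans (measure_mono ?_))
  · rintro ⟨A, γ⟩ ⟨hA, hγ⟩
    have hγ : γ ≤ 0 := hγ
    have hA : ∀ p ∈ D, c < nr (mv A p) := hA
    have hmc : Continuous fun p => nr (mv A p) := nr_cont.comp (mv_cont A)
    obtain ⟨p0, hp0, hmin⟩ := hcomp.exists_isMinOn hne hmc.continuousOn
    obtain ⟨p1, hp1, hmax⟩ := hcomp.exists_isMaxOn hne hmc.continuousOn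
    set z := mv A p0 with hz
    have hzc : c < nr z := hA p0 hp0
    have hz0 : 0 < nr z := lt_of_le_of_lt hc hzc
    have hsep : ∀ p ∈ D, nr z ^ 2 ≤ ∑ b, z b * mv A p b := by
      intro p hp
      refine quad_min (c := nr (mv A p) ^ 2) ?_ ?_
      · have : nr z ^ 2 - 2 * ∑ b, z b * mv A p b + nr (mv A p) ^ 2 = ∑ b, (z b - mv A p b) ^ 2 := by
          rw [nr_sq, nr_sq, Finset.mul_sum, ← Finset.sum_sub_distrib, ← Finset.sum_add_distrib]
          exact Finset.sum_congr rfl fun b _ => by ring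
        rw [this]; positivity
      · rintro t ⟨ht0, ht1⟩
        have hm := hmin (hconv hp0 hp (sub_nonneg.2 ht1) ht0 (by ring))
        have hm : nr z ≤ nr (mv A ((1 - t) • p0 + t • p)) := hm
        have := pow_le_pow_left₀ (nr_nonneg _) hm 2
        refine this.trans (le_of_eq ?_)
        have e : mv A ((1 - t) • p0 + t • p) = fun b => (1 - t) * z b + t * mv A p b := by
          ext b
          simp only [hz, mv, Pi.add_apply, Pi.smul_apply, smul_eq_mul, Finset.mul_sum]
          rw [← Finset.sum_add_distrib]
          exact Finset.sum_congr rfl fun b _ => by ring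
        rw [e, nr_sq, nr_sq, nr_sq, Finset.mul_sum, Finset.mul_sum, Finset.mul_sum,
          ← Finset.sum_add_distrib, ← Finset.sum_add_distrib]
        exact Finset.sum_congr rfl fun b _ => by ring
    set u0 : {u : Q → ℝ // nr u = 1} := ⟨(nr z)⁻¹ • z,
      by rw [nr_smul, abs_of_pos (inv_pos.2 hz0), inv_mul_cancel₀ hz0.ne']⟩ with hu0
    have hu0s : ∀ p ∈ D, nr z ≤ ∑ b, u0.1 b * mv A p b := by
      intro p hp
      have := hsep p hp
      simp only [hu0, Pi.smul_apply, smul_eq_mul, mul_assoc, ← Finset.mul_sum]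
      rw [le_inv_mul_iff₀ hz0]
      nlinarith
    set M := nr (mv A p1) with hM
    have hM0 : 0 ≤ M := nr_nonneg _
    have hop : IsOpen {v : {u : Q → ℝ // nr u = 1} | nr (u0.1 - v.1) * M < nr z - c} := by
      refine isOpen_lt ?_ continuous_const
      exact (nr_cont.comp (continuous_const.sub continuous_subtype_val)).mul continuous_const
    obtain ⟨i, hi⟩ := hud.exists_mem_open hop ⟨u0, by
      simp only [Set.mem_ofPred_eq, sub_self, nr_zero]; linarith⟩
    have hi : nr (u0.1 - (u i).1) * M < nr z - c := hi
    refine ⟨i, fun j => ?_⟩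
    rw [bilin_mv]
    have e1 : ∑ b, (u i).1 b * mv A (-(w j).1) b = - ∑ b, (u i).1 b * mv A (w j).1 b := by
      rw [← Finset.sum_neg_distrib]
      refine Finset.sum_congr rfl fun b _ => ?_
      simp [mv, Finset.sum_neg_distrib]
    have h1 := hu0s _ (w j).2
    have h2 := dot_le_nr (u0.1 - (u i).1) (mv A (w j).1)
    have h3 : nr (mv A (w j).1) ≤ M := hmax (w j).2
    have h4 : ∑ b, (u0.1 - (u i).1) b * mv A (w j).1 b =
        ∑ b, u0.1 b * mv A (w j).1 b - ∑ b, (u i).1 b * mv A (w j).1 b := by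
      rw [← Finset.sum_sub_distrib]
      exact Finset.sum_congr rfl fun b _ => by simp; ring
    have h5 := mul_le_mul_of_nonneg_left h3 (nr_nonneg (u0.1 - (u i).1))
    rw [e1, (u i).2, mul_one]
    have := mul_nonpos_of_nonneg_of_nonpos (nr_nonneg (-(w j).1)) hγ
    show _ + nr (-(w j).1) * γ < -c
    linarith
  · rintro ⟨g, h⟩ ⟨i, hi⟩
    have hall : ∀ p : D, nr p.1 * ∑ b, (u i).1 b * g b - ∑ k, p.1 k * h k ≤ -c := by
      have hcl : IsClosed {p : D | nr p.1 * ∑ b, (u i).1 b * g b - ∑ k, p.1 k * h k ≤ -c} := by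
        refine isClosed_le ?_ continuous_const
        refine Continuous.sub ?_ (continuous_finsetSum _ fun b _ =>
          ((continuous_apply b).comp continuous_subtype_val).mul continuous_const)
        exact (nr_cont.comp continuous_subtype_val).mul continuous_const
      intro p
      have : p ∈ closure (Set.range w) := hwd p
      refine closure_minimal ?_ hcl this
      rintro _ ⟨k, rfl⟩
      have := hi k
      simp only [(u i).2, one_mul, nr_neg, Pi.neg_apply, neg_mul, Finset.sum_neg_distrib] at this
      simp only [Set.mem_ofPred_eq]
      linarith
    intro p hp
    have h1 := hall ⟨p, hp⟩
    have h2 := dot_le_nr (-(u i).1) g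
    rw [nr_neg, (u i).2, one_mul] at h2
    simp only [Pi.neg_apply, neg_mul, Finset.sum_neg_distrib] at h2
    have h3 := mul_le_mul_of_nonneg_left h2 (nr_nonneg p)
    simp only at h1 ⊢
    linarith

lemma g_tail {b : ℝ} (hb : 0 ≤ b) : (gaussianReal 0 1).real (Set.Ici b) ≤ Real.exp (-(b ^ 2 / 2)) := by
  have h := measure_ge_le_exp_mul_mgf (X := id) (μ := gaussianReal 0 1) (t := b) b hb ?_
  · have h2 : mgf id (gaussianReal 0 1) b = Real.exp (b ^ 2 / 2) := by
      rw [mgf_id_gaussianReal]; simp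
    rw [h2, ← Real.exp_add] at h
    refine le_trans (le_of_eq ?_) (h.trans (le_of_eq ?_))
    · rfl
    · congr 1; ring
  · simpa using integrable_exp_mul_gaussianReal (μ := 0) (v := 1) b

lemma g_neg (s : Set ℝ) (hs : MeasurableSet s) :
    gaussianReal 0 1 ((fun x => -x) ⁻¹' s) = gaussianReal 0 1 s := by
  have h : (gaussianReal 0 1).map (fun x => -x) = gaussianReal 0 1 := by
    have := gaussianReal_map_neg (μ := 0) (v := 1)
    simpa using this
  conv_rhs => rw [← h]
  rw [Measure.map_apply measurable_neg hs]

lemma g_tail_neg {b : ℝ} (hb : 0 ≤ b) : (gaussianReal 0 1).real (Set.Iic (-b)) ≤ Real.exp (-(b ^ 2 / 2)) := by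
  refine le_trans (le_of_eq ?_) (g_tail hb)
  unfold Measure.real
  rw [← g_neg _ measurableSet_Ici]
  congr 2; ext x; simp [le_neg]

lemma exp2_bound : Real.exp (-2) ≤ 1/7 := by
  have h1 : (2.7182818283 : ℝ) < Real.exp 1 := Real.exp_one_gt_d9
  have h2 : Real.exp (-2) * (Real.exp 1 * Real.exp 1) = 1 := by
    rw [← Real.exp_add, ← Real.exp_add]; norm_num
  have h3 : 7 ≤ Real.exp 1 * Real.exp 1 := by nlinarith
  have h4 := Real.exp_pos (-2)
  nlinarith

lemma g_le_two : (6/7 : ℝ) ≤ (gaussianReal 0 1).real (Set.Iic 2) := by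
  have h1 := g_tail (b := 2) (by norm_num)
  have h2 : (gaussianReal 0 1).real (Set.Iic 2)ᶜ ≤ Real.exp (-(2 ^ 2 / 2)) := by
    refine le_trans (measureReal_mono ?_) h1
    rw [Set.compl_Iic]; exact Set.Ioi_subset_Ici_self
  rw [probReal_compl_eq_one_sub measurableSet_Iic] at h2
  have : Real.exp (-(2 ^ 2 / 2)) ≤ 1/7 := by
    convert exp2_bound using 2; norm_num
  linarith

lemma copy_num {p τ : ℝ} (hp : 0 ≤ p) (hp1 : p ≤ 1) (hτ : 0 ≤ τ)
    (h : ∀ M : ℕ, (1 - (1 - p) ^ M) * (6/7) ≤ 1/2 + M * τ) : p ≤ 24 * τ := by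
  rcases hp.eq_or_lt with rfl | hp0
  · positivity
  set M := ⌈2 / p⌉₊ with hM
  have h1 : 2 / p ≤ M := Nat.le_ceil _
  have h2 : (M:ℝ) < 2 / p + 1 := Nat.ceil_lt_add_one (by positivity)
  have h3 : (1 - p) ^ M ≤ Real.exp (-2) := by
    have : 1 - p ≤ Real.exp (-p) := by linarith [Real.add_one_le_exp (-p)]
    calc (1 - p) ^ M ≤ Real.exp (-p) ^ M := pow_le_pow_left₀ (by linarith) this _
      _ = Real.exp (-(M * p)) := by rw [← Real.exp_nat_mul]; ring_nf
      _ ≤ Real.exp (-2) := by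
        apply Real.exp_le_exp.2
        rw [div_le_iff₀ hp0] at h1
        linarith
  have h4 := h M
  have h5 := exp2_bound
  have h6 : (M:ℝ) * p ≤ 3 := by
    have : (M:ℝ) * p < (2 / p + 1) * p := by gcongr
    have e : (2 / p + 1) * p = 2 + p := by field_simp
    linarith
  have h7 : (1/5 : ℝ) ≤ M * τ := by nlinarith
  have : p * (1/5) ≤ p * (M * τ) := by gcongr
  nlinarith

lemma gpi_uncurry (Q P : Type*) [Fintype Q] [Fintype P] :
    MeasurePreserving (fun (x : Q → P → ℝ) (k : Q × P) => x k.1 k.2)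
      (Measure.pi fun _ : Q => gpi P) (gpi (Q × P)) := by
  have hm : Measurable (fun (x : Q → P → ℝ) (k : Q × P) => x k.1 k.2) := by fun_prop
  refine ⟨hm, ?_⟩
  conv_rhs => unfold gpi
  symm
  refine Measure.pi_eq fun s hs => ?_
  rw [Measure.map_apply hm (MeasurableSet.univ_pi hs)]
  have : (fun (x : Q → P → ℝ) (k : Q × P) => x k.1 k.2) ⁻¹' Set.univ.pi s =
      Set.univ.pi fun b => Set.univ.pi fun c => s (b, c) := by
    ext x; simp
  rw [this, Measure.pi_pi, Fintype.prod_prod_type]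
  simp [gpi, Measure.pi_pi]

lemma copy_bound {P : Type*} [Fintype P] (B E : Set (P → ℝ)) (hB : MeasurableSet B) 
    (hEh : gpi P E ≤ 1/2) (b : ℝ) (hb : 0 ≤ b)
    (H : ∀ M : ℕ, ((gpi (Fin M × P)).prod (gaussianReal 0 1))
      {x | (∃ i, (fun c => x.1 (i, c)) ∈ B) ∧ x.2 ≤ 2} ≤
      ((gpi (Fin M)).prod (gpi P)) {x | (∃ i, x.1 i ≤ -b) ∨ x.2 ∈ E}) :
    (gpi P).real B ≤ 24 * Real.exp (-(b ^ 2 / 2)) := by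
  refine copy_num measureReal_nonneg measureReal_le_one (Real.exp_pos _).le fun M => ?_
  have h0 := H M
  set U : Set (Fin M × P → ℝ) := {x | ∃ i, (fun c => x (i, c)) ∈ B} with hU
  have hUm : MeasurableSet U := by
    rw [hU, Set.ofPred_exists]
    exact MeasurableSet.iUnion fun i => hB.preimage (by fun_prop)
  have hUc : gpi (Fin M × P) Uᶜ = (gpi P Bᶜ) ^ M := by
    rw [← (gpi_uncurry (Fin M) P).measure_preimage hUm.compl.nullMeasurableSet]
    have : (fun (x : Fin M → P → ℝ) (k : Fin M × P) => x k.1 k.2) ⁻¹' Uᶜ =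
        Set.univ.pi fun _ => Bᶜ := by
      ext x; simp [hU]
    rw [this, Measure.pi_pi]; simp
  have e1 : {x : (Fin M × P → ℝ) × ℝ | (∃ i, (fun c => x.1 (i, c)) ∈ B) ∧ x.2 ≤ 2} = U ×ˢ Set.Iic 2 := by
    ext x; simp [hU]
  rw [e1, Measure.prod_prod] at h0
  have h1 : ((gpi (Fin M)).prod (gpi P)) {x | (∃ i, x.1 i ≤ -b) ∨ x.2 ∈ E} ≤
      M * gaussianReal 0 1 (Set.Iic (-b)) + 1/2 := by
    have hsub : {x : (Fin M → ℝ) × (P → ℝ) | (∃ i, x.1 i ≤ -b) ∨ x.2 ∈ E} ⊆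
      (⋃ i, {g : Fin M → ℝ | g i ≤ -b}) ×ˢ Set.univ ∪ Set.univ ×ˢ E := by
      rintro x (⟨i, hi⟩ | hx)
      · left; exact ⟨Set.mem_iUnion.2 ⟨i, hi⟩, trivial⟩
      · right; exact ⟨trivial, hx⟩
    refine (measure_mono hsub).trans ((measure_union_le _ _).trans ?_)
    rw [Measure.prod_prod, Measure.prod_prod, measure_univ, measure_univ, mul_one, one_mul]
    refine add_le_add ((measure_iUnion_le _).trans ?_) hEh
    rw [tsum_fintype]
    have : ∀ i : Fin M, gpi (Fin M) {g : Fin M → ℝ | g i ≤ -b} = gaussianReal 0 1 (Set.Iic (-b)) := by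
      intro i
      have mp := measurePreserving_eval (fun _ : Fin M => gaussianReal 0 1) i
      rw [← mp.measure_preimage measurableSet_Iic.nullMeasurableSet]
      rfl
    simp [this]
  have h2 := h0.trans h1
  have h3 := ENNReal.toReal_mono (by
    refine ENNReal.add_ne_top.2 ⟨ENNReal.mul_ne_top (by simp) (measure_ne_top _ _), by norm_num⟩) h2
  rw [ENNReal.toReal_mul, ENNReal.toReal_add (ENNReal.mul_ne_top (by simp) (measure_ne_top _ _)) (by norm_num),
    ENNReal.toReal_mul] at h3
  have h4 : (gpi (Fin M × P) U).toReal = 1 - (1 - (gpi P).real B) ^ M := by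
    have := probReal_compl_eq_one_sub (μ := gpi (Fin M × P)) hUm
    have h5 : (gpi (Fin M × P)).real Uᶜ = (1 - (gpi P).real B) ^ M := by
      rw [← probReal_compl_eq_one_sub hB, Measure.real, hUc, ENNReal.toReal_pow]; rfl
    have : (gpi (Fin M × P)).real U = 1 - (1 - (gpi P).real B) ^ M := by linarith
    exact this
  rw [h4] at h3
  have h5 : (0:ℝ) ≤ 1 - (1 - (gpi P).real B) ^ M := by rw [← h4]; positivity
  have h6 := g_le_two
  have h7 := g_tail_neg hb
  have h8 : (gaussianReal 0 1 (Set.Iic (-b))).toReal ≤ Real.exp (-(b^2/2)) := h7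
  have h9 : (6/7 : ℝ) ≤ (gaussianReal 0 1 (Set.Iic 2)).toReal := h6
  have h10 : (1 - (1 - (gpi P).real B) ^ M) * (6/7) ≤ (1 - (1 - (gpi P).real B) ^ M) * (gaussianReal 0 1 (Set.Iic 2)).toReal := by
    gcongr
  have h11 : (M:ℝ) * (gaussianReal 0 1 (Set.Iic (-b))).toReal ≤ M * Real.exp (-(b^2/2)) := by gcongr
  simp at h3
  norm_num at h3 h10 ⊢
  linarith

def LL {P W : Type*} [Fintype P] (w : W → P → ℝ) (c : W → ℝ) (x : ℝ) : Set (P → ℝ) :=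
  {h | ∀ i, ∑ k, w i k * h k - c i ≤ x}

lemma LL_meas {P W : Type*} [Fintype P] [Countable W] (w : W → P → ℝ) (c : W → ℝ) (x : ℝ) :
    MeasurableSet (LL w c x) := by
  rw [LL, Set.ofPred_forall]
  exact MeasurableSet.iInter fun i => measurableSet_le (by fun_prop) measurable_const

lemma LL_mono {P W : Type*} [Fintype P] (w : W → P → ℝ) (c : W → ℝ) {x y : ℝ} (h : x ≤ y) :
    LL w c x ⊆ LL w c y := fun _ hh i => (hh i).trans h

lemma LL_median {P W : Type*} [Fintype P] [Countable W] [Nonempty W] (w : W → P → ℝ) (c : W → ℝ) (R : ℝ)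
    (hR : ∀ i, nr (w i) ≤ R) (hc : ∀ i, 0 ≤ c i) :
    ∃ x0, (∀ x < x0, gpi P (LL w c x) ≤ 1/2) ∧ (∀ x > x0, 1/2 ≤ gpi P (LL w c x)) := by
  set S := {x | gpi P (LL w c x) < 1/2} with hS
  have hlow : ∃ x, x ∈ S := by
    have hd : Filter.Tendsto (fun n : ℕ => gpi P (LL w c (-(n:ℝ)))) Filter.atTop
        (nhds (gpi P (⋂ n : ℕ, LL w c (-(n:ℝ))))) := by
      refine tendsto_measure_iInter_atTop (fun n => (LL_meas w c _).nullMeasurableSet) ?_ ⟨0, measure_ne_top _ _⟩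
      intro n m hnm
      exact LL_mono w c (by simpa using hnm)
    have he : (⋂ n : ℕ, LL w c (-(n:ℝ))) = ∅ := by
      ext h
      simp only [Set.mem_iInter, Set.mem_empty_iff_false, iff_false]
      intro hh
      obtain ⟨i⟩ := ‹Nonempty W›
      obtain ⟨n, hn⟩ := exists_nat_gt (-(∑ k, w i k * h k - c i))
      have := hh n i
      linarith
    rw [he, measure_empty] at hd
    obtain ⟨n, hn⟩ := (hd.eventually (gt_mem_nhds (show (0:ENNReal) < 1/2 by norm_num))).exists
    exact ⟨_, hn⟩
  have hup : ∃ x, x ∉ S := by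
    have hd : Filter.Tendsto (fun n : ℕ => gpi P (LL w c (n:ℝ))) Filter.atTop
        (nhds (gpi P (⋃ n : ℕ, LL w c (n:ℝ)))) := by
      refine tendsto_measure_iUnion_atTop ?_
      intro n m hnm
      exact LL_mono w c (by simpa using hnm)
    have he : (⋃ n : ℕ, LL w c (n:ℝ)) = Set.univ := by
      ext h
      simp only [Set.mem_iUnion, Set.mem_univ, iff_true]
      obtain ⟨n, hn⟩ := exists_nat_gt (R * nr h)
      refine ⟨n, fun i => ?_⟩
      have h1 := dot_le_nr (w i) h
      have h2 := mul_le_mul_of_nonneg_right (hR i) (nr_nonneg h)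
      have := hc i
      linarith
    rw [he, measure_univ] at hd
    obtain ⟨n, hn⟩ := (hd.eventually (lt_mem_nhds (show (1/2:ENNReal) < 1 by
      rw [one_div]; exact ENNReal.one_half_lt_one))).exists
    exact ⟨_, fun h => absurd hn (not_lt.2 (le_of_lt h))⟩
  have hdc : ∀ x y, x ≤ y → y ∈ S → x ∈ S := fun x y hxy hy =>
    lt_of_le_of_lt (measure_mono (LL_mono w c hxy)) hy
  obtain ⟨u, hu⟩ := hup
  have hbdd : BddAbove S := ⟨u, fun x hx => by
    by_contra h
    exact hu (hdc u x (not_le.1 h).le hx)⟩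
  refine ⟨sSup S, fun x hx => ?_, fun x hx => ?_⟩
  · obtain ⟨y, hy, hxy⟩ := exists_lt_of_lt_csSup hlow hx
    exact le_of_lt (hdc x y hxy.le hy)
  · by_contra h
    exact absurd (le_csSup hbdd (show x ∈ S from not_le.1 h)) (not_le.2 hx)

lemma nr_single {ι : Type*} [Fintype ι] [DecidableEq ι] (i : ι) : nr (Pi.single i (1:ℝ)) = 1 := by
  simp [nr, Pi.single_apply]

lemma V_conc {P W : Type*} [Fintype P] [Countable W] [Nonempty W] (w : W → P → ℝ) (c : W → ℝ) (R : ℝ)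
    (hR0 : 0 < R) (hR : ∀ i, nr (w i) ≤ R) (hc : ∀ i, 0 ≤ c i) :
    ∃ x0 : ℝ, ∀ a : ℝ, 4 * R ≤ a →
      (gpi P).real (LL w c (x0 - a)) ≤ 24 * Real.exp (-((a / R - 4) ^ 2 / 2)) ∧
      (gpi P).real (LL w c (x0 + a))ᶜ ≤ 24 * Real.exp (-((a / R - 4) ^ 2 / 2)) := by
  obtain ⟨x0, hlo, hhi⟩ := LL_median w c R hR hc
  refine ⟨x0, fun a ha => ?_⟩
  have hb : 0 ≤ a / R - 4 := by
    rw [sub_nonneg, le_div_iff₀ hR0]; linarith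
  have hbR : (a / R - 4) * R = a - 4 * R := by field_simp
  set b := a / R - 4 with hbdef
  have hw0 : ∀ i, 0 ≤ nr (w i) := fun i => nr_nonneg _
  constructor
  · refine copy_bound _ (LL w c (x0 - R/2)) (LL_meas w c _) (hlo _ (by linarith)) b hb fun M => ?_
    have G := gordon_bilin (I := Fin M) (J := W) (P := P) (Q := Fin M)
      (fun _ j => c j + x0 - a + 3 * R) (fun _ j => w j) (fun i _ => Pi.single i 1) (fun i => Or.inr fun _ _ => rfl)
    refine le_trans (measure_mono ?_) (G.trans (measure_mono ?_))
    · rintro ⟨A, γ⟩ ⟨⟨i, hi⟩, hγ⟩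
      refine ⟨i, fun j => ?_⟩
      have h1 := hi j
      rw [bilin_mv]
      simp only [nr_single, Pi.single_apply, ite_mul, one_mul, zero_mul, Finset.sum_ite_eq', Finset.mem_univ, if_true, mv] at h1 ⊢
      have hγ : γ ≤ 2 := hγ
      have h2 : nr (w j) * γ ≤ nr (w j) * 2 := by gcongr; exact hw0 j
      have h3 := hR j
      have h4 : ∑ c, A (i,c) * w j c = ∑ c, w j c * A (i,c) := by simp only [mul_comm]
      rw [mul_one, h4]
      linarith
    · rintro ⟨g, h⟩ ⟨i, hi⟩
      by_cases hg : g i ≤ -b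
      · exact Or.inl ⟨i, hg⟩
      · right
        intro j
        have h1 := hi j
        simp only [nr_single, Pi.single_apply, ite_mul, one_mul, zero_mul, Finset.sum_ite_eq', Finset.mem_univ, if_true] at h1
        have h2 : nr (w j) * (-b) ≤ nr (w j) * g i := by gcongr; exact hw0 j; linarith
        have h3 : nr (w j) * b ≤ R * b := by gcongr; exact hR j
        show ∑ k, w j k * h k - c j ≤ x0 - R/2
        linarith
  · refine copy_bound _ (LL w c (x0 + R/2))ᶜ (LL_meas w c _).compl ?_ b hb fun M => ?_
    · have h1 := hhi (x0 + R/2) (by linarith)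
      rw [prob_compl_eq_one_sub (LL_meas w c _)]
      refine (tsub_le_tsub_left h1 1).trans ?_
      rw [one_div, ENNReal.one_sub_inv_two]
    have G := gordon_bilin (I := Fin M × W) (J := Unit) (P := P) (Q := Fin M)
      (fun k _ => -(c k.2 + x0 + a) + 2 * R) (fun k _ => -w k.2) (fun k _ => Pi.single k.1 1)
      (fun i => Or.inr fun _ _ => rfl)
    refine le_trans (measure_mono ?_) (G.trans (measure_mono ?_))
    · rintro ⟨A, γ⟩ ⟨⟨i, hi⟩, hγ⟩
      simp only [LL, Set.mem_compl_iff, Set.mem_ofPred_eq, not_forall, not_le] at hi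
      obtain ⟨j, hj⟩ := hi
      refine ⟨(i, j), fun _ => ?_⟩
      rw [bilin_mv]
      simp only [nr_single, nr_neg, Pi.single_apply, ite_mul, one_mul, zero_mul, Finset.sum_ite_eq', Finset.mem_univ, if_true, mv]
      have hγ : γ ≤ 2 := hγ
      have h2 : nr (w j) * γ ≤ nr (w j) * 2 := by gcongr; exact hw0 j
      have h3 := hR j
      have h4 : ∑ c, A (i,c) * (-w j) c = -∑ c, w j c * A (i,c) := by
        rw [← Finset.sum_neg_distrib]
        exact Finset.sum_congr rfl fun _ _ => by simp; ring
      rw [mul_one, h4]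
      linarith
    · rintro ⟨g, h⟩ ⟨⟨i, j⟩, hij⟩
      by_cases hg : g i ≤ -b
      · exact Or.inl ⟨i, hg⟩
      · right
        intro hcon
        have h0 : ∑ k, w j k * h k - c j ≤ x0 + R/2 := hcon j
        have h1 := hij ()
        simp only [nr_single, nr_neg, Pi.neg_apply, neg_mul, Finset.sum_neg_distrib, Pi.single_apply, ite_mul, one_mul, zero_mul, Finset.sum_ite_eq', Finset.mem_univ, if_true] at h1
        have h2 : nr (w j) * (-b) ≤ nr (w j) * g i := by gcongr; exact hw0 j; linarith
        have h3 : nr (w j) * b ≤ R * b := by gcongr; exact hR j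
        linarith

lemma int_exp_f {f : ℝ → ℝ} {C s : ℝ} (hf : Measurable f) (hb : ∀ x, |f x| ≤ C * (1 + x ^ 2))
    (hs : |s| * C ≤ 1/4) : Integrable (fun x => Real.exp (s * f x)) (gaussianReal 0 1) := by
  rw [integrable_g01]
  refine Integrable.mono' ((int_exp_sq (a := 1/4) (by norm_num)).const_mul (Real.exp (1/4))) ?_ ?_
  · exact ((Real.measurable_exp.comp (hf.const_mul s)).mul (by fun_prop)).aestronglyMeasurable
  · refine ae_of_all _ fun x => ?_
    rw [Real.norm_eq_abs, abs_of_nonneg (by positivity), ← Real.exp_add, ← Real.exp_add]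
    apply Real.exp_le_exp.2
    have h1 : s * f x ≤ |s| * (C * (1 + x ^ 2)) := by
      calc s * f x ≤ |s * f x| := le_abs_self _
        _ = |s| * |f x| := abs_mul _ _
        _ ≤ _ := by gcongr; exact hb x
    nlinarith [sq_nonneg x]

lemma chern1 {f : ℝ → ℝ} {C : ℝ} (hC : 0 < C) (hf : Measurable f) (hb : ∀ x, |f x| ≤ C * (1 + x ^ 2))
    (μ0 : ℝ) (hμ : ∫ x, f x ∂(gaussianReal 0 1) = μ0) {δ : ℝ} (hδ : 0 < δ) :
    ∃ c > 0, ∀ (κ : Type) [Fintype κ] (S : Finset κ) (N : ℝ), (S.card : ℝ) ≤ N →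
      (gpi κ).real {h | δ * N ≤ ∑ i ∈ S, (f (h i) - μ0)} ≤ Real.exp (-(c * N)) := by
  classical
  set X : ℝ → ℝ := fun x => f x - μ0 with hX
  have hint : ∀ s, |s| ≤ 1/(4 * C) → Integrable (fun x => Real.exp (s * X x)) (gaussianReal 0 1) := by
    intro s hs
    have h1 := int_exp_f (s := s) hf hb (by
      rw [le_div_iff₀ (by positivity)] at hs; linarith)
    have := h1.mul_const (Real.exp (-(s * μ0)))
    refine this.congr (ae_of_all _ fun x => ?_)
    simp only [hX, ← Real.exp_add]; congr 1; ring
  have hfint : Integrable f (gaussianReal 0 1) := by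
    rw [integrable_g01]
    have h0 : Integrable fun x : ℝ => x ^ 2 * Real.exp (-(1/2 * x ^ 2)) := by
      have := integrable_rpow_mul_exp_neg_mul_sq (b := 1/2) (by norm_num) (s := 2) (by norm_num)
      simpa using this
    have h1 := int_exp_sq (a := 1/2) (by norm_num)
    refine Integrable.mono' ((h1.add h0).const_mul C) ?_ ?_
    · exact (hf.mul (by fun_prop)).aestronglyMeasurable
    · refine ae_of_all _ fun x => ?_
      rw [norm_mul, Real.norm_eq_abs, Real.norm_eq_abs, Real.abs_exp]
      have := mul_le_mul_of_nonneg_right (hb x) (Real.exp_pos (-(x^2/2))).le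
      simp only [Pi.add_apply]
      have e : -(1/2 * x^2) = -(x^2/2) := by ring
      rw [e]; nlinarith
  have hmean : ∫ x, X x ∂(gaussianReal 0 1) = 0 := by
    simp only [hX]
    rw [integral_sub hfint (integrable_const _), hμ]; simp
  have h0 : (0:ℝ) ∈ interior (integrableExpSet X (gaussianReal 0 1)) := by
    rw [mem_interior]
    refine ⟨Set.Ioo (-(1/(4*C))) (1/(4*C)), ?_, isOpen_Ioo, ?_⟩
    · intro s hs
      exact hint s (abs_le.2 ⟨hs.1.le, hs.2.le⟩)
    · have : 0 < 1/(4*C) := by positivity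
      exact ⟨by linarith, this⟩
  have hd := hasDerivAt_mgf h0
  simp only [zero_mul, Real.exp_zero, mul_one] at hd
  rw [hmean] at hd
  have hsmall : ∃ s > 0, |s| ≤ 1/(4*C) ∧ mgf X (gaussianReal 0 1) s ≤ 1 + s * (δ / 2) := by
    have h1 := hd.isLittleO
    have h2 := h1.def (c := δ/2) (by positivity)
    have h3 : ∀ᶠ s in nhdsWithin (0:ℝ) (Set.Ioi 0), s < 1/(4*C) :=
      nhdsWithin_le_nhds (gt_mem_nhds (by positivity))
    have h2' : ∀ᶠ s in nhdsWithin (0:ℝ) (Set.Ioi 0), ‖mgf X (gaussianReal 0 1) s - mgf X (gaussianReal 0 1) 0 - (s - 0) • (0:ℝ)‖ ≤ δ / 2 * ‖s - 0‖ :=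
      nhdsWithin_le_nhds h2
    obtain ⟨s, ⟨hs1, hs2⟩, hs3⟩ := ((h2'.and h3).and self_mem_nhdsWithin).exists
    have hs3 : 0 < s := hs3
    refine ⟨s, hs3, by rw [abs_of_pos hs3]; exact hs2.le, ?_⟩
    simp only [sub_zero, smul_zero, Real.norm_eq_abs, abs_of_pos hs3, mgf_zero] at hs1
    have := (le_abs_self _).trans hs1
    simp at this
    linarith
  obtain ⟨s, hs, hsC, hsm⟩ := hsmall
  refine ⟨s * (δ / 2), by positivity, ?_⟩
  intro κ _ S N hSN
  set F : κ → ℝ → ℝ := fun i x => if i ∈ S then Real.exp (s * X x) else 1 with hF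
  have hprod : ∀ h : κ → ℝ, Real.exp (s * ∑ i ∈ S, X (h i)) = ∏ i, F i (h i) := by
    intro h
    simp only [hF]
    rw [Finset.prod_ite_mem, Finset.univ_inter, ← Real.exp_sum, Finset.mul_sum]
  have hFi : ∀ i, Integrable (F i) (gaussianReal 0 1) := by
    intro i
    simp only [hF]
    split_ifs
    · exact hint s hsC
    · exact integrable_const _
  have hI : Integrable (fun h : κ → ℝ => Real.exp (s * ∑ i ∈ S, X (h i))) (gpi κ) := by
    simp only [hprod]
    exact Integrable.fintype_prod hFi
  have hm := measure_ge_le_exp_mul_mgf (X := fun h : κ → ℝ => ∑ i ∈ S, X (h i)) (μ := gpi κ) (δ * N) hs.le hI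
  have hmgf : mgf (fun h : κ → ℝ => ∑ i ∈ S, X (h i)) (gpi κ) s ≤ Real.exp (s * (δ/2) * N) := by
    unfold mgf
    simp only [hprod]
    unfold gpi
    rw [integral_fintype_prod_eq_prod]
    have e : ∀ i, ∫ x, F i x ∂(gaussianReal 0 1) = if i ∈ S then mgf X (gaussianReal 0 1) s else 1 := by
      intro i
      simp only [hF]
      split_ifs
      · rfl
      · simp
    simp only [e]
    rw [Finset.prod_ite_mem, Finset.univ_inter, Finset.prod_const]
    have h1 : mgf X (gaussianReal 0 1) s ≤ Real.exp (s * (δ/2)) := by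
      linarith [Real.add_one_le_exp (s * (δ/2))]
    calc _ ≤ Real.exp (s * (δ/2)) ^ S.card := pow_le_pow_left₀ mgf_nonneg h1 _
      _ = Real.exp (S.card * (s * (δ/2))) := by rw [← Real.exp_nat_mul]
      _ ≤ _ := by
        apply Real.exp_le_exp.2
        rw [mul_comm]
        gcongr
  refine hm.trans ?_
  calc _ ≤ Real.exp (-s * (δ * N)) * Real.exp (s * (δ/2) * N) := by gcongr
    _ = _ := by rw [← Real.exp_add]; congr 1; ring

lemma chern {f : ℝ → ℝ} {C : ℝ} (hC : 0 < C) (hf : Measurable f) (hb : ∀ x, |f x| ≤ C * (1 + x ^ 2))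
    (μ0 : ℝ) (hμ : ∫ x, f x ∂(gaussianReal 0 1) = μ0) {δ : ℝ} (hδ : 0 < δ) :
    ∃ c > 0, ∀ (κ : Type) [Fintype κ] (S : Finset κ) (N : ℝ), (S.card : ℝ) ≤ N →
      (gpi κ).real {h | δ * N ≤ |∑ i ∈ S, f (h i) - S.card * μ0|} ≤ 2 * Real.exp (-(c * N)) := by
  obtain ⟨c1, hc1, h1⟩ := chern1 hC hf hb μ0 hμ hδ
  obtain ⟨c2, hc2, h2⟩ := chern1 (f := fun x => -f x) hC hf.neg (by simpa using hb) (-μ0)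
    (by rw [integral_neg, hμ]) hδ
  refine ⟨min c1 c2, lt_min hc1 hc2, fun κ _ S N hN => ?_⟩
  have hN0 : 0 ≤ N := le_trans (Nat.cast_nonneg _) hN
  have hsub : {h : κ → ℝ | δ * N ≤ |∑ i ∈ S, f (h i) - S.card * μ0|} ⊆
    {h | δ * N ≤ ∑ i ∈ S, (f (h i) - μ0)} ∪ {h | δ * N ≤ ∑ i ∈ S, (-f (h i) - -μ0)} := by
    intro h hh
    have hh : δ * N ≤ |∑ i ∈ S, f (h i) - S.card * μ0| := hh
    rcases le_abs.1 hh with h' | h'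
    · left; simpa [Finset.sum_sub_distrib] using h'
    · right
      have e : ∑ i ∈ S, (-f (h i) - -μ0) = -(∑ i ∈ S, f (h i) - S.card * μ0) := by
        simp [Finset.sum_sub_distrib, Finset.sum_add_distrib]; ring
      show δ * N ≤ ∑ i ∈ S, (-f (h i) - -μ0)
      rw [e]; exact h'
  refine (measureReal_mono hsub).trans ((measureReal_union_le _ _).trans ?_)
  have a1 := h1 κ S N hN
  have a2 := h2 κ S N hN
  have b1 : Real.exp (-(c1 * N)) ≤ Real.exp (-(min c1 c2 * N)) := by
    apply Real.exp_le_exp.2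
    have := mul_le_mul_of_nonneg_right (min_le_left c1 c2) hN0
    linarith
  have b2 : Real.exp (-(c2 * N)) ≤ Real.exp (-(min c1 c2 * N)) := by
    apply Real.exp_le_exp.2
    have := mul_le_mul_of_nonneg_right (min_le_right c1 c2) hN0
    linarith
  linarith

noncomputable def gph (x : ℝ) : ℝ := Real.exp (-(x ^ 2 / 2))
noncomputable def tailT (l : ℝ) : ℝ := ∫ x in Set.Ioi l, gph x
noncomputable def st (l x : ℝ) : ℝ := max (|x| - l) 0

lemma gph_int0 : Integrable gph := by
  have := int_exp_sq (a := 1/2) (by norm_num)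
  refine this.congr (ae_of_all _ fun x => ?_)
  unfold gph; congr 1; ring

lemma gph_int1 : Integrable fun x => x * gph x := by
  have := integrable_g01.1 integrable_id_g01
  exact this

lemma gph_int2 : Integrable fun x => x ^ 2 * gph x := by
  have := integrable_rpow_mul_exp_neg_mul_sq (b := 1/2) (by norm_num) (s := 2) (by norm_num)
  refine this.congr (ae_of_all _ fun x => ?_)
  simp only [gph, Real.rpow_two]
  congr 2; ring

lemma gph_deriv (x : ℝ) : HasDerivAt gph (-(x * gph x)) x := by
  unfold gph
  have : HasDerivAt (fun x : ℝ => -(x ^ 2 / 2)) (-x) x := by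
    have := ((hasDerivAt_pow 2 x).div_const 2).neg
    refine this.congr_deriv ?_
    simp
  refine this.exp.congr_deriv ?_
  ring

lemma xgph_deriv (x : ℝ) : HasDerivAt (fun x => x * gph x) (gph x - x ^ 2 * gph x) x := by
  refine ((hasDerivAt_id x).mul (gph_deriv x)).congr_deriv ?_
  simp; ring

lemma gph_tend : Filter.Tendsto gph Filter.atTop (nhds 0) :=
  tendsto_zero_of_hasDerivAt_of_integrableOn_Ioi (a := 0) (fun x _ => gph_deriv x)
    gph_int1.neg.integrableOn gph_int0.integrableOn

lemma xgph_tend : Filter.Tendsto (fun x => x * gph x) Filter.atTop (nhds 0) :=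
  tendsto_zero_of_hasDerivAt_of_integrableOn_Ioi (a := 0) (fun x _ => xgph_deriv x)
    (gph_int0.sub gph_int2).integrableOn gph_int1.integrableOn

lemma int_x_gph (l : ℝ) : ∫ x in Set.Ioi l, x * gph x = gph l := by
  have := integral_Ioi_of_hasDerivAt_of_tendsto' (a := l) (f := fun x => -gph x) (f' := fun x => x * gph x)
    (m := 0) (fun x _ => by simpa using (gph_deriv x).fun_neg) gph_int1.integrableOn (by simpa using gph_tend.neg)
  simpa using this

lemma int_x2_gph (l : ℝ) : ∫ x in Set.Ioi l, x ^ 2 * gph x = l * gph l + tailT l := by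
  have := integral_Ioi_of_hasDerivAt_of_tendsto' (a := l) (f := fun x => -(x * gph x))
    (f' := fun x => x ^ 2 * gph x - gph x)
    (m := 0) (fun x _ => by simpa using (xgph_deriv x).fun_neg) (gph_int2.sub gph_int0).integrableOn
    (by simpa using xgph_tend.neg)
  rw [integral_sub gph_int2.integrableOn gph_int0.integrableOn] at this
  unfold tailT; linarith

lemma even_int (l : ℝ) (hl : 0 ≤ l) (F : ℝ → ℝ) (hF : F 0 = 0) :
    ∫ x, F (st l x) ∂(gaussianReal 0 1) =
      2 * (Real.sqrt (2 * Real.pi))⁻¹ * ∫ x in Set.Ioi l, F (x - l) * gph x := by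
  rw [integral_g01]
  have := integral_comp_abs (f := fun x => F (max (x - l) 0) * gph x)
  have e : ∀ x, F (st l x) * Real.exp (-(x ^ 2 / 2)) = F (max (|x| - l) 0) * gph |x| := by
    intro x; simp [st, gph]
  simp only [e, this]
  have : ∫ x in Set.Ioi 0, F (max (x - l) 0) * gph x = ∫ x in Set.Ioi l, F (x - l) * gph x := by
    rw [setIntegral_eq_of_subset_of_forall_sdiff_eq_zero measurableSet_Ioi (Set.Ioi_subset_Ioi hl)]
    · refine setIntegral_congr_fun measurableSet_Ioi fun x hx => ?_
      have hx : l < x := hx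
      rw [max_eq_left (by linarith)]
    · rintro x ⟨_, hx⟩
      have hx : x ≤ l := not_lt.1 hx
      rw [max_eq_right (by linarith), hF, zero_mul]
  rw [this]; ring

lemma mean1 (l : ℝ) (hl : 0 ≤ l) : ∫ x, st l x ∂(gaussianReal 0 1) =
    2 * (Real.sqrt (2 * Real.pi))⁻¹ * (gph l - l * tailT l) := by
  rw [even_int l hl (fun x => x) rfl]
  congr 1
  simp only [sub_mul]
  rw [integral_sub gph_int1.integrableOn (gph_int0.const_mul l).integrableOn, int_x_gph, integral_const_mul]
  rfl

lemma mean2 (l : ℝ) (hl : 0 ≤ l) : ∫ x, st l x ^ 2 ∂(gaussianReal 0 1) =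
    2 * (Real.sqrt (2 * Real.pi))⁻¹ * ((1 + l ^ 2) * tailT l - l * gph l) := by
  rw [even_int l hl (fun x => x ^ 2) (by norm_num)]
  congr 1
  have e : ∀ x, (x - l) ^ 2 * gph x = x ^ 2 * gph x - 2 * l * (x * gph x) + l ^ 2 * gph x := fun x => by ring
  simp only [e]
  have h0 := integral_add (μ := volume.restrict (Set.Ioi l)) (f := fun x => x ^ 2 * gph x - 2 * l * (x * gph x))
    (g := fun x => l ^ 2 * gph x)
    (Integrable.restrict (gph_int2.sub (gph_int1.const_mul (2 * l)))) (gph_int0.const_mul _).integrableOn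
  rw [h0, integral_sub gph_int2.integrableOn (gph_int1.const_mul _).integrableOn, int_x2_gph, integral_const_mul,
    integral_const_mul, int_x_gph]
  change _ - _ + l ^ 2 * tailT l = _
  ring

lemma tail_zero : tailT 0 = Real.sqrt (2 * Real.pi) / 2 := by
  have := integral_gaussian_Ioi (1/2)
  unfold tailT gph
  have e : ∀ x : ℝ, -(x ^ 2 / 2) = -(1/2) * x ^ 2 := fun x => by ring
  simp only [e, this]
  congr 2; ring

lemma mean_sq : ∫ x, x ^ 2 ∂(gaussianReal 0 1) = 1 := by
  have h := mean2 0 le_rfl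
  have e : ∀ x, st 0 x ^ 2 = x ^ 2 := fun x => by simp [st]
  simp only [e] at h
  rw [h, tail_zero]
  have : Real.sqrt (2 * Real.pi) ≠ 0 := by positivity
  field_simp; ring

lemma mean_id : ∫ x, x ∂(gaussianReal 0 1) = 0 := by simp

lemma tail_erf (t : ℝ) : 2 * (Real.sqrt (2 * Real.pi))⁻¹ * tailT (Real.sqrt 2 * t) =
    1 - (2 / Real.sqrt Real.pi) * ∫ s in (0 : ℝ)..t, Real.exp (-s ^ 2) := by
  have h1 := intervalIntegral.integral_interval_add_Ioi (μ := volume) (f := gph) (a := 0) (b := Real.sqrt 2 * t)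
    gph_int0.integrableOn gph_int0.integrableOn
  have h2 : Real.sqrt 2 * ∫ s in (0 : ℝ)..t, Real.exp (-s ^ 2) = ∫ x in (0:ℝ)..(Real.sqrt 2 * t), gph x := by
    have := intervalIntegral.mul_integral_comp_mul_left (f := gph) (a := 0) (b := t) (Real.sqrt 2)
    rw [mul_zero] at this
    rw [← this]
    congr 2; ext s
    unfold gph
    rw [mul_pow, Real.sq_sqrt (by norm_num)]
    congr 1; ring
  have h3 := tail_zero
  unfold tailT at h3 ⊢
  have h4 : ∫ x in Set.Ioi (Real.sqrt 2 * t), gph x = Real.sqrt (2 * Real.pi) / 2 -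
    Real.sqrt 2 * ∫ s in (0 : ℝ)..t, Real.exp (-s ^ 2) := by linarith
  rw [h4, Real.sqrt_mul (by norm_num)]
  have : Real.sqrt Real.pi ≠ 0 := by positivity
  have : Real.sqrt 2 ≠ 0 := by positivity
  field_simp

lemma means {αw βw t : ℝ} (hβ1 : βw < 1) (ht : 0 ≤ t)
    (herf : (2 / Real.sqrt Real.pi) * ∫ s in (0 : ℝ)..t, Real.exp (-s ^ 2)
      = (1 - αw) / (1 - βw))
    (hchar : (1 - βw) * Real.sqrt (2 / Real.pi) * Real.exp (-t ^ 2)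
      = αw * (Real.sqrt 2 * t)) :
    (1 - βw) * (∫ x, st (Real.sqrt 2 * t) x ∂(gaussianReal 0 1)) = βw * (Real.sqrt 2 * t) ∧
    (1 - βw) * (∫ x, st (Real.sqrt 2 * t) x ^ 2 ∂(gaussianReal 0 1)) =
      αw - βw * (1 + (Real.sqrt 2 * t) ^ 2) := by
  have hl : 0 ≤ Real.sqrt 2 * t := by positivity
  have h1 := tail_erf t
  rw [herf] at h1
  have h2 : gph (Real.sqrt 2 * t) = Real.exp (-t^2) := by
    unfold gph; rw [mul_pow, Real.sq_sqrt (by norm_num)]; congr 1; ring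
  have h3 : Real.sqrt (2 / Real.pi) = 2 * (Real.sqrt (2 * Real.pi))⁻¹ := by
    rw [Real.sqrt_div (by norm_num), Real.sqrt_mul (by norm_num)]
    have : Real.sqrt Real.pi ≠ 0 := by positivity
    have : Real.sqrt 2 ≠ 0 := by positivity
    field_simp
    rw [Real.sq_sqrt (by norm_num)]
  rw [h3, ← h2] at hchar
  have h4 : (1 - βw) * (2 * (Real.sqrt (2 * Real.pi))⁻¹ * tailT (Real.sqrt 2 * t)) = αw - βw := by
    rw [h1]
    have : 1 - βw ≠ 0 := by linarith
    field_simp; ring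
  rw [mean1 _ hl, mean2 _ hl]
  set l := Real.sqrt 2 * t
  set Z := 2 * (Real.sqrt (2 * Real.pi))⁻¹
  constructor
  · linear_combination hchar - l * h4
  · linear_combination (1 + l^2) * h4 - l * hchar

lemma st_nonneg (l x : ℝ) : 0 ≤ st l x := le_max_right _ _

lemma st_abs_mul (l x : ℝ) (hl : 0 ≤ l) : |x| * st l x = st l x ^ 2 + l * st l x := by
  unfold st
  rcases le_total (|x| - l) 0 with h | h
  · rw [max_eq_right h]; simp
  · rw [max_eq_left h]; ring

lemma split_sum {ι : Type} [Fintype ι] [DecidableEq ι] (K : Finset ι) (f : ι → ℝ) :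
    ∑ i, f i = ∑ i ∈ K, f i + ∑ i ∈ Kᶜ, f i := (Finset.sum_add_sum_compl K f).symm

lemma split_if {ι : Type} [Fintype ι] [DecidableEq ι] (K : Finset ι) (f g : ι → ℝ) :
    ∑ i, (if i ∈ K then f i else g i) = ∑ i ∈ K, f i + ∑ i ∈ Kᶜ, g i := by
  rw [split_sum K]
  congr 1
  · exact Finset.sum_congr rfl fun i hi => if_pos hi
  · exact Finset.sum_congr rfl fun i hi => if_neg (Finset.mem_compl.1 hi)

lemma cone_up {ι : Type} [Fintype ι] [DecidableEq ι] (K : Finset ι) (l : ℝ) (hl : 0 ≤ l) (h w : ι → ℝ)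
    (hw : ∑ i ∈ K, w i + ∑ i ∈ Kᶜ, |w i| ≤ 0) :
    ∑ i, h i * w i ≤ nr w * Real.sqrt (∑ i ∈ K, (h i - l) ^ 2 + ∑ i ∈ Kᶜ, st l (h i) ^ 2) := by
  have h1 : ∑ i, h i * w i ≤ ∑ i ∈ K, (h i - l) * w i + ∑ i ∈ Kᶜ, st l (h i) * |w i| := by
    rw [split_sum K]
    have a : ∑ i ∈ K, h i * w i = ∑ i ∈ K, (h i - l) * w i + l * ∑ i ∈ K, w i := by
      rw [Finset.mul_sum, ← Finset.sum_add_distrib]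
      exact Finset.sum_congr rfl fun i _ => by ring
    have b : ∑ i ∈ Kᶜ, h i * w i ≤ ∑ i ∈ Kᶜ, st l (h i) * |w i| + l * ∑ i ∈ Kᶜ, |w i| := by
      rw [Finset.mul_sum, ← Finset.sum_add_distrib]
      refine Finset.sum_le_sum fun i _ => ?_
      have e1 : h i * w i ≤ |h i| * |w i| := by rw [← abs_mul]; exact le_abs_self _
      have e2 : |h i| ≤ st l (h i) + l := by
        have : |h i| - l ≤ st l (h i) := le_max_left _ _
        linarith
      nlinarith [abs_nonneg (w i)]
    nlinarith
  refine h1.trans ?_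
  have h2 := dot_le_nr (fun i => if i ∈ K then w i else |w i|) (fun i => if i ∈ K then h i - l else st l (h i))
  have e1 : nr (fun i => if i ∈ K then w i else |w i|) = nr w := by
    unfold nr; congr 1
    refine Finset.sum_congr rfl fun i _ => ?_
    by_cases hi : i ∈ K <;> simp [hi]
  have e2 : nr (fun i => if i ∈ K then h i - l else st l (h i)) =
      Real.sqrt (∑ i ∈ K, (h i - l) ^ 2 + ∑ i ∈ Kᶜ, st l (h i) ^ 2) := by
    unfold nr; congr 1
    rw [← split_if]
    refine Finset.sum_congr rfl fun i _ => ?_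
    by_cases hi : i ∈ K <;> simp [hi]
  rw [e1, e2] at h2
  refine le_trans (le_of_eq ?_) h2
  rw [← split_if]
  refine Finset.sum_congr rfl fun i _ => ?_
  split_ifs <;> ring

/-- all the deviations small -/
structure Devs {ι : Type} [Fintype ι] [DecidableEq ι] (K : Finset ι) (h : ι → ℝ) (β l αw η n : ℝ) : Prop where
  k : |(K.card : ℝ) - β * n| ≤ η * n
  t1 : |∑ i ∈ K, h i| ≤ η * n
  t2 : |∑ i ∈ K, h i ^ 2 - β * n| ≤ η * n
  t3 : |∑ i ∈ Kᶜ, st l (h i) - β * l * n| ≤ η * n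
  t4 : |∑ i ∈ Kᶜ, st l (h i) ^ 2 - (αw - β * (1 + l ^ 2)) * n| ≤ η * n

lemma sum_sq_shift {ι : Type} (K : Finset ι) (h : ι → ℝ) (l : ℝ) :
    ∑ i ∈ K, (h i - l) ^ 2 = ∑ i ∈ K, h i ^ 2 - 2 * l * ∑ i ∈ K, h i + K.card * l ^ 2 := by
  rw [Finset.mul_sum, ← nsmul_eq_mul, ← Finset.sum_const, ← Finset.sum_sub_distrib, ← Finset.sum_add_distrib]
  exact Finset.sum_congr rfl fun i _ => by ring

lemma dev_sq {ι : Type} [Fintype ι] [DecidableEq ι] (K : Finset ι) (h : ι → ℝ) (β l αw η n τ : ℝ)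
    (hl : 0 ≤ l) (hτ : 0 ≤ τ)
    (H : Devs K h β l αw η n) :
    ∑ i ∈ K, (h i - (l + τ)) ^ 2 + ∑ i ∈ Kᶜ, st l (h i) ^ 2 ≤
      (αw + 2 * τ * β * l + β * τ ^ 2 + η * (2 + 2 * (l + τ) + (l + τ) ^ 2)) * n := by
  rw [sum_sq_shift]
  have a1 := abs_le.1 H.t1
  have a2 := abs_le.1 H.t2
  have a4 := abs_le.1 H.t4
  have a0 := abs_le.1 H.k
  have b1 : (K.card : ℝ) * (l + τ) ^ 2 ≤ (β * n + η * n) * (l + τ) ^ 2 := by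
    have : (K.card : ℝ) ≤ β * n + η * n := by linarith
    gcongr
  have b2 : -(2 * (l + τ) * ∑ i ∈ K, h i) ≤ 2 * (l + τ) * (η * n) := by
    have : -(∑ i ∈ K, h i) ≤ η * n := by linarith
    have := mul_le_mul_of_nonneg_left this (by positivity : 0 ≤ 2 * (l + τ))
    linarith
  nlinarith

lemma dev_up {ι : Type} [Fintype ι] [DecidableEq ι] (K : Finset ι) (h : ι → ℝ) (β l αw η n δ : ℝ)
    (hl : 0 ≤ l) (hn : 0 ≤ n) (hαw : 0 < αw) (hδ : 0 < δ)
    (hη : η * (2 + 2 * l + l ^ 2) ≤ Real.sqrt αw * δ)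
    (H : Devs K h β l αw η n) (w : ι → ℝ) (hw : ∑ i ∈ K, w i + ∑ i ∈ Kᶜ, |w i| ≤ 0) :
    ∑ i, h i * w i ≤ (Real.sqrt αw + δ) * Real.sqrt n * nr w := by
  refine (cone_up K l hl h w hw).trans ?_
  rw [mul_comm]
  refine mul_le_mul_of_nonneg_right ?_ (nr_nonneg w)
  have := dev_sq K h β l αw η n 0 hl le_rfl H
  simp only [add_zero, mul_zero, zero_mul, zero_pow two_ne_zero] at this
  have hs := Real.sqrt_nonneg αw
  have hq := Real.sq_sqrt hαw.le
  have : ∑ i ∈ K, (h i - l) ^ 2 + ∑ i ∈ Kᶜ, st l (h i) ^ 2 ≤ (Real.sqrt αw + δ) ^ 2 * n := by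
    refine this.trans (mul_le_mul_of_nonneg_right ?_ hn)
    nlinarith
  refine (Real.sqrt_le_sqrt this).trans ?_
  rw [Real.sqrt_mul (by positivity), Real.sqrt_sq (by positivity)]

set_option maxHeartbeats 800000 in
lemma dev_dir {ι : Type} [Fintype ι] [DecidableEq ι] (K : Finset ι) (h : ι → ℝ) (β l αw η n δ τ : ℝ)
    (hl : 0 ≤ l) (hn : 0 < n) (hαw : 0 < αw) (hδ : 0 < δ) (hδ2 : δ ≤ Real.sqrt αw) (hη : 0 ≤ η)
    (hτ : 0 < τ) (hβ : 0 < β)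
    (h1 : η * (2 + 2 * (l + τ) + (l + τ) ^ 2) ≤ Real.sqrt αw * δ / 2)
    (h2 : η * (2 + l + τ) ≤ β * τ)
    (h3 : 2 * τ * β * l + β * τ ^ 2 ≤ Real.sqrt αw * δ / 2)
    (H : Devs K h β l αw η n) : ∃ w : ι → ℝ, (∑ i ∈ K, w i + ∑ i ∈ Kᶜ, |w i| ≤ 0) ∧ nr w = 1 ∧
      (Real.sqrt αw - δ) * Real.sqrt n ≤ ∑ i, h i * w i := by
  have hs : 0 < Real.sqrt αw := Real.sqrt_pos.2 hαw
  have hq := Real.sq_sqrt hαw.le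
  set s := Real.sqrt αw
  set d : ι → ℝ := fun i => if i ∈ K then h i - (l + τ) else (if 0 ≤ h i then 1 else -1) * st l (h i) with hd
  have a0 := abs_le.1 H.k
  have a1 := abs_le.1 H.t1
  have a2 := abs_le.1 H.t2
  have a3 := abs_le.1 H.t3
  have a4 := abs_le.1 H.t4
  have dcone : ∑ i ∈ K, d i + ∑ i ∈ Kᶜ, |d i| ≤ 0 := by
    have e1 : ∑ i ∈ K, d i = ∑ i ∈ K, h i - K.card * (l + τ) := by
      rw [← nsmul_eq_mul, ← Finset.sum_const, ← Finset.sum_sub_distrib]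
      exact Finset.sum_congr rfl fun i hi => if_pos hi
    have e2 : ∑ i ∈ Kᶜ, |d i| = ∑ i ∈ Kᶜ, st l (h i) := by
      refine Finset.sum_congr rfl fun i hi => ?_
      simp only [hd, if_neg (Finset.mem_compl.1 hi)]
      split_ifs <;> simp [abs_of_nonneg (st_nonneg l _)]
    rw [e1, e2]
    have : (β * n - η * n) * (l + τ) ≤ K.card * (l + τ) := by
      have : β * n - η * n ≤ K.card := by linarith
      gcongr
    nlinarith
  have dnorm : nr d ≤ (s + δ / 2) * Real.sqrt n := by
    have e : ∑ i, d i ^ 2 = ∑ i ∈ K, (h i - (l + τ)) ^ 2 + ∑ i ∈ Kᶜ, st l (h i) ^ 2 := by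
      rw [← split_if]
      refine Finset.sum_congr rfl fun i _ => ?_
      simp only [hd]
      split_ifs <;> simp
    have := dev_sq K h β l αw η n τ hl hτ.le H
    unfold nr
    rw [e]
    have : ∑ i ∈ K, (h i - (l + τ)) ^ 2 + ∑ i ∈ Kᶜ, st l (h i) ^ 2 ≤ (s + δ / 2) ^ 2 * n := by
      refine this.trans (mul_le_mul_of_nonneg_right ?_ hn.le)
      nlinarith
    refine (Real.sqrt_le_sqrt this).trans ?_
    rw [Real.sqrt_mul (by positivity), Real.sqrt_sq (by positivity)]
  have ddot : (s ^ 2 - s * δ / 2) * n ≤ ∑ i, h i * d i := by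
    have e : ∑ i, h i * d i = ∑ i ∈ K, h i ^ 2 - (l + τ) * ∑ i ∈ K, h i +
        (∑ i ∈ Kᶜ, st l (h i) ^ 2 + l * ∑ i ∈ Kᶜ, st l (h i)) := by
      rw [Finset.mul_sum, Finset.mul_sum, ← Finset.sum_sub_distrib, ← Finset.sum_add_distrib, ← split_if]
      refine Finset.sum_congr rfl fun i _ => ?_
      simp only [hd]
      split_ifs with u v
      · ring
      · rw [← st_abs_mul l _ hl, abs_of_nonneg v]; ring
      · rw [← st_abs_mul l _ hl, abs_of_neg (not_le.1 v)]; ring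
    rw [e]
    have b1 : (l + τ) * ∑ i ∈ K, h i ≤ (l + τ) * (η * n) := by gcongr; linarith
    have b2 : l * (β * l * n - η * n) ≤ l * ∑ i ∈ Kᶜ, st l (h i) := by gcongr; linarith
    have b3 : 0 ≤ η * n * (τ + (l + τ) ^ 2) := by positivity
    have b4 : η * (2 + 2 * (l + τ) + (l + τ) ^ 2) * n ≤ s * δ / 2 * n := by gcongr
    rw [hq]
    nlinarith
  have hsn : 0 < Real.sqrt n := Real.sqrt_pos.2 hn
  have hpos : 0 < ∑ i, h i * d i := by
    refine lt_of_lt_of_le ?_ ddot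
    have : 0 < s ^ 2 - s * δ / 2 := by nlinarith
    positivity
  have dpos : 0 < nr d := by
    rcases (nr_nonneg d).lt_or_eq with h | h'
    · exact h
    · have := dot_le_nr h d
      rw [← h', mul_zero] at this
      linarith
  refine ⟨fun i => (nr d)⁻¹ * d i, ?_, ?_, ?_⟩
  · have : ∑ i ∈ K, (nr d)⁻¹ * d i + ∑ i ∈ Kᶜ, |(nr d)⁻¹ * d i| =
      (nr d)⁻¹ * (∑ i ∈ K, d i + ∑ i ∈ Kᶜ, |d i|) := by
      simp only [abs_mul, abs_of_pos (inv_pos.2 dpos), mul_add, Finset.mul_sum]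
    rw [this]
    exact mul_nonpos_of_nonneg_of_nonpos (inv_nonneg.2 dpos.le) dcone
  · have := nr_smul (nr d)⁻¹ d
    rw [abs_of_pos (inv_pos.2 dpos), inv_mul_cancel₀ dpos.ne'] at this
    exact this
  · have e : ∑ i, h i * ((nr d)⁻¹ * d i) = (∑ i, h i * d i) / nr d := by
      rw [Finset.sum_div]
      refine Finset.sum_congr rfl fun i _ => ?_
      rw [div_eq_mul_inv]; ring
    rw [e, le_div_iff₀ dpos]
    calc (s - δ) * Real.sqrt n * nr d ≤ (s - δ) * Real.sqrt n * ((s + δ / 2) * Real.sqrt n) := by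
          have : 0 ≤ s - δ := by linarith
          gcongr
      _ = (s - δ) * (s + δ / 2) * n := by
          rw [← Real.sq_sqrt hn.le, Real.sqrt_sq hsn.le]; ring
      _ ≤ (s ^ 2 - s * δ / 2) * n := mul_le_mul_of_nonneg_right (by linarith [sq_nonneg δ]) hn.le
      _ ≤ _ := ddot

/-- exponentially small -/
def ES (p : ℕ → ENNReal) : Prop :=
  ∃ c > (0 : ℝ), ∃ N : ℕ, ∀ n ≥ N, p n ≤ ENNReal.ofReal (Real.exp (-(c * n)))

lemma ES.mono {p q : ℕ → ENNReal} (hq : ES q) (h : ∃ N : ℕ, ∀ n ≥ N, p n ≤ q n) : ES p := by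
  obtain ⟨c, hc, N, hN⟩ := hq
  obtain ⟨M, hM⟩ := h
  exact ⟨c, hc, max N M, fun n hn => (hM n (le_trans (le_max_right _ _) hn)).trans
    (hN n (le_trans (le_max_left _ _) hn))⟩

lemma ES_of_real {C c : ℝ} (hC : 0 < C) (hc : 0 < c) (p : ℕ → ENNReal)
    (h : ∃ N : ℕ, ∀ n ≥ N, p n ≤ ENNReal.ofReal (C * Real.exp (-(c * n)))) : ES p := by
  obtain ⟨N, hN⟩ := h
  refine ⟨c / 2, by positivity, max N ⌈2 * Real.log C / c⌉₊, fun n hn => ?_⟩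
  refine (hN n (le_trans (le_max_left _ _) hn)).trans (ENNReal.ofReal_le_ofReal ?_)
  have : 2 * Real.log C / c ≤ n := Nat.ceil_le.1 (le_trans (le_max_right _ _) hn)
  rw [div_le_iff₀ hc] at this
  nth_rewrite 1 [← Real.exp_log hC]
  rw [← Real.exp_add]
  apply Real.exp_le_exp.2
  linarith

lemma ES.const_mul {p : ℕ → ENNReal} (hp : ES p) (C : ℝ) (hC : 0 < C) :
    ES fun n => ENNReal.ofReal C * p n := by
  obtain ⟨c, hc, N, hN⟩ := hp
  refine ES_of_real hC hc _ ⟨N, fun n hn => ?_⟩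
  rw [ENNReal.ofReal_mul hC.le]
  gcongr
  exact hN n hn

lemma ES.two_mul {p : ℕ → ENNReal} (hp : ES p) : ES fun n => 2 * p n := by
  have := hp.const_mul 2 (by norm_num)
  simpa using this

lemma ES.add {p q : ℕ → ENNReal} (hp : ES p) (hq : ES q) : ES fun n => p n + q n := by
  obtain ⟨c, hc, N, hN⟩ := hp
  obtain ⟨d, hd, M, hM⟩ := hq
  refine ES_of_real (C := 2) (c := min c d) (by norm_num) (lt_min hc hd) _ ⟨max N M, fun n hn => ?_⟩
  refine (add_le_add (hN n (le_trans (le_max_left _ _) hn)) (hM n (le_trans (le_max_right _ _) hn))).trans ?_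
  rw [← ENNReal.ofReal_add (by positivity) (by positivity)]
  apply ENNReal.ofReal_le_ofReal
  have h1 : Real.exp (-(c * n)) ≤ Real.exp (-(min c d * n)) := by
    apply Real.exp_le_exp.2
    have : min c d * n ≤ c * n := by gcongr; exact min_le_left _ _
    linarith
  have h2 : Real.exp (-(d * n)) ≤ Real.exp (-(min c d * n)) := by
    apply Real.exp_le_exp.2
    have : min c d * n ≤ d * n := by gcongr; exact min_le_right _ _
    linarith
  linarith

lemma ES_chern {f : ℝ → ℝ} {δ : ℝ} (hf : Measurable f) (hb : ∀ x, |f x| ≤ 1 * (1 + x ^ 2)) (μ0 : ℝ)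
    (hμ : ∫ x, f x ∂(gaussianReal 0 1) = μ0) (hδ : 0 < δ) (κ : ℕ → Type) [∀ n, Fintype (κ n)]
    (S : ∀ n, Finset (κ n)) (hS : ∀ n, 1 ≤ n → (S n).card ≤ n) :
    ES fun n => gpi (κ n) {h | δ * n ≤ |∑ i ∈ S n, f (h i) - (S n).card * μ0|} := by
  obtain ⟨c, hc, h⟩ := chern one_pos hf hb μ0 hμ hδ
  refine ES_of_real (C := 2) two_pos hc _ ⟨1, fun n hn => ?_⟩
  have := h (κ n) (S n) n (by exact_mod_cast hS n hn)
  rw [measureReal_def] at this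
  rw [← ENNReal.ofReal_toReal (measure_ne_top (gpi (κ n)) _)]
  exact ENNReal.ofReal_le_ofReal this

lemma ex_large (x : ℝ) : ∃ N : ℕ, ∀ n ≥ N, x ≤ n :=
  ⟨⌈x⌉₊, fun _ hn => Nat.ceil_le.1 hn⟩

def Kset (n k : ℕ) : Finset (Fin n) := Finset.univ.filter fun i => n - k ≤ (i : ℕ)

lemma Kset_card (n k : ℕ) (h : k ≤ n) : (Kset n k).card = k := by
  unfold Kset
  rw [← Finset.card_map Fin.valEmbedding]
  have : (Finset.univ.filter fun i : Fin n => n - k ≤ (i : ℕ)).map Fin.valEmbedding = Finset.Ico (n - k) n := by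
    ext a
    simp only [Finset.mem_map, Finset.mem_filter, Finset.mem_univ, true_and, Fin.valEmbedding_apply, Finset.mem_Ico]
    constructor
    · rintro ⟨i, hi, rfl⟩; exact ⟨hi, i.2⟩
    · rintro ⟨h1, h2⟩; exact ⟨⟨a, h2⟩, h1, rfl⟩
  rw [this, Nat.card_Ico]; omega

lemma kDim_le (β : ℝ) (h1 : β < 1) (n : ℕ) : kDim β n ≤ n := by
  unfold kDim
  rw [Nat.ceil_le]
  have : (0 : ℝ) ≤ n := Nat.cast_nonneg n
  nlinarith

lemma kDim_near (β : ℝ) (h0 : 0 < β) (n : ℕ) : |(kDim β n : ℝ) - β * n| ≤ 1 := by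
  unfold kDim
  have h1 := Nat.le_ceil (β * n)
  have h2 := Nat.ceil_lt_add_one (a := β * n) (by positivity)
  rw [abs_le]; constructor <;> linarith

lemma st_meas (l : ℝ) : Measurable (st l) := by
  unfold st; fun_prop

lemma st_le (l x : ℝ) (hl : 0 ≤ l) : st l x ≤ |x| := by
  unfold st; apply max_le <;> [linarith; exact abs_nonneg x]

lemma abs_le_sq (x : ℝ) : |x| ≤ 1 * (1 + x ^ 2) := by
  rw [← sq_abs]; nlinarith [sq_nonneg (|x| - 1), abs_nonneg x]

noncomputable abbrev hs {n : ℕ} (h : Option (Fin n) → ℝ) : Fin n → ℝ := fun i => h (some i)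

lemma sum_some {n : ℕ} (S : Finset (Fin n)) (f : ℝ → ℝ) (h : Option (Fin n) → ℝ) :
    ∑ i ∈ S.map Function.Embedding.some, f (h i) = ∑ i ∈ S, f (hs h i) := by
  rw [Finset.sum_map]; rfl

lemma ES_devs {β αw l : ℝ} (hβ0 : 0 < β) (hβ1 : β < 1) (hl : 0 ≤ l)
    (m1 : (1 - β) * (∫ x, st l x ∂(gaussianReal 0 1)) = β * l)
    (m2 : (1 - β) * (∫ x, st l x ^ 2 ∂(gaussianReal 0 1)) = αw - β * (1 + l ^ 2))
    {η : ℝ} (hη : 0 < η) :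
    ES fun n => gpi (Option (Fin n)) {h | ¬ Devs (Kset n (kDim β n)) (hs h) β l αw η n} := by
  set μ1 := ∫ x, st l x ∂(gaussianReal 0 1) with hμ1
  set μ2 := ∫ x, st l x ^ 2 ∂(gaussianReal 0 1) with hμ2
  have hη2 : 0 < η / 2 := by positivity
  have c1 : ∀ n : ℕ, 1 ≤ n → (((Kset n (kDim β n))).map (Function.Embedding.some)).card ≤ n := fun n _ => by
    rw [Finset.card_map]; exact (Finset.card_le_univ _).trans (by simp)
  have c2 : ∀ n : ℕ, 1 ≤ n → (((Kset n (kDim β n))ᶜ).map (Function.Embedding.some)).card ≤ n := fun n _ => by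
    rw [Finset.card_map]; exact (Finset.card_le_univ _).trans (by simp)
  have e1 := ES_chern (f := fun x => x) measurable_id abs_le_sq 0 mean_id hη2 (fun n => Option (Fin n)) _ c1
  have e2 := ES_chern (f := fun x => x ^ 2) (by fun_prop)
    (fun x => by rw [abs_of_nonneg (sq_nonneg x)]; linarith) 1 mean_sq hη2 (fun n => Option (Fin n)) _ c1
  have e3 := ES_chern (f := st l) (st_meas l) (fun x => by
    rw [abs_of_nonneg (st_nonneg l x)]; exact (st_le l x hl).trans (abs_le_sq x)) μ1 rfl hη2
    (fun n => Option (Fin n)) _ c2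
  have e4 := ES_chern (f := fun x => st l x ^ 2) ((st_meas l).pow_const 2) (fun x => by
    rw [abs_of_nonneg (sq_nonneg _)]
    have := pow_le_pow_left₀ (st_nonneg l x) (st_le l x hl) 2
    rw [sq_abs] at this; linarith) μ2 rfl hη2 (fun n => Option (Fin n)) _ c2
  refine (((e1.add e2).add e3).add e4).mono ?_
  obtain ⟨N, hN⟩ := ex_large (2 * (1 + |μ1| + |μ2|) / η)
  refine ⟨N, fun n hn => ?_⟩
  refine le_trans (measure_mono ?_) ((measure_union_le _ _).trans (add_le_add_left ((measure_union_le _ _).trans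
    (add_le_add_left (measure_union_le _ _) _)) _))
  intro h hh
  by_contra hc
  apply hh
  simp only [Set.mem_union, not_or, Set.mem_ofPred_eq, not_le, Finset.sum_map, Function.Embedding.some_apply, Finset.card_map] at hc
  obtain ⟨⟨⟨b1, b2⟩, b3⟩, b4⟩ := hc
  have hk := kDim_le β hβ1 n
  have hkk := kDim_near β hβ0 n
  have hc1 : (Kset n (kDim β n)).card = kDim β n := Kset_card _ _ hk
  have hc2 : (((Kset n (kDim β n))ᶜ).card : ℝ) = n - kDim β n := by
    rw [Finset.card_compl, hc1, Fintype.card_fin, Nat.cast_sub hk]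
  have hn := hN n hn
  rw [div_le_iff₀ hη] at hn
  have p1 := abs_nonneg μ1
  have p2 := abs_nonneg μ2
  rw [hc1] at b1 b2
  rw [hc2] at b3 b4
  rw [mul_zero, sub_zero] at b1
  set k : ℝ := (kDim β n : ℝ)
  have tri : ∀ T μ v : ℝ, |T - (n - k) * μ| < η / 2 * n → (1 - β) * μ = v → |μ| ≤ η / 2 * n →
      |T - v * n| ≤ η * n := by
    intro T μ v h1 h2 h3
    have : T - v * n = (T - (n - k) * μ) + (β * n - k) * μ := by rw [← h2]; ring
    rw [this]
    refine (abs_add_le _ _).trans ?_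
    have : |(β * n - k) * μ| ≤ 1 * |μ| := by
      rw [abs_mul, abs_sub_comm]; gcongr
    linarith
  constructor
  · rw [hc1]; linarith
  · linarith
  · have : ∑ i ∈ Kset n (kDim β n), hs h i ^ 2 - β * n = (∑ i ∈ Kset n (kDim β n), hs h i ^ 2 - k * 1) +
      (k - β * n) := by ring
    rw [this]
    refine (abs_add_le _ _).trans ?_
    linarith
  · exact tri _ _ _ b3 m1 (by linarith)
  · exact tri _ _ _ b4 m2 (by linarith)

structure Good {m n : ℕ} (K : Finset (Fin n)) (sα sw δ : ℝ)
    (x : (Fin m → ℝ) × (Option (Fin n) → ℝ)) : Prop where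
  g : |nr x.1 - sα * Real.sqrt n| ≤ δ * Real.sqrt n
  h0 : |x.2 none| ≤ δ * Real.sqrt n
  up : ∀ w : Fin n → ℝ, ∑ i ∈ K, w i + ∑ i ∈ Kᶜ, |w i| ≤ 0 →
    ∑ i, hs x.2 i * w i ≤ (sw + δ) * Real.sqrt n * nr w
  dir : ∃ w : Fin n → ℝ, (∑ i ∈ K, w i + ∑ i ∈ Kᶜ, |w i| ≤ 0) ∧ nr w = 1 ∧
    (sw - δ) * Real.sqrt n ≤ ∑ i, hs x.2 i * w i

lemma gpi_fst_le {P Q : Type} [Fintype P] [Fintype Q] (s : Set (P → ℝ)) :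
    ((gpi P).prod (gpi Q)) {x | x.1 ∈ s} ≤ gpi P s := by
  have h : MeasurePreserving Prod.fst ((gpi P).prod (gpi Q)) (gpi P) := measurePreserving_fst
  have := Measure.le_map_apply (μ := (gpi P).prod (gpi Q)) h.measurable.aemeasurable s
  rw [h.map_eq] at this
  exact this

lemma gpi_snd_le {P Q : Type} [Fintype P] [Fintype Q] (s : Set (Q → ℝ)) :
    ((gpi P).prod (gpi Q)) {x | x.2 ∈ s} ≤ gpi Q s := by
  have h : MeasurePreserving Prod.snd ((gpi P).prod (gpi Q)) (gpi Q) := measurePreserving_snd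
  have := Measure.le_map_apply (μ := (gpi P).prod (gpi Q)) h.measurable.aemeasurable s
  rw [h.map_eq] at this
  exact this

lemma norm_near {κ : Type} [Fintype κ] (x : κ → ℝ) (sα δ n : ℝ) (hs : 0 < sα) (hn : 0 < n)
    (h : |∑ i, x i ^ 2 - sα ^ 2 * n| ≤ δ * sα * n) : |nr x - sα * Real.sqrt n| ≤ δ * Real.sqrt n := by
  rw [← nr_sq] at h
  have hq : 0 < Real.sqrt n := Real.sqrt_pos.2 hn
  have e : nr x ^ 2 - sα ^ 2 * n = (nr x - sα * Real.sqrt n) * (nr x + sα * Real.sqrt n) := by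
    nth_rewrite 1 [← Real.sq_sqrt hn.le]; ring
  have hp := nr_nonneg x
  rw [e, abs_mul, abs_of_nonneg (by positivity : 0 ≤ nr x + sα * Real.sqrt n)] at h
  have h2 : |nr x - sα * Real.sqrt n| * (sα * Real.sqrt n) ≤ δ * Real.sqrt n * (sα * Real.sqrt n) := by
    refine le_trans ?_ (h.trans (le_of_eq ?_))
    · gcongr; linarith
    · nth_rewrite 1 [← Real.sq_sqrt hn.le]; ring
  exact le_of_mul_le_mul_right h2 (by positivity)

lemma ES_good {α β αw l : ℝ} (hα0 : 0 < α) (hα1 : α < 1) (hβ0 : 0 < β) (hβ1 : β < 1) (hαw : 0 < αw) (hl : 0 ≤ l)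
    (m1 : (1 - β) * (∫ x, st l x ∂(gaussianReal 0 1)) = β * l)
    (m2 : (1 - β) * (∫ x, st l x ^ 2 ∂(gaussianReal 0 1)) = αw - β * (1 + l ^ 2))
    {δ : ℝ} (hδ : 0 < δ) :
    ES fun n => ((gpi (Fin (mDim α n))).prod (gpi (Option (Fin n))))
      {x | ¬ Good (Kset n (kDim β n)) (Real.sqrt α) (Real.sqrt αw) δ x} := by
  have hsw : 0 < Real.sqrt αw := Real.sqrt_pos.2 hαw
  have hsα : 0 < Real.sqrt α := Real.sqrt_pos.2 hα0
  set sw := Real.sqrt αw with hsw'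
  set sα := Real.sqrt α with hsα'
  obtain ⟨δ', hδ', hδ'1, hδ'2⟩ : ∃ δ' > 0, δ' ≤ δ ∧ δ' ≤ sw :=
    ⟨min δ sw, lt_min hδ hsw, min_le_left _ _, min_le_right _ _⟩
  obtain ⟨τ, hτ, hτ1, hτ2⟩ : ∃ τ > 0, τ ≤ 1 ∧ τ ≤ sw * δ' / (2 * (2 * l + 1)) :=
    ⟨min 1 (sw * δ' / (2 * (2 * l + 1))), lt_min one_pos (by positivity), min_le_left _ _, min_le_right _ _⟩
  obtain ⟨C, hC⟩ : ∃ C, C = 2 + 2 * (l + 1) + (l + 1) ^ 2 := ⟨_, rfl⟩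
  have hC0 : 0 < C := by rw [hC]; positivity
  obtain ⟨η, hη, hη1, hη2⟩ : ∃ η > 0, η ≤ β * τ / C ∧ η ≤ sw * δ' / (2 * C) :=
    ⟨min (β * τ / C) (sw * δ' / (2 * C)), lt_min (by positivity) (by positivity), min_le_left _ _, min_le_right _ _⟩
  rw [le_div_iff₀ (by positivity)] at hτ2 hη1 hη2
  have e1 := ES_devs hβ0 hβ1 hl m1 m2 hη
  have e2 := ES_chern (f := fun x => x ^ 2) (by fun_prop)
    (fun x => by rw [abs_of_nonneg (sq_nonneg x)]; linarith) 1 mean_sq (δ := δ ^ 2 / 2) (by positivity)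
    (fun n => Option (Fin n)) (fun n => {none}) (fun n hn => by simpa using hn)
  have e3 := ES_chern (f := fun x => x ^ 2) (by fun_prop)
    (fun x => by rw [abs_of_nonneg (sq_nonneg x)]; linarith) 1 mean_sq (δ := δ * sα / 2) (by positivity)
    (fun n => Fin (mDim α n)) (fun n => Finset.univ) (fun n hn => by
      rw [Finset.card_univ, Fintype.card_fin]; exact kDim_le α hα1 n)
  refine ((e1.add e2).add e3).mono ?_
  obtain ⟨N, hN⟩ := ex_large (1 + 2 / δ ^ 2 + 2 / (δ * sα))
  refine ⟨N, fun n hn => ?_⟩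
  have hn := hN n hn
  have q1 : 0 < 2 / δ ^ 2 := by positivity
  have q2 : 0 < 2 / (δ * sα) := by positivity
  have hnpos : (0 : ℝ) < n := by linarith
  have n1 : 2 / δ ^ 2 ≤ n := by linarith
  have n2 : 2 / (δ * sα) ≤ n := by linarith
  rw [div_le_iff₀ (by positivity)] at n1 n2
  refine le_trans (measure_mono ?_) ((measure_union_le _ _).trans (add_le_add ((measure_union_le _ _).trans
    (add_le_add (gpi_snd_le _) (gpi_snd_le _))) (gpi_fst_le _)))
  intro x hh
  by_contra hc
  apply hh
  simp only [Set.mem_union, not_or, Set.mem_ofPred_eq, not_le, not_not, Finset.sum_singleton, Finset.card_singleton,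
    Finset.card_univ, Fintype.card_fin] at hc
  obtain ⟨⟨b1, b2⟩, b3⟩ := hc
  have hlt : 2 + 2 * (l + τ) + (l + τ) ^ 2 ≤ C := by rw [hC]; gcongr
  constructor
  · apply norm_near _ _ _ _ hsα hnpos
    rw [hsα', Real.sq_sqrt hα0.le]
    have h1 := kDim_near α hα0 n
    change |(mDim α n : ℝ) - α * n| ≤ 1 at h1
    have : ∑ i, x.1 i ^ 2 - α * n = (∑ i, x.1 i ^ 2 - mDim α n * 1) + (mDim α n - α * n) := by ring
    rw [this]
    refine (abs_add_le _ _).trans ?_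
    linarith
  · have h1 := abs_lt.1 b2
    have : (x.2 none) ^ 2 ≤ δ ^ 2 * n := by
      have := h1.2
      push_cast at this
      linarith
    have := Real.abs_le_sqrt this
    rwa [Real.sqrt_mul (by positivity), Real.sqrt_sq hδ.le] at this
  · intro w hw
    apply dev_up _ _ β l αw η n δ hl hnpos.le hαw hδ _ b1 w hw
    calc η * (2 + 2 * l + l ^ 2) ≤ η * C := by
          gcongr; rw [hC]; nlinarith
      _ ≤ sw * δ := by nlinarith [mul_le_mul_of_nonneg_left hδ'1 hsw.le, mul_pos hsw hδ]
  · have h3 : 2 * τ * β * l + β * τ ^ 2 ≤ sw * δ' / 2 := by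
      have a1 : β * (τ * l) ≤ 1 * (τ * l) := by gcongr
      have a2 : β * τ ^ 2 ≤ 1 * (τ * 1) := by rw [pow_two]; gcongr
      nlinarith
    obtain ⟨w, w1, w2, w3⟩ := dev_dir _ _ β l αw η n δ' τ hl hnpos hαw hδ' hδ'2 hη.le hτ hβ0
      (le_trans (mul_le_mul_of_nonneg_left hlt hη.le) (by linarith))
      (le_trans (mul_le_mul_of_nonneg_left (by rw [hC]; nlinarith) hη.le) hη1) h3 b1
    refine ⟨w, w1, w2, le_trans ?_ w3⟩
    gcongr

noncomputable def TT {m n : ℕ} (σ : ℝ) (ω : (Fin m → Fin n → ℝ) × (Fin m → ℝ)) : Fin m × Option (Fin n) → ℝ :=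
  fun p => p.2.elim (ω.2 p.1 / σ) (ω.1 p.1)

lemma TT_meas {m n : ℕ} (σ : ℝ) : Measurable (TT σ : (Fin m → Fin n → ℝ) × (Fin m → ℝ) → _) := by
  refine measurable_pi_lambda _ fun p => ?_
  rcases p with ⟨i, _ | j⟩
  · simp only [TT, Option.elim]; fun_prop
  · simp only [TT, Option.elim]; fun_prop

lemma TT_map {m n : ℕ} (σ : ℝ) (hσ : 0 < σ) : (muAv m n σ).map (TT σ) = gpi (Fin m × Option (Fin n)) := by
  unfold gpi
  symm
  apply Measure.pi_eq
  intro s hs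
  rw [Measure.map_apply (TT_meas σ) (MeasurableSet.univ_pi hs)]
  have : (TT σ) ⁻¹' (Set.univ.pi s) =
    (Set.univ.pi fun i : Fin m => Set.univ.pi fun j : Fin n => s (i, some j)) ×ˢ
    (Set.univ.pi fun i : Fin m => (fun x => x / σ) ⁻¹' s (i, none)) := by
    ext ω
    simp only [Set.mem_preimage, Set.mem_univ_pi, Set.mem_prod]
    constructor
    · intro h
      exact ⟨fun i j => h (i, some j), fun i => h (i, none)⟩
    · rintro ⟨h1, h2⟩ ⟨i, _ | j⟩
      · exact h2 i
      · exact h1 i j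
  rw [this, muAv, Measure.prod_prod, Measure.pi_pi, Measure.pi_pi, Fintype.prod_prod_type]
  simp only [Fintype.prod_option, Measure.pi_pi]
  rw [Finset.prod_mul_distrib, mul_comm]
  congr 1
  refine Finset.prod_congr rfl fun i _ => ?_
  rw [← Measure.map_apply (by fun_prop) (hs _), gaussianReal_map_div_const]
  congr 2
  · simp
  · ext
    simp only [NNReal.coe_div, Real.coe_toNNReal _ (sq_nonneg σ), NNReal.coe_one]
    change σ ^ 2 / σ ^ 2 = 1
    exact div_self (by positivity)

lemma muAv_le {m n : ℕ} (σ : ℝ) (hσ : 0 < σ) (s : Set (Fin m × Option (Fin n) → ℝ)) :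
    muAv m n σ {ω | TT σ ω ∈ s} ≤ gpi (Fin m × Option (Fin n)) s := by
  rw [← TT_map σ hσ]
  exact Measure.le_map_apply (TT_meas σ).aemeasurable s

def ex {n : ℕ} (σ : ℝ) (w : Fin n → ℝ) : Option (Fin n) → ℝ := fun o => o.elim σ fun j => - w j

lemma nr_ex {n : ℕ} (σ : ℝ) (w : Fin n → ℝ) : nr (ex σ w) = Real.sqrt (nr w ^ 2 + σ ^ 2) := by
  rw [nr_sq]; unfold nr
  rw [Fintype.sum_option]
  simp [ex, add_comm]

lemma lasso_eq {m n : ℕ} (σ : ℝ) (hσ : 0 < σ) (xt x : Fin n → ℝ) (ω : (Fin m → Fin n → ℝ) × (Fin m → ℝ)) :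
    lassoVal m n xt ω x = nr (mv (TT σ ω) (ex σ (x - xt))) := by
  unfold lassoVal
  change nr _ = _
  congr 1
  ext i
  simp only [mv, TT, ex, Fintype.sum_option, Option.elim]
  rw [div_mul_cancel₀ _ hσ.ne']
  simp only [Pi.sub_apply, neg_sub, mul_sub, Finset.sum_sub_distrib]
  ring

lemma ao_eq {m n : ℕ} (σ : ℝ) (w : Fin n → ℝ) (x : (Fin m → ℝ) × (Option (Fin n) → ℝ)) :
    nr (ex σ w) * nr x.1 + ∑ i, ex σ w i * x.2 i =
      Real.sqrt (nr w ^ 2 + σ ^ 2) * nr x.1 + σ * x.2 none - ∑ i, hs x.2 i * w i := by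
  rw [nr_ex, Fintype.sum_option]
  simp only [ex, Option.elim, neg_mul, Finset.sum_neg_distrib]
  have : ∑ i, w i * x.2 (some i) = ∑ i, hs x.2 i * w i := Finset.sum_congr rfl fun i _ => mul_comm _ _
  rw [this]; ring

/-- the primal and auxiliary objective -/
noncomputable def PO {m n : ℕ} (σ : ℝ) (ω : (Fin m → Fin n → ℝ) × (Fin m → ℝ)) (w : Fin n → ℝ) : ℝ :=
  nr (mv (TT σ ω) (ex σ w))
noncomputable def AO {m n : ℕ} (σ : ℝ) (x : (Fin m → ℝ) × (Option (Fin n) → ℝ)) (w : Fin n → ℝ) : ℝ :=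
  Real.sqrt (nr w ^ 2 + σ ^ 2) * nr x.1 + σ * x.2 none - ∑ i, hs x.2 i * w i

lemma compA {m n : ℕ} (hm : 0 < m) (σ : ℝ) (hσ : 0 < σ) (S : Set (Fin n → ℝ)) (c : ℝ) :
    muAv m n σ {ω | ∃ w ∈ S, PO σ ω w < c} ≤
      2 * ((gpi (Fin m)).prod (gpi (Option (Fin n)))) {x | ∃ w ∈ S, AO σ x w ≤ c} := by
  haveI : Nonempty (Fin m) := ⟨⟨0, hm⟩⟩
  have h := gordonA (Q := Fin m) (P := Option (Fin n)) (ex σ '' S) c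
  refine le_trans (measure_mono ?_) ((muAv_le σ hσ _).trans (h.trans (le_of_eq ?_)))
  · rintro ω ⟨w, hw, hh⟩
    exact ⟨_, ⟨w, hw, rfl⟩, hh⟩
  · congr 2
    ext x
    simp only [Set.mem_ofPred_eq, Set.exists_mem_image, ao_eq, AO]

lemma ex_cont {n : ℕ} (σ : ℝ) : Continuous (ex σ : (Fin n → ℝ) → _) := by
  refine continuous_pi fun o => ?_
  rcases o with _ | j
  · exact continuous_const
  · exact (continuous_apply j).neg

lemma ex_convex {n : ℕ} (σ : ℝ) (S : Set (Fin n → ℝ)) (hS : Convex ℝ S) : Convex ℝ (ex σ '' S) := by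
  rintro _ ⟨u, hu, rfl⟩ _ ⟨v, hv, rfl⟩ a b ha hb hab
  refine ⟨_, hS hu hv ha hb hab, ?_⟩
  ext o
  rcases o with _ | j
  · simp [ex, ← add_mul, hab]
  · simp [ex]; ring

lemma compB {m n : ℕ} (hm : 0 < m) (σ : ℝ) (hσ : 0 < σ) (S : Set (Fin n → ℝ)) (hconv : Convex ℝ S)
    (hcomp : IsCompact S) (hne : S.Nonempty) (c : ℝ) (hc : 0 ≤ c) :
    muAv m n σ {ω | ∀ w ∈ S, c < PO σ ω w} ≤
      2 * ((gpi (Fin m)).prod (gpi (Option (Fin n)))) {x | ∀ w ∈ S, c ≤ AO σ x w} := by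
  haveI : Nonempty (Fin m) := ⟨⟨0, hm⟩⟩
  have h := gordonB (Q := Fin m) (P := Option (Fin n)) (ex σ '' S) (ex_convex σ S hconv)
    (hcomp.image (ex_cont σ)) (hne.image _) c hc
  refine le_trans (measure_mono ?_) ((muAv_le σ hσ _).trans (h.trans (le_of_eq ?_)))
  · rintro ω hh _ ⟨w, hw, rfl⟩
    exact hh w hw
  · congr 2
    ext x
    simp only [Set.mem_ofPred_eq, Set.forall_mem_image, ao_eq, AO]

lemma conc {R1 σ sα a0 : ℝ} (hR : 0 ≤ R1) (hσ : 0 < σ) (hs : 0 < sα) (ha : 0 < a0) :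
    ∃ p : ℕ → ENNReal, ES p ∧ ∃ N : ℕ, ∀ n ≥ N, ∀ D1 : Set (Fin n → ℝ), D1.Nonempty → (∀ w ∈ D1, nr w ≤ R1) →
      ∃ y0 : ℝ, gpi (Option (Fin n)) {h | ¬ ((∃ w ∈ D1, sα * Real.sqrt n * nr (ex σ w) + ∑ i, ex σ w i * h i <
          y0 + a0 * Real.sqrt n) ∧
        ∀ w ∈ D1, y0 - a0 * Real.sqrt n ≤ sα * Real.sqrt n * nr (ex σ w) + ∑ i, ex σ w i * h i)} ≤ p n := by
  obtain ⟨R, hRd⟩ : ∃ R, R = Real.sqrt (R1 ^ 2 + σ ^ 2) := ⟨_, rfl⟩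
  have hR0 : 0 < R := by rw [hRd]; positivity
  refine ⟨fun n => ENNReal.ofReal (48 * Real.exp (-(a0 ^ 2 / (8 * R ^ 2) * n))),
    ES_of_real (C := 48) (c := a0 ^ 2 / (8 * R ^ 2)) (by norm_num) (by positivity) _ ⟨0, fun n _ => le_rfl⟩, ?_⟩
  obtain ⟨N, hN⟩ := ex_large ((8 * R / a0) ^ 2)
  refine ⟨N, fun n hn D1 hne hD => ?_⟩
  haveI : Nonempty D1 := hne.to_subtype
  have hn := hN n hn
  have hsq : 8 * R / a0 ≤ Real.sqrt n := Real.le_sqrt_of_sq_le hn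
  have hsq2 : 8 * R ≤ a0 * Real.sqrt n := by
    rw [div_le_iff₀ ha] at hsq; linarith
  obtain ⟨x0, hx⟩ := V_conc (W := ℕ) (P := Option (Fin n))
    (fun j => fun i => - ex σ (TopologicalSpace.denseSeq D1 j).1 i)
    (fun j => sα * Real.sqrt n * nr (ex σ (TopologicalSpace.denseSeq D1 j).1)) R hR0
    (fun j => by
      have := nr_neg (ex σ (TopologicalSpace.denseSeq D1 j).1)
      change nr (- ex σ (TopologicalSpace.denseSeq D1 j).1) ≤ R
      rw [this, nr_ex, hRd]
      apply Real.sqrt_le_sqrt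
      have := hD _ (TopologicalSpace.denseSeq D1 j).2
      have h0 := nr_nonneg (TopologicalSpace.denseSeq D1 j).1
      gcongr)
    (fun j => by have := nr_nonneg (ex σ (TopologicalSpace.denseSeq D1 j).1); positivity)
  obtain ⟨h1, h2⟩ := hx (a0 * Real.sqrt n) (by linarith)
  have hexp : 24 * Real.exp (-((a0 * Real.sqrt n / R - 4) ^ 2 / 2)) ≤
      24 * Real.exp (-(a0 ^ 2 / (8 * R ^ 2) * n)) := by
    gcongr
    have e : a0 ^ 2 / (8 * R ^ 2) * n = (a0 * Real.sqrt n / R / 2) ^ 2 / 2 := by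
      rw [div_pow, div_pow, mul_pow, Real.sq_sqrt (Nat.cast_nonneg n)]
      field_simp
      ring
    rw [e]
    have : 8 ≤ a0 * Real.sqrt n / R := by rw [le_div_iff₀ hR0]; linarith
    gcongr
    linarith
  refine ⟨-x0, ?_⟩
  have hsub : {h : Option (Fin n) → ℝ | ¬ ((∃ w ∈ D1, sα * Real.sqrt n * nr (ex σ w) + ∑ i, ex σ w i * h i <
          -x0 + a0 * Real.sqrt n) ∧
        ∀ w ∈ D1, -x0 - a0 * Real.sqrt n ≤ sα * Real.sqrt n * nr (ex σ w) + ∑ i, ex σ w i * h i)} ⊆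
      LL (fun j => fun i => - ex σ (TopologicalSpace.denseSeq D1 j).1 i)
        (fun j => sα * Real.sqrt n * nr (ex σ (TopologicalSpace.denseSeq D1 j).1)) (x0 - a0 * Real.sqrt n) ∪
      (LL (fun j => fun i => - ex σ (TopologicalSpace.denseSeq D1 j).1 i)
        (fun j => sα * Real.sqrt n * nr (ex σ (TopologicalSpace.denseSeq D1 j).1)) (x0 + a0 * Real.sqrt n))ᶜ := by
    intro h hh
    by_contra hc
    apply hh
    rw [Set.mem_union, not_or, Set.notMem_compl_iff] at hc
    obtain ⟨b1, b2⟩ := hc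
    simp only [LL, Set.mem_ofPred_eq, not_forall, not_le, neg_mul, Finset.sum_neg_distrib] at b1 b2
    constructor
    · obtain ⟨j, hj⟩ := b1
      exact ⟨_, (TopologicalSpace.denseSeq D1 j).2, by linarith⟩
    · intro w hw
      refine (TopologicalSpace.denseRange_denseSeq D1).induction_on (p := fun w : D1 =>
        -x0 - a0 * Real.sqrt n ≤ sα * Real.sqrt n * nr (ex σ w.1) + ∑ i, ex σ w.1 i * h i) ⟨w, hw⟩ ?_ ?_
      · refine isClosed_le continuous_const ?_
        have hc : Continuous fun w : D1 => ex σ w.1 := (ex_cont σ).comp continuous_subtype_val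
        refine (continuous_const.mul (nr_cont.comp hc)).add ?_
        exact continuous_finsetSum _ fun b _ => ((continuous_apply b).comp hc).mul continuous_const
      · intro j
        have := b2 j
        linarith
  refine (measure_mono hsub).trans ((measure_union_le _ _).trans ?_)
  rw [measureReal_def] at h1 h2
  rw [← ENNReal.ofReal_toReal (measure_ne_top (gpi (Option (Fin n))) (LL _ _ (x0 - _))),
    ← ENNReal.ofReal_toReal (measure_ne_top (gpi (Option (Fin n))) (LL _ _ (x0 + _))ᶜ),
    ← ENNReal.ofReal_add (by positivity) (by positivity)]
  apply ENNReal.ofReal_le_ofReal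
  linarith

noncomputable def qq (σ ρ : ℝ) : ℝ := Real.sqrt (ρ ^ 2 + σ ^ 2)

lemma qq_pos {σ : ℝ} (hσ : 0 < σ) (ρ : ℝ) : 0 < qq σ ρ := by unfold qq; positivity
lemma qq_sq (σ ρ : ℝ) : qq σ ρ ^ 2 = ρ ^ 2 + σ ^ 2 := Real.sq_sqrt (by positivity)
lemma qq_ge (σ ρ : ℝ) : ρ ≤ qq σ ρ := Real.le_sqrt_of_sq_le (by nlinarith [sq_nonneg σ])
lemma qq_ge' (σ ρ : ℝ) : σ ≤ qq σ ρ := Real.le_sqrt_of_sq_le (by nlinarith [sq_nonneg ρ])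
lemma qq_mono (σ : ℝ) {ρ a : ℝ} (h0 : 0 ≤ ρ) (h : ρ ≤ a) : qq σ ρ ≤ qq σ a := by
  unfold qq; apply Real.sqrt_le_sqrt; gcongr

lemma qq_line {σ : ℝ} (hσ : 0 < σ) (ρ a : ℝ) : qq σ a + a / qq σ a * (ρ - a) ≤ qq σ ρ := by
  have h1 := qq_pos hσ ρ
  have h2 := qq_pos hσ a
  have h3 : ρ * a + σ ^ 2 ≤ qq σ ρ * qq σ a := by
    apply le_of_sq_le_sq _ (by positivity)
    rw [mul_pow, qq_sq, qq_sq]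
    nlinarith [sq_nonneg (ρ * σ - a * σ)]
  have h4 := qq_sq σ a
  have : qq σ a + a / qq σ a * (ρ - a) = (ρ * a + σ ^ 2) / qq σ a := by
    field_simp; rw [h4]; ring
  rw [this, div_le_iff₀ h2]
  exact h3

lemma slope_gt {σ α αw a r : ℝ} (hσ : 0 < σ) (hw : 0 < αw) (hα : αw < α) (hr : 0 < r)
    (hrr : r ^ 2 * (α - αw) = αw * σ ^ 2) (ha : r < a) : Real.sqrt αw < a / qq σ a * Real.sqrt α := by
  have h2 := qq_pos hσ a
  rw [div_mul_eq_mul_div, lt_div_iff₀ h2]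
  apply lt_of_pow_lt_pow_left₀ 2 (by have := Real.sqrt_nonneg α; have : 0 < a := hr.trans ha; positivity)
  rw [mul_pow, mul_pow, qq_sq, Real.sq_sqrt hw.le, Real.sq_sqrt (hw.trans hα).le]
  have : r ^ 2 < a ^ 2 := by gcongr
  nlinarith

lemma slope_lt {σ α αw a r : ℝ} (hσ : 0 < σ) (hw : 0 < αw) (hα : αw < α) (hr : 0 < r)
    (hrr : r ^ 2 * (α - αw) = αw * σ ^ 2) (ha0 : 0 ≤ a) (ha : a < r) :
    a / qq σ a * Real.sqrt α < Real.sqrt αw := by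
  have h2 := qq_pos hσ a
  rw [div_mul_eq_mul_div, div_lt_iff₀ h2]
  apply lt_of_pow_lt_pow_left₀ 2 (by positivity)
  rw [mul_pow, mul_pow, qq_sq, Real.sq_sqrt hw.le, Real.sq_sqrt (hw.trans hα).le]
  have : a ^ 2 < r ^ 2 := by gcongr
  nlinarith

lemma AO_lower {m n : ℕ} {σ : ℝ} (hσ : 0 < σ) {K : Finset (Fin n)} {sα sw δ : ℝ}
    {x : (Fin m → ℝ) × (Option (Fin n) → ℝ)} (H : Good K sα sw δ x) (w : Fin n → ℝ)
    (hw : ∑ i ∈ K, w i + ∑ i ∈ Kᶜ, |w i| ≤ 0) :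
    (qq σ (nr w) * (sα - δ) - σ * δ - (sw + δ) * nr w) * Real.sqrt n ≤ AO σ x w := by
  unfold AO
  have h1 := H.up w hw
  have h2 := (abs_le.1 H.g).1
  have h3 := (abs_le.1 H.h0).1
  have h4 := mul_le_mul_of_nonneg_left (show (sα - δ) * Real.sqrt n ≤ nr x.1 by linarith) (qq_pos hσ (nr w)).le
  have h5 := mul_le_mul_of_nonneg_left h3 hσ.le
  change _ ≤ qq σ (nr w) * nr x.1 + _ - _
  nlinarith

/-- standing hypotheses on the constraint set -/
structure CS {n : ℕ} (K : Finset (Fin n)) (D : Set (Fin n → ℝ)) : Prop where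
  conv : Convex ℝ D
  comp : IsCompact D
  zero : (0 : Fin n → ℝ) ∈ D
  cone : ∀ w ∈ D, ∑ i ∈ K, w i + ∑ i ∈ Kᶜ, |w i| ≤ 0

lemma nr_ball_convex {n : ℕ} (R : ℝ) : Convex ℝ {w : Fin n → ℝ | nr w ≤ R} := by
  have e : ∀ w : Fin n → ℝ, nr w = ‖WithLp.toLp 2 w‖ := fun w => by
    rw [EuclideanSpace.norm_eq]; unfold nr; simp
  intro u hu v hv a b ha hb hab
  simp only [Set.mem_ofPred_eq, e] at hu hv ⊢
  rw [WithLp.toLp_add, WithLp.toLp_smul, WithLp.toLp_smul]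
  refine (norm_add_le _ _).trans ?_
  rw [norm_smul, norm_smul, Real.norm_of_nonneg ha, Real.norm_of_nonneg hb]
  calc _ ≤ a * R + b * R := by gcongr
    _ = R := by rw [← add_mul, hab, one_mul]

lemma near_det {m n : ℕ} {σ α αw r δ ρ1 ρ2 Γ : ℝ} (hσ : 0 < σ) (hw : 0 < αw) (hα : αw < α) (hr : 0 < r)
    (hrr : r ^ 2 * (α - αw) = αw * σ ^ 2) (hρ1 : ρ1 < ρ2) (hρ0 : 0 ≤ ρ2) (hρ2 : ρ2 < r)
    (hΓ : Γ = (Real.sqrt αw - ρ2 / qq σ ρ2 * Real.sqrt α) * (ρ2 - ρ1)) (hδ0 : 0 < δ)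
    (hδ : δ * (qq σ ρ2 + σ + ρ2) ≤ Γ / 4) (hn : 0 < n)
    {K : Finset (Fin n)} {D : Set (Fin n → ℝ)} (hD : CS K D)
    (hDr : ∀ w, ∑ i ∈ K, w i + ∑ i ∈ Kᶜ, |w i| ≤ 0 → nr w ≤ r → w ∈ D)
    {x : (Fin m → ℝ) × (Option (Fin n) → ℝ)} (H : Good K (Real.sqrt α) (Real.sqrt αw) δ x) :
    (∃ w ∈ D, AO σ x w < (qq σ ρ2 * Real.sqrt α - Real.sqrt αw * ρ2 + Γ / 3) * Real.sqrt n) ∧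
    (∀ w ∈ {w ∈ D | nr w < ρ1},
      (qq σ ρ2 * Real.sqrt α - Real.sqrt αw * ρ2 + 2 * Γ / 3) * Real.sqrt n < AO σ x w) := by
  have hsl := slope_lt hσ hw hα hr hrr hρ0 hρ2
  have hΓ0 : 0 < Γ := by rw [hΓ]; exact mul_pos (by linarith) (by linarith)
  have hsn : 0 < Real.sqrt n := Real.sqrt_pos.2 (by exact_mod_cast hn)
  set sw := Real.sqrt αw
  set sα := Real.sqrt α
  constructor
  · obtain ⟨w, w1, w2, w3⟩ := H.dir
    have hnr : nr (ρ2 • w) = ρ2 := by rw [nr_smul, w2, abs_of_nonneg hρ0, mul_one]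
    refine ⟨ρ2 • w, hDr _ ?_ (by rw [hnr]; exact hρ2.le), ?_⟩
    · have : ∑ i ∈ K, (ρ2 • w) i + ∑ i ∈ Kᶜ, |(ρ2 • w) i| = ρ2 * (∑ i ∈ K, w i + ∑ i ∈ Kᶜ, |w i|) := by
        simp only [Pi.smul_apply, smul_eq_mul, abs_mul, abs_of_nonneg hρ0, mul_add, Finset.mul_sum]
      rw [this]; exact mul_nonpos_of_nonneg_of_nonpos hρ0 w1
    · unfold AO
      rw [hnr]
      have h2 := (abs_le.1 H.g).2
      have h3 := (abs_le.1 H.h0).2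
      have h4 := mul_le_mul_of_nonneg_left (show nr x.1 ≤ (sα + δ) * Real.sqrt n by linarith) (qq_pos hσ ρ2).le
      have h5 := mul_le_mul_of_nonneg_left h3 hσ.le
      have h6 : ∑ i, hs x.2 i * (ρ2 • w) i = ρ2 * ∑ i, hs x.2 i * w i := by
        rw [Finset.mul_sum]
        exact Finset.sum_congr rfl fun i _ => by simp only [Pi.smul_apply, smul_eq_mul]; ring
      have h7 := mul_le_mul_of_nonneg_left w3 hρ0
      have h8 := mul_le_mul_of_nonneg_right hδ hsn.le
      rw [h6]
      change qq σ ρ2 * nr x.1 + _ - _ < _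
      have h9 : 0 < Γ * Real.sqrt n := mul_pos hΓ0 hsn
      nlinarith
  · rintro w ⟨hwD, hwn⟩
    refine lt_of_lt_of_le ?_ (AO_lower hσ H w (hD.cone w hwD))
    refine mul_lt_mul_of_pos_right ?_ hsn
    have h1 := qq_line hσ (nr w) ρ2
    have h0 := nr_nonneg w
    have h2 : qq σ (nr w) + σ + nr w ≤ qq σ ρ2 + σ + ρ2 := by
      have := qq_mono σ h0 (hwn.le.trans hρ1.le)
      linarith
    have h3 := mul_le_mul_of_nonneg_left h2 hδ0.le
    have h4 : 0 ≤ sα := Real.sqrt_nonneg _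
    have h5 := mul_le_mul_of_nonneg_right h1 h4
    have h6 : Γ ≤ (sw - ρ2 / qq σ ρ2 * sα) * (ρ2 - nr w) := by
      rw [hΓ]; exact mul_le_mul_of_nonneg_left (by linarith) (by linarith)
    nlinarith

lemma far_det {m n : ℕ} {σ sα sw δ r1 R1 κ Γ Rr y0 : ℝ} (hσ : 0 < σ) (hr1 : 0 < r1) (hR1 : r1 < R1)
    (hsw : sw < sα) (hsw0 : 0 ≤ sw)
    (hκ : κ = r1 / qq σ r1 * sα - sw) (hκ0 : 0 < κ) (hΓ : Γ = (R1 - r1) * (κ / 2)) (hδ0 : 0 < δ)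
    (hδ1 : 2 * δ ≤ κ / 2) (hδ2 : Rr * δ ≤ Γ / 8) (hRr : Rr = qq σ R1) (hδ3 : 6 * δ ≤ sα - sw) (hn : 0 < n)
    {K : Finset (Fin n)} {D : Set (Fin n → ℝ)} (hD : CS K D)
    {x : (Fin m → ℝ) × (Option (Fin n) → ℝ)} (H : Good K sα sw δ x)
    (Hc1 : ∃ w ∈ {w ∈ D | nr w ≤ R1}, sα * Real.sqrt n * nr (ex σ w) + ∑ i, ex σ w i * x.2 i <
          y0 + Γ / 8 * Real.sqrt n)
    (Hc2 : ∀ w ∈ {w ∈ D | nr w ≤ R1}, y0 - Γ / 8 * Real.sqrt n ≤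
      sα * Real.sqrt n * nr (ex σ w) + ∑ i, ex σ w i * x.2 i) :
    (∃ w ∈ {w ∈ D | nr w ≤ R1}, AO σ x w < max (y0 + Γ / 4 * Real.sqrt n) 0) ∧
    (∀ w ∈ {w ∈ D | R1 < nr w},
      max (y0 + Γ / 2 * Real.sqrt n) (σ * (sα - sw) / 4 * Real.sqrt n) < AO σ x w) := by
  have hsn : 0 < Real.sqrt n := Real.sqrt_pos.2 (by exact_mod_cast hn)
  have hΓ0 : 0 < Γ := by rw [hΓ]; exact mul_pos (by linarith) (by linarith)
  have cmp : ∀ w ∈ {w ∈ D | nr w ≤ R1},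
      |AO σ x w - (sα * Real.sqrt n * nr (ex σ w) + ∑ i, ex σ w i * x.2 i)| ≤ Γ / 8 * Real.sqrt n := by
    rintro w ⟨_, hw⟩
    have : AO σ x w - (sα * Real.sqrt n * nr (ex σ w) + ∑ i, ex σ w i * x.2 i) =
        nr (ex σ w) * (nr x.1 - sα * Real.sqrt n) := by
      have := ao_eq σ w x
      unfold AO; linarith
    rw [this, abs_mul, abs_of_nonneg (nr_nonneg _)]
    have h1 : nr (ex σ w) ≤ Rr := by
      rw [nr_ex, hRr]; exact qq_mono σ (nr_nonneg w) hw
    calc nr (ex σ w) * |nr x.1 - sα * Real.sqrt n| ≤ Rr * (δ * Real.sqrt n) :=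
          mul_le_mul h1 H.g (abs_nonneg _) ((nr_nonneg _).trans h1)
      _ ≤ Γ / 8 * Real.sqrt n := by rw [← mul_assoc]; exact mul_le_mul_of_nonneg_right hδ2 hsn.le
  have hgs : 0 < Γ * Real.sqrt n := mul_pos hΓ0 hsn
  constructor
  · obtain ⟨w, hw, hh⟩ := Hc1
    refine ⟨w, hw, lt_max_of_lt_left ?_⟩
    have := (abs_le.1 (cmp w hw)).2
    linarith
  · rintro w ⟨hwD, hwn⟩
    have hcone := hD.cone w hwD
    have hρ : 0 < nr w := by linarith
    apply max_lt
    · set s := r1 / nr w with hsd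
      have hs0 : 0 < s := div_pos hr1 hρ
      have hs1 : s ≤ 1 := by rw [hsd, div_le_one hρ]; linarith
      have hnr : nr (s • w) = r1 := by rw [nr_smul, abs_of_pos hs0, hsd, div_mul_cancel₀ _ hρ.ne']
      have hmem : s • w ∈ {w ∈ D | nr w ≤ R1} := by
        refine ⟨?_, by rw [hnr]; exact hR1.le⟩
        have := hD.conv hwD hD.zero hs0.le (by linarith : 0 ≤ 1 - s) (by ring)
        simpa using this
      have h1 := (abs_le.1 (cmp _ hmem)).1
      have h2 := Hc2 _ hmem
      have h3 : ∑ i, hs x.2 i * (s • w) i = s * ∑ i, hs x.2 i * w i := by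
        rw [Finset.mul_sum]
        exact Finset.sum_congr rfl fun i _ => by simp only [Pi.smul_apply, smul_eq_mul]; ring
      have hA1 : AO σ x (s • w) = qq σ r1 * nr x.1 + σ * x.2 none - s * ∑ i, hs x.2 i * w i := by
        unfold AO; rw [hnr, h3]; rfl
      have hA2 : AO σ x w = qq σ (nr w) * nr x.1 + σ * x.2 none - ∑ i, hs x.2 i * w i := rfl
      set hw := ∑ i, hs x.2 i * w i
      have k1 : (1 - s) * hw ≤ (sw + δ) * Real.sqrt n * (nr w - r1) := by
        have h5 := mul_le_mul_of_nonneg_left (H.up w hcone) (by linarith : 0 ≤ 1 - s)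
        refine h5.trans (le_of_eq ?_)
        have : s * nr w = r1 := by rw [hsd, div_mul_cancel₀ _ hρ.ne']
        rw [← this]; ring
      have hq1 := qq_pos hσ r1
      set θ := r1 / qq σ r1 with hθ
      have hθ0 : 0 < θ := div_pos hr1 hq1
      have hθ1 : θ ≤ 1 := by rw [hθ, div_le_one hq1]; exact qq_ge σ r1
      have k2 : θ * (nr w - r1) ≤ qq σ (nr w) - qq σ r1 := by
        have := qq_line hσ (nr w) r1
        linarith
      have k3 : (sα - δ) * Real.sqrt n ≤ nr x.1 := by
        have := (abs_le.1 H.g).1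
        linarith
      have hd : 0 < nr w - r1 := by linarith
      have k4 : θ * (nr w - r1) * ((sα - δ) * Real.sqrt n) ≤ (qq σ (nr w) - qq σ r1) * nr x.1 := by
        refine mul_le_mul k2 k3 ?_ (le_trans (by positivity) k2)
        exact mul_nonneg (by linarith) hsn.le
      have k5 : κ / 2 ≤ θ * (sα - δ) - (sw + δ) := by
        have : θ * δ ≤ 1 * δ := mul_le_mul_of_nonneg_right hθ1 hδ0.le
        rw [hκ] at hδ1 ⊢
        linarith
      have k6 : Γ ≤ (nr w - r1) * (θ * (sα - δ) - (sw + δ)) := by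
        rw [hΓ]; exact mul_le_mul (by linarith) k5 (by linarith) hd.le
      have k7 := mul_le_mul_of_nonneg_right k6 hsn.le
      have k8 : Γ * Real.sqrt n ≤ AO σ x w - AO σ x (s • w) := by
        rw [hA1, hA2]
        linarith
      linarith
    · refine lt_of_lt_of_le ?_ (AO_lower hσ H w hcone)
      refine mul_lt_mul_of_pos_right ?_ hsn
      have a1 := qq_ge σ (nr w)
      have a2 := qq_ge' σ (nr w)
      have a3 : σ * (sα - sw) ≤ qq σ (nr w) * (sα - sw) := mul_le_mul_of_nonneg_right a2 (by linarith)
      have a4 := mul_le_mul_of_nonneg_left a1 (by linarith : 0 ≤ sw + δ)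
      have a5 := mul_le_mul_of_nonneg_right a2 hδ0.le
      have a6 := mul_le_mul_of_nonneg_left hδ3 (qq_pos hσ (nr w)).le
      have a7 : 0 < σ * (sα - sw) := mul_pos hσ (by linarith)
      linarith

lemma mDim_pos {α : ℝ} (hα : 0 < α) {n : ℕ} (hn : 0 < n) : 0 < mDim α n := by
  unfold mDim
  have : (0 : ℝ) < n := by exact_mod_cast hn
  exact Nat.ceil_pos.2 (by positivity)

lemma partII {α β αw l σ r ε : ℝ} (hσ : 0 < σ) (hα1 : α < 1) (hβ0 : 0 < β) (hβ1 : β < 1)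
    (hαw : 0 < αw) (hwα : αw < α) (hl : 0 ≤ l)
    (m1 : (1 - β) * (∫ x, st l x ∂(gaussianReal 0 1)) = β * l)
    (m2 : (1 - β) * (∫ x, st l x ^ 2 ∂(gaussianReal 0 1)) = αw - β * (1 + l ^ 2))
    (hr : 0 < r) (hrr : r ^ 2 * (α - αw) = αw * σ ^ 2) (hε : 0 < ε) :
    ∃ p : ℕ → ENNReal, ES p ∧ ∃ N : ℕ, ∀ n ≥ N, ∀ D : Set (Fin n → ℝ), CS (Kset n (kDim β n)) D →
      muAv (mDim α n) n σ {ω | ∃ w ∈ D, (1 + ε) * r < nr w ∧ ∀ w1 ∈ D, PO σ ω w ≤ PO σ ω w1} ≤ p n := by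
  have hα0 : 0 < α := hαw.trans hwα
  obtain ⟨r1, hr1⟩ : ∃ r1, r1 = (1 + ε / 2) * r := ⟨_, rfl⟩
  obtain ⟨R1, hR1⟩ : ∃ R1, R1 = (1 + ε) * r := ⟨_, rfl⟩
  rw [← hR1]
  have her : 0 < ε * r := by positivity
  have h1 : r < r1 := by rw [hr1]; linarith
  have h2 : r1 < R1 := by rw [hr1, hR1]; linarith
  have hκ0 := slope_gt hσ hαw hwα hr hrr h1
  have hsw : Real.sqrt αw < Real.sqrt α := Real.sqrt_lt_sqrt hαw.le hwα
  have hsα : 0 < Real.sqrt α := Real.sqrt_pos.2 hα0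
  obtain ⟨κ, hκ⟩ : ∃ κ, κ = r1 / qq σ r1 * Real.sqrt α - Real.sqrt αw := ⟨_, rfl⟩
  obtain ⟨Γ, hΓ⟩ : ∃ Γ, Γ = (R1 - r1) * (κ / 2) := ⟨_, rfl⟩
  have hκp : 0 < κ := by rw [hκ]; linarith
  have hΓ0 : 0 < Γ := by rw [hΓ]; exact mul_pos (by linarith) (by linarith)
  have hRr := qq_pos hσ R1
  obtain ⟨δ, hδ0, hδ1, hδ2, hδ3⟩ : ∃ δ > 0, 2 * δ ≤ κ / 2 ∧ qq σ R1 * δ ≤ Γ / 8 ∧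
      6 * δ ≤ Real.sqrt α - Real.sqrt αw := by
    refine ⟨min (κ / 4) (min (Γ / 8 / qq σ R1) ((Real.sqrt α - Real.sqrt αw) / 6)),
      lt_min (by positivity) (lt_min (by positivity) (by linarith)), ?_, ?_, ?_⟩
    · have := min_le_left (κ / 4) (min (Γ / 8 / qq σ R1) ((Real.sqrt α - Real.sqrt αw) / 6))
      linarith
    · have := (min_le_right (κ / 4) (min (Γ / 8 / qq σ R1) ((Real.sqrt α - Real.sqrt αw) / 6))).trans
        (min_le_left _ _)
      rw [le_div_iff₀ hRr] at this
      linarith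
    · have := (min_le_right (κ / 4) (min (Γ / 8 / qq σ R1) ((Real.sqrt α - Real.sqrt αw) / 6))).trans
        (min_le_right _ _)
      linarith
  have hg := ES_good hα0 hα1 hβ0 hβ1 hαw hl m1 m2 hδ0
  obtain ⟨pc, hpc, N, hN⟩ := conc (R1 := R1) (a0 := Γ / 8) (by linarith) hσ hsα (by positivity)
  refine ⟨_, (hg.add hpc).two_mul.add (hg.add hpc).two_mul, max N 1, fun n hn D hD => ?_⟩
  have hn0 : 0 < n := lt_of_lt_of_le one_pos (le_trans (le_max_right _ _) hn)
  have hsn : 0 < Real.sqrt n := Real.sqrt_pos.2 (by exact_mod_cast hn0)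
  have hm := mDim_pos hα0 hn0
  have hne : {w ∈ D | nr w ≤ R1}.Nonempty := ⟨0, hD.zero, by
    change nr (0 : Fin n → ℝ) ≤ R1
    rw [nr_zero]; linarith⟩
  obtain ⟨y0, hy⟩ := hN n (le_trans (le_max_left _ _) hn) {w ∈ D | nr w ≤ R1} hne (fun w hw => hw.2)
  have hcl : IsClosed {w : Fin n → ℝ | nr w ≤ R1} := isClosed_le nr_cont continuous_const
  have hB := compB hm σ hσ {w ∈ D | nr w ≤ R1} (hD.conv.inter (nr_ball_convex R1)) (hD.comp.inter_right hcl) hne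
    (max (y0 + Γ / 4 * Real.sqrt n) 0) (le_max_right _ _)
  have hA := compA hm σ hσ {w ∈ D | R1 < nr w}
    (max (y0 + Γ / 2 * Real.sqrt n) (σ * (Real.sqrt α - Real.sqrt αw) / 4 * Real.sqrt n))
  have key : ∀ S : Set ((Fin (mDim α n) → ℝ) × (Option (Fin n) → ℝ)),
      (∀ x ∈ S, ¬ ((∃ w ∈ {w ∈ D | nr w ≤ R1}, AO σ x w < max (y0 + Γ / 4 * Real.sqrt n) 0) ∧
    (∀ w ∈ {w ∈ D | R1 < nr w},
      max (y0 + Γ / 2 * Real.sqrt n) (σ * (Real.sqrt α - Real.sqrt αw) / 4 * Real.sqrt n) < AO σ x w))) →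
      ((gpi (Fin (mDim α n))).prod (gpi (Option (Fin n)))) S ≤
        ((gpi (Fin (mDim α n))).prod (gpi (Option (Fin n))))
          {x | ¬ Good (Kset n (kDim β n)) (Real.sqrt α) (Real.sqrt αw) δ x} + pc n := by
    intro S hS
    refine le_trans (measure_mono ?_) ((measure_union_le _ _).trans (add_le_add_right
      ((gpi_snd_le _).trans hy) _))
    intro x hx
    by_contra hc
    rw [Set.mem_union, not_or] at hc
    obtain ⟨c1, c2⟩ := hc
    simp only [Set.mem_ofPred_eq, not_not] at c1 c2
    exact hS x hx (far_det hσ (by linarith) h2 hsw (Real.sqrt_nonneg _) hκ hκp hΓ hδ0 hδ1 hδ2 rfl hδ3 hn0 hD c1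
      c2.1 c2.2)
  refine le_trans (measure_mono ?_) ((measure_union_le _ _).trans (add_le_add
    (hB.trans (mul_le_mul_right (key _ ?_) _)) (hA.trans (mul_le_mul_right (key _ ?_) _))))
  · rintro ω ⟨w, hwD, hwn, hmin⟩
    by_contra hc
    rw [Set.mem_union, not_or] at hc
    obtain ⟨c1, c2⟩ := hc
    simp only [Set.mem_ofPred_eq, not_forall, not_lt, not_exists, not_and] at c1 c2
    obtain ⟨u, hu, hu2⟩ := c1
    have e1 := c2 w ⟨hwD, hwn⟩
    have e2 := hmin u hu.1
    have e3 : max (y0 + Γ / 4 * Real.sqrt n) 0 <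
      max (y0 + Γ / 2 * Real.sqrt n) (σ * (Real.sqrt α - Real.sqrt αw) / 4 * Real.sqrt n) := by
      apply max_lt
      · apply lt_max_of_lt_left
        have : 0 < Γ * Real.sqrt n := by positivity
        linarith
      · apply lt_max_of_lt_right
        have : 0 < Real.sqrt α - Real.sqrt αw := by linarith
        positivity
    linarith
  · rintro x hx ⟨⟨w, hw, hh⟩, _⟩
    exact absurd (hx w hw) (not_le.2 hh)
  · rintro x ⟨w, hw, hh⟩ ⟨_, h3⟩
    exact absurd (h3 w hw) (not_lt.2 hh)

lemma partI {α β αw l σ r ε : ℝ} (hσ : 0 < σ) (hα1 : α < 1) (hβ0 : 0 < β) (hβ1 : β < 1)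
    (hαw : 0 < αw) (hwα : αw < α) (hl : 0 ≤ l)
    (m1 : (1 - β) * (∫ x, st l x ∂(gaussianReal 0 1)) = β * l)
    (m2 : (1 - β) * (∫ x, st l x ^ 2 ∂(gaussianReal 0 1)) = αw - β * (1 + l ^ 2))
    (hr : 0 < r) (hrr : r ^ 2 * (α - αw) = αw * σ ^ 2) (hε : 0 < ε) (hε1 : ε < 1) :
    ∃ p : ℕ → ENNReal, ES p ∧ ∃ N : ℕ, ∀ n ≥ N, ∀ D : Set (Fin n → ℝ), CS (Kset n (kDim β n)) D →
      (∀ w, ∑ i ∈ (Kset n (kDim β n)), w i + ∑ i ∈ (Kset n (kDim β n))ᶜ, |w i| ≤ 0 → nr w ≤ r → w ∈ D) →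
      muAv (mDim α n) n σ {ω | ∃ w ∈ D, nr w < (1 - ε) * r ∧ ∀ w1 ∈ D, PO σ ω w ≤ PO σ ω w1} ≤ p n := by
  have hα0 : 0 < α := hαw.trans hwα
  obtain ⟨ρ2, hρ2⟩ : ∃ r1, r1 = (1 - ε / 2) * r := ⟨_, rfl⟩
  obtain ⟨ρ1, hρ1⟩ : ∃ R1, R1 = (1 - ε) * r := ⟨_, rfl⟩
  rw [← hρ1]
  have her : 0 < ε * r := by positivity
  have her1 : ε * r < 1 * r := mul_lt_mul_of_pos_right hε1 hr
  have h1 : ρ1 < ρ2 := by rw [hρ1, hρ2]; linarith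
  have h2 : ρ2 < r := by rw [hρ2]; linarith
  have h0 : 0 ≤ ρ2 := by rw [hρ2]; linarith
  have hκ0 := slope_lt hσ hαw hwα hr hrr h0 h2
  have hsw : Real.sqrt αw < Real.sqrt α := Real.sqrt_lt_sqrt hαw.le hwα
  have hsα : 0 < Real.sqrt α := Real.sqrt_pos.2 hα0
  obtain ⟨Γ, hΓ⟩ : ∃ Γ, Γ = (Real.sqrt αw - ρ2 / qq σ ρ2 * Real.sqrt α) * (ρ2 - ρ1) := ⟨_, rfl⟩
  have hΓ0 : 0 < Γ := by rw [hΓ]; exact mul_pos (by linarith) (by linarith)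
  have hq := qq_pos hσ ρ2
  have hM : 0 < qq σ ρ2 + σ + ρ2 := by positivity
  obtain ⟨δ, hδ0, hδ⟩ : ∃ δ > 0, δ * (qq σ ρ2 + σ + ρ2) ≤ Γ / 4 :=
    ⟨Γ / 4 / (qq σ ρ2 + σ + ρ2), by positivity, by rw [div_mul_cancel₀ _ hM.ne']⟩
  have hg := ES_good hα0 hα1 hβ0 hβ1 hαw hl m1 m2 hδ0
  refine ⟨_, hg.two_mul.add hg.two_mul, 1, fun n hn D hD hDr => ?_⟩
  have hn0 : 0 < n := lt_of_lt_of_le one_pos hn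
  have hsn : 0 < Real.sqrt n := Real.sqrt_pos.2 (by exact_mod_cast hn0)
  have hm := mDim_pos hα0 hn0
  have hG : 0 ≤ qq σ ρ2 * Real.sqrt α - Real.sqrt αw * ρ2 := by
    have := mul_le_mul (qq_ge σ ρ2) hsw.le (Real.sqrt_nonneg _) hq.le
    linarith
  obtain ⟨G, hGd⟩ : ∃ G, G = qq σ ρ2 * Real.sqrt α - Real.sqrt αw * ρ2 := ⟨_, rfl⟩
  rw [← hGd] at hG
  have hB := compB hm σ hσ D hD.conv hD.comp ⟨0, hD.zero⟩ ((G + Γ / 3) * Real.sqrt n) (by positivity)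
  have hA := compA hm σ hσ {w ∈ D | nr w < ρ1} ((G + 2 * Γ / 3) * Real.sqrt n)
  have key : ∀ S : Set ((Fin (mDim α n) → ℝ) × (Option (Fin n) → ℝ)),
      (∀ x ∈ S, ¬ ((∃ w ∈ D, AO σ x w < (G + Γ / 3) * Real.sqrt n) ∧
    (∀ w ∈ {w ∈ D | nr w < ρ1}, (G + 2 * Γ / 3) * Real.sqrt n < AO σ x w))) →
      ((gpi (Fin (mDim α n))).prod (gpi (Option (Fin n)))) S ≤
        ((gpi (Fin (mDim α n))).prod (gpi (Option (Fin n))))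
          {x | ¬ Good (Kset n (kDim β n)) (Real.sqrt α) (Real.sqrt αw) δ x} := by
    intro S hS
    refine measure_mono ?_
    intro x hx hgood
    refine hS x hx ?_
    rw [hGd]
    exact near_det hσ hαw hwα hr hrr h1 h0 h2 hΓ hδ0 hδ hn0 hD hDr hgood
  refine le_trans (measure_mono ?_) ((measure_union_le _ _).trans (add_le_add
    (hB.trans (mul_le_mul_right (key _ ?_) _)) (hA.trans (mul_le_mul_right (key _ ?_) _))))
  · rintro ω ⟨w, hwD, hwn, hmin⟩
    by_contra hc
    rw [Set.mem_union, not_or] at hc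
    obtain ⟨c1, c2⟩ := hc
    simp only [Set.mem_ofPred_eq, not_forall, not_lt, not_exists, not_and] at c1 c2
    obtain ⟨u, hu, hu2⟩ := c1
    have e1 := c2 w ⟨hwD, hwn⟩
    have e2 := hmin u hu
    have e3 : (G + Γ / 3) * Real.sqrt n < (G + 2 * Γ / 3) * Real.sqrt n := by
      gcongr; linarith
    linarith
  · rintro x hx ⟨⟨w, hw, hh⟩, _⟩
    exact absurd (hx w hw) (not_le.2 hh)
  · rintro x ⟨w, hw, hh⟩ ⟨_, h3⟩
    exact absurd (h3 w hw) (not_lt.2 hh)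

instance muAv_prob (m n : ℕ) (σ : ℝ) : IsProbabilityMeasure (muAv m n σ) := by
  unfold muAv; infer_instance

def DD0 {n : ℕ} (xt : Fin n → ℝ) : Set (Fin n → ℝ) := {w | l1norm (xt + w) ≤ l1norm xt}

lemma l1_cont {n : ℕ} : Continuous (l1norm : (Fin n → ℝ) → ℝ) := by
  unfold l1norm; fun_prop

lemma CS_DD0 {n k : ℕ} (xt : Fin n → ℝ) (h : kSparseNonneg n k xt) : CS (Kset n k) (DD0 xt) := by
  constructor
  · intro u hu v hv a b ha hb hab
    have hu : l1norm (xt + u) ≤ l1norm xt := hu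
    have hv : l1norm (xt + v) ≤ l1norm xt := hv
    change l1norm (xt + (a • u + b • v)) ≤ l1norm xt
    have h1 : l1norm (xt + (a • u + b • v)) ≤ a * l1norm (xt + u) + b * l1norm (xt + v) := by
      unfold l1norm
      rw [Finset.mul_sum, Finset.mul_sum, ← Finset.sum_add_distrib]
      refine Finset.sum_le_sum fun i _ => ?_
      have : (xt + (a • u + b • v)) i = a * (xt + u) i + b * (xt + v) i := by
        simp only [Pi.add_apply, Pi.smul_apply, smul_eq_mul]
        linear_combination (-xt i) * hab
      rw [this]
      refine (abs_add_le _ _).trans ?_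
      rw [abs_mul, abs_mul, abs_of_nonneg ha, abs_of_nonneg hb]
    calc _ ≤ a * l1norm xt + b * l1norm xt := h1.trans (by gcongr)
      _ = l1norm xt := by rw [← add_mul, hab, one_mul]
  · refine Metric.isCompact_of_isClosed_isBounded ?_ ?_
    · exact isClosed_le (l1_cont.comp (continuous_const.add continuous_id)) continuous_const
    · refine (Metric.isBounded_closedBall (x := (0 : Fin n → ℝ)) (r := 2 * l1norm xt)).subset ?_
      intro w hw
      have hw : l1norm (xt + w) ≤ l1norm xt := hw
      have h0 : 0 ≤ l1norm xt := Finset.sum_nonneg fun i _ => abs_nonneg _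
      rw [mem_closedBall_zero_iff, pi_norm_le_iff_of_nonneg (by positivity)]
      intro i
      have e1 : |(xt + w) i| ≤ l1norm (xt + w) :=
        Finset.single_le_sum (f := fun i => |(xt + w) i|) (fun i _ => abs_nonneg _) (Finset.mem_univ i)
      have e2 : |xt i| ≤ l1norm xt :=
        Finset.single_le_sum (f := fun i => |xt i|) (fun i _ => abs_nonneg _) (Finset.mem_univ i)
      have e3 : w i = (xt + w) i - xt i := by simp
      rw [Real.norm_eq_abs, e3]
      have := abs_sub ((xt + w) i) (xt i)
      linarith
  · simp [DD0]
  · intro w hw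
    have hw : l1norm (xt + w) ≤ l1norm xt := hw
    unfold l1norm at hw
    rw [split_sum (Kset n k), split_sum (Kset n k)] at hw
    have hz : ∀ i ∈ (Kset n k)ᶜ, xt i = 0 := by
      intro i hi
      simp only [Kset, Finset.mem_compl, Finset.mem_filter, Finset.mem_univ, true_and, not_le] at hi
      exact h.1 i hi
    have e1 : ∑ i ∈ (Kset n k)ᶜ, |(xt + w) i| = ∑ i ∈ (Kset n k)ᶜ, |w i| :=
      Finset.sum_congr rfl fun i hi => by simp [hz i hi]
    have e2 : ∑ i ∈ (Kset n k)ᶜ, |xt i| = 0 := Finset.sum_eq_zero fun i hi => by simp [hz i hi]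
    have e3 : ∑ i ∈ Kset n k, |xt i| + ∑ i ∈ Kset n k, w i ≤ ∑ i ∈ Kset n k, |(xt + w) i| := by
      rw [← Finset.sum_add_distrib]
      refine Finset.sum_le_sum fun i _ => ?_
      rw [abs_of_nonneg (h.2 i)]
      exact le_abs_self _
    linarith

lemma zeta_le {m n : ℕ} (xt x : Fin n → ℝ) (ω : (Fin m → Fin n → ℝ) × (Fin m → ℝ)) (hx : l1norm x ≤ l1norm xt) :
    zetaObj m n xt ω ≤ lassoVal m n xt ω x := by
  refine csInf_le ⟨0, ?_⟩ ⟨x, hx, rfl⟩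
  rintro _ ⟨y, _, rfl⟩
  exact Real.sqrt_nonneg _

lemma min_iff {m n : ℕ} {σ : ℝ} (hσ : 0 < σ) (xt x : Fin n → ℝ) (ω : (Fin m → Fin n → ℝ) × (Fin m → ℝ))
    (h : lassoVal m n xt ω x = zetaObj m n xt ω) : ∀ w1 ∈ DD0 xt, PO σ ω (x - xt) ≤ PO σ ω w1 := by
  intro w1 hw1
  have h1 := zeta_le xt (xt + w1) ω hw1
  rw [← h, lasso_eq σ hσ, lasso_eq σ hσ, add_sub_cancel_left] at h1
  exact h1

lemma ex_min {m n : ℕ} {σ : ℝ} (hσ : 0 < σ) (xt : Fin n → ℝ) (ω : (Fin m → Fin n → ℝ) × (Fin m → ℝ))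
    (hcomp : IsCompact (DD0 xt)) :
    ∃ x, l1norm x ≤ l1norm xt ∧ lassoVal m n xt ω x = zetaObj m n xt ω := by
  have hc : Continuous fun w : Fin n → ℝ => PO σ ω w := nr_cont.comp ((mv_cont _).comp (ex_cont σ))
  obtain ⟨w, hw, hmin⟩ := hcomp.exists_isMinOn ⟨0, by simp [DD0]⟩ hc.continuousOn
  refine ⟨xt + w, hw, le_antisymm ?_ (zeta_le _ _ _ hw)⟩
  refine le_csInf ⟨_, xt, le_rfl, rfl⟩ ?_
  rintro _ ⟨y, hy, rfl⟩
  rw [lasso_eq σ hσ, lasso_eq σ hσ, add_sub_cancel_left]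
  exact hmin (show y - xt ∈ DD0 xt by simpa [DD0] using hy)

lemma prob_ge {m n : ℕ} {σ e : ℝ} (he : 0 ≤ e) {G B : Set ((Fin m → Fin n → ℝ) × (Fin m → ℝ))}
    (h : ∀ ω, ω ∉ B → ω ∈ G) (hB : muAv m n σ B ≤ ENNReal.ofReal e) :
    muAv m n σ G ≥ ENNReal.ofReal (1 - e) := by
  have h1 : (1 : ENNReal) ≤ muAv m n σ G + muAv m n σ B := by
    rw [← measure_univ (μ := muAv m n σ)]
    refine (measure_mono ?_).trans (measure_union_le _ _)
    intro ω _
    by_cases hh : ω ∈ B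
    · exact Or.inr hh
    · exact Or.inl (h ω hh)
  rw [ge_iff_le, ENNReal.ofReal_sub _ he, ENNReal.ofReal_one]
  exact tsub_le_iff_right.2 (h1.trans (by gcongr))

lemma sparse_big {n k : ℕ} {r : ℝ} (hr : 0 < r) :
    kSparseNonneg n k (fun i => if i ∈ Kset n k then r else 0) ∧
    ∀ w : Fin n → ℝ, ∑ i ∈ Kset n k, w i + ∑ i ∈ (Kset n k)ᶜ, |w i| ≤ 0 → nr w ≤ r →
      w ∈ DD0 (fun i => if i ∈ Kset n k then r else 0) := by
  refine ⟨⟨fun i hi => if_neg ?_, fun i => ?_⟩, fun w hw hn => ?_⟩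
  · simp only [Kset, Finset.mem_filter, Finset.mem_univ, true_and, not_le]; exact hi
  · dsimp only; split_ifs <;> linarith
  · change l1norm _ ≤ l1norm _
    have hi : ∀ i, |w i| ≤ r := by
      intro i
      refine le_trans ?_ hn
      apply Real.abs_le_sqrt
      exact Finset.single_le_sum (f := fun i => w i ^ 2) (fun i _ => sq_nonneg _) (Finset.mem_univ i)
    have e1 : l1norm ((fun i => if i ∈ Kset n k then r else 0) + w) =
        ∑ i ∈ Kset n k, (r + w i) + ∑ i ∈ (Kset n k)ᶜ, |w i| := by
      unfold l1norm
      rw [← split_if]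
      refine Finset.sum_congr rfl fun i _ => ?_
      by_cases h : i ∈ Kset n k
      · simp only [Pi.add_apply, h, if_true]
        exact abs_of_nonneg (by linarith [(abs_le.1 (hi i)).1])
      · simp [h]
    have e2 : l1norm (fun i => if i ∈ Kset n k then r else 0) = ∑ i ∈ Kset n k, r := by
      have e := split_if (Kset n k) (fun _ => r) (fun _ => (0 : ℝ))
      rw [Finset.sum_const_zero, add_zero] at e
      rw [← e]
      unfold l1norm
      refine Finset.sum_congr rfl fun i _ => ?_
      by_cases h : i ∈ Kset n k
      · simp [h, hr.le]
      · simp [h]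
    rw [e1, e2, Finset.sum_add_distrib]
    linarith
theorem lasso_stmt17 (σ α βw αw t : ℝ) (hσ : 0 < σ)
    (hα : α ∈ Set.Ioo (0 : ℝ) 1) (hβw : βw ∈ Set.Ioo (0 : ℝ) 1) (hβα : βw < α)
    (hαw : αw ∈ Set.Ioo (0 : ℝ) α) (ht : 0 ≤ t)
    (herf : (2 / Real.sqrt Real.pi) * ∫ s in (0 : ℝ)..t, Real.exp (-s ^ 2)
      = (1 - αw) / (1 - βw))
    (hchar : (1 - βw) * Real.sqrt (2 / Real.pi) * Real.exp (-t ^ 2)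
      = αw * (Real.sqrt 2 * t)) :
    ∀ ε₁ ∈ Set.Ioo (0 : ℝ) 1, ∃ ε₂ > (0 : ℝ), ∃ ε₃ > (0 : ℝ), ∃ N : ℕ, ∀ n ≥ N,
      (∃ xts : Fin n → ℝ, kSparseNonneg n (kDim βw n) xts ∧
        muAv (mDim α n) n σ
          {ω | ∃ xh : Fin n → ℝ, l1norm xh ≤ l1norm xts ∧
            lassoVal (mDim α n) n xts ω xh = zetaObj (mDim α n) n xts ω ∧
            (1 - ε₁) * (σ * Real.sqrt (αw / (α - αw))) ≤ e2norm (xh - xts) ∧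
            e2norm (xh - xts) ≤ (1 + ε₁) * (σ * Real.sqrt (αw / (α - αw)))}
        ≥ ENNReal.ofReal (1 - Real.exp (-(ε₂ * n)))) ∧
      (∀ xts : Fin n → ℝ, kSparseNonneg n (kDim βw n) xts →
        muAv (mDim α n) n σ
          {ω | ∀ xh : Fin n → ℝ, l1norm xh ≤ l1norm xts →
            lassoVal (mDim α n) n xts ω xh = zetaObj (mDim α n) n xts ω →
            e2norm (xh - xts) ≤ (1 + ε₁) * (σ * Real.sqrt (αw / (α - αw)))}
        ≥ ENNReal.ofReal (1 - Real.exp (-(ε₃ * n)))) := by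
  intro ε hε
  have hl : 0 ≤ Real.sqrt 2 * t := by positivity
  obtain ⟨m1, m2⟩ := means hβw.2 ht herf hchar
  obtain ⟨r, hr⟩ : ∃ r, r = σ * Real.sqrt (αw / (α - αw)) := ⟨_, rfl⟩
  have hd : 0 < α - αw := sub_pos.2 hαw.2
  have hαw0 : 0 < αw := hαw.1
  have hr0 : 0 < r := by rw [hr]; positivity
  have hrr : r ^ 2 * (α - αw) = αw * σ ^ 2 := by
    rw [hr, mul_pow, Real.sq_sqrt (by positivity)]
    field_simp
  rw [← hr]
  obtain ⟨p2, hp2, N2, h2⟩ := partII hσ hα.2 hβw.1 hβw.2 hαw.1 hαw.2 hl m1 m2 hr0 hrr hε.1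
  obtain ⟨p1, hp1, N1, h1⟩ := partI hσ hα.2 hβw.1 hβw.2 hαw.1 hαw.2 hl m1 m2 hr0 hrr hε.1 hε.2
  obtain ⟨c3, hc3, M3, e3⟩ := hp2
  obtain ⟨c2, hc2, M2, e2⟩ := hp1.add ⟨c3, hc3, M3, e3⟩
  refine ⟨c2, hc2, c3, hc3, max (max N1 N2) (max M2 M3), fun n hn => ?_⟩
  have n1 : n ≥ N1 := le_trans (le_trans (le_max_left _ _) (le_max_left _ _)) hn
  have n2 : n ≥ N2 := le_trans (le_trans (le_max_right _ _) (le_max_left _ _)) hn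
  have n3 : n ≥ M2 := le_trans (le_trans (le_max_left _ _) (le_max_right _ _)) hn
  have n4 : n ≥ M3 := le_trans (le_trans (le_max_right _ _) (le_max_right _ _)) hn
  constructor
  · obtain ⟨s1, s2⟩ := sparse_big (n := n) (k := kDim βw n) hr0
    refine ⟨_, s1, ?_⟩
    have hCS := CS_DD0 _ s1
    refine prob_ge (Real.exp_pos _).le ?_
      ((measure_union_le _ _).trans ((add_le_add (h1 n n1 _ hCS s2) (h2 n n2 _ hCS)).trans (e2 n n3)))
    intro ω hω
    rw [Set.mem_union, not_or] at hω
    obtain ⟨x, hx, hmin⟩ := ex_min hσ _ ω hCS.comp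
    have hm := min_iff hσ _ _ _ hmin
    refine ⟨x, hx, hmin, ?_, ?_⟩
    · by_contra hc
      exact hω.1 ⟨_, by simpa [DD0] using hx, not_le.1 hc, hm⟩
    · by_contra hc
      exact hω.2 ⟨_, by simpa [DD0] using hx, not_le.1 hc, hm⟩
  · intro xts hxts
    have hCS := CS_DD0 _ hxts
    refine prob_ge (Real.exp_pos _).le ?_ ((h2 n n2 _ hCS).trans (e3 n n4))
    intro ω hω x hx hmin
    have hm := min_iff hσ _ _ _ hmin
    by_contra hc
    exact hω ⟨_, by simpa [DD0] using hx, not_le.1 hc, hm⟩
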